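/- Let (u, π, v, θ) be a smooth solution of the 3D stationary tropical climate model on ℝ³. Suppose p ∈ (3/2, 3), q, r ∈ [1, 6], α ∈ [0, 2/p − 1/3], β ∈ [0, 3/q − 1/2], γ ∈ [0, 3/r − 1/2]. Assume that liminf_{R→+∞} (X_{α,p,R} + Y_{β,q,R} + Z̄_{γ,r,R}) < +∞. Assume moreover that (with p' = p/(p−1)) one of the following eight conditions holds: (A10) q, r ∈ [1,2), α + ((4p−6)q)/((6−q)p)·β ≤ 1, α + ((4p−6)r)/((6−r)p)·γ ≤ 1, (2q/(6−q))β + (2r/(6−r))γ ≤ 1; (A11) q ∈ [1,2), r ∈ [2, 2p'), α + ((4p−6)q)/((6−q)p)·β ≤ 1, α + ((4p−6)r)/((6−r)p)·γ ≤ 1, (2q/(6−q))β + γ ≤ (6−r)/(2r); (A12) q ∈ [1,2), r ∈ [2p', 6], α + ((4p−6)q)/((6−q)p)·β ≤ 1, α + 2γ < 3/p + 6/r − 2, (2q/(6−q))β + γ ≤ (6−r)/(2r); (A13) q ∈ [2, 2p'), r ∈ [1,2), α + ((4p−6)q)/((6−q)p)·β ≤ 1, α + ((4p−6)r)/((6−r)p)·γ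 ≤ 1, β + (2r/(6−r))γ ≤ (6−q)/(2q); (A14) q, r ∈ [2, 2p'), α + ((4p−6)q)/((6−q)p)·β ≤ 1, α + ((4p−6)r)/((6−r)p)·γ ≤ 1, β + γ < 3/q + 3/r − 2; (A15) q ∈ [2, 2p'), r ∈ [2p', 6], α + ((4p−6)q)/((6−q)p)·β ≤ 1, α + 2γ < 3/p + 6/r − 2, β + γ < 3/q + 3/r − 2; (A16) q ∈ [2p', 6], r ∈ [1,2), α + 2β < 3/p + 6/q − 2, α + ((4p−6)r)/((6−r)p)·γ ≤ 1, β + (2r/(6−r))γ ≤ (6−q)/(2q); (A17) q ∈ [2p', 6], r ∈ [2, 2p'), α + 2β < 3/p + 6/q − 2, α + ((4p−6)r)/((6−r)p)·γ ≤ 1, β + γ < 3/q + 3/r − 2. Then u = 0 and v = 0 on ℝ³, and θ is a constant function. -/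

import Mathlib

/-!
The proof is an energy argument. With `D = |∇u|² + |∇v|² + |∇θ|²`, the equations say that `D` is the
divergence of a flux (`energy_pointwise`), so the dissipation in `B_ρ` is an integral of this flux
over a shell of width comparable to `ℓ`, just outside `B_ρ` and inside `B_{2R} ∖ B_R`. Adding
constants to `θ` preserves the equations, so `θ` may be replaced by `θ - θ̄_R`.

On the shell every factor of the flux is interpolated between the given bound in `L^p`, `L^q` or `L^r`
and a bound `N` for the `L⁶` norm; `N` also bounds the `L²` norms of the gradients. The eight cases of
the hypothesis are what is needed for exponents that make all resulting powers of `R` nonpositive and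
all resulting powers of `N` positive and smaller than two (`exponents`, `norm_est`, `EnergyEst`).

The pressure enters through `∫ (∇η · u) π`, where `∇η · u` has mean zero. Calderón–Zygmund theory is
avoided: `π` is compared with its mollification at scale `ℓ`, the difference being an integral over
scales `δ < ℓ` of averages of `∇π` (`av_bmp_diff`). In these averages the Laplacian of `u` drops out,
and the quadratic terms are estimated with the derivative on the tensor for small `δ` and on the
kernel for large `δ`; choosing between the two bounds at each scale gives exactly the interpolation
bound that the boundedness of the Riesz transforms would give (`near_far`). The mollified pressure has
oscillation over the shell controlled by `L¹` norms (`pressure_est`).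

By a localized Sobolev inequality `N²` is controlled by the dissipation in a slightly larger ball
and the given bounds, so Young's inequality and hole filling bound the dissipation uniformly at the scales provided by the
finite lower limit (`energy_bound`). Hence `D` is integrable on `ℝ³`, and `u`, `v` and `θ - c` lie in
`L⁶` for some constant `c`. Now `N` may be taken arbitrarily small on far shells, so the energy
estimate, with `ℓ` comparable to `R`, forces `D = 0` (`liouville_core`); constants in `L⁶` vanish.
-/

open MeasureTheory Metric Filter
open scoped ENNReal NNReal

noncomputable section

/-- Euclidean `ℝ³`. -/
abbrev E3 := EuclideanSpace ℝ (Fin 3)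

/-- The annulus `B_{2R} \ B_R` centered at the origin. -/
def Ann (R : ℝ) : Set E3 := ball (0 : E3) (2 * R) \ ball (0 : E3) R

/-- Mean value of `θ` over the annulus `B_{2R} \ B_R`. -/
def thetaBar (θ : E3 → ℝ) (R : ℝ) : ℝ := ⨍ x in Ann R, θ x

/-- `L^p` norm (with real exponent `p`) of `f` over the set `s`, valued in `ℝ≥0∞`. -/
def LpS {F : Type*} [NormedAddCommGroup F] (f : E3 → F) (p : ℝ) (s : Set E3) : ℝ≥0∞ :=
  eLpNorm f (ENNReal.ofReal p) (volume.restrict s)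

/-- Partial derivative `∂_j f` of a scalar function on `ℝ³`. -/
def pd3 (j : Fin 3) (f : E3 → ℝ) (x : E3) : ℝ :=
  fderiv ℝ f x (EuclideanSpace.single j 1)

/-- Laplacian `Δ f = Σ_j ∂_j ∂_j f` of a scalar function on `ℝ³`. -/
def lap3 (f : E3 → ℝ) (x : E3) : ℝ := ∑ j : Fin 3, pd3 j (pd3 j f) x

/-- `(u, pr, v, θ)` is a smooth solution of the 3D stationary tropical climate model. -/
structure IsTCMSolution (u : E3 → E3) (pr : E3 → ℝ) (v : E3 → E3) (θ : E3 → ℝ) : Prop where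
  smooth_u : ContDiff ℝ (⊤ : ℕ∞) u
  smooth_pr : ContDiff ℝ (⊤ : ℕ∞) pr
  smooth_v : ContDiff ℝ (⊤ : ℕ∞) v
  smooth_θ : ContDiff ℝ (⊤ : ℕ∞) θ
  eq_u : ∀ x : E3, ∀ i : Fin 3,
    -lap3 (fun y => u y i) x + (∑ j : Fin 3, u x j * pd3 j (fun y => u y i) x)
      + pd3 i pr x + (∑ j : Fin 3, pd3 j (fun y => v y j * v y i) x) = 0
  eq_v : ∀ x : E3, ∀ i : Fin 3,
    -lap3 (fun y => v y i) x + (∑ j : Fin 3, u x j * pd3 j (fun y => v y i) x)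
      + pd3 i θ x + (∑ j : Fin 3, v x j * pd3 j (fun y => u y i) x) = 0
  eq_θ : ∀ x : E3,
    -lap3 θ x + (∑ j : Fin 3, u x j * pd3 j θ x) + (∑ j : Fin 3, pd3 j (fun y => v y j) x) = 0
  div_u : ∀ x : E3, ∑ j : Fin 3, pd3 j (fun y => u y j) x = 0

/-- `X_{α,p,R} = R^{-α} ‖u‖_{L^p(B_{2R} \ B_R)}`. -/
def Xn (u : E3 → E3) (α p R : ℝ) : ℝ≥0∞ := ENNReal.ofReal (R ^ (-α)) * LpS u p (Ann R)

/-- `Y_{β,q,R} = R^{-β} ‖v‖_{L^q(B_{2R} \ B_R)}`. -/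
def Yn (v : E3 → E3) (β q R : ℝ) : ℝ≥0∞ := ENNReal.ofReal (R ^ (-β)) * LpS v q (Ann R)

/-- `Z̄_{γ,r,R} = R^{-γ} ‖θ - θ̄_R‖_{L^r(B_{2R} \ B_R)}`. -/
def Zbarn (θ : E3 → ℝ) (γ r R : ℝ) : ℝ≥0∞ :=
  ENNReal.ofReal (R ^ (-γ)) * LpS (fun x => θ x - thetaBar θ R) r (Ann R)

/-- `Z'_{γ,λ,R} = R^{-γ} ‖∇θ‖_{L^λ(B_{2R} \ B_R)}`. -/
def Zgradn (θ : E3 → ℝ) (γ lam R : ℝ) : ℝ≥0∞ :=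
  ENNReal.ofReal (R ^ (-γ)) * LpS (gradient θ) lam (Ann R)

/-! ### `L^t` bounds on sets -/

/-- `NB f t A a`: the `L^t(A)` norm of the scalar function `f` is at most the real number `a`.
The bound is phrased through `∫⁻`, so no integrability side conditions arise. -/
def NB (f : E3 → ℝ) (t : ℝ) (A : Set E3) (a : ℝ) : Prop :=
  0 ≤ a ∧ ∫⁻ x in A, ‖f x‖ₑ ^ t ≤ ENNReal.ofReal a ^ t

theorem NB.nonneg {f : E3 → ℝ} {t a : ℝ} {A : Set E3} (h : NB f t A a) : 0 ≤ a := h.1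

theorem NB.mono {f g : E3 → ℝ} {t a b : ℝ} {A B : Set E3} (h : NB f t B a) (ht : 0 < t)
    (hA : A ⊆ B) (hfg : ∀ x ∈ A, |g x| ≤ |f x|) (hAm : MeasurableSet A) (hab : a ≤ b) :
    NB g t A b := by
  refine ⟨h.1.trans hab, ?_⟩
  calc ∫⁻ x in A, ‖g x‖ₑ ^ t ≤ ∫⁻ x in A, ‖f x‖ₑ ^ t := by
        refine setLIntegral_mono' hAm fun x hx => ?_
        refine ENNReal.rpow_le_rpow ?_ ht.le
        rw [← ofReal_norm, ← ofReal_norm]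
        exact ENNReal.ofReal_le_ofReal (hfg x hx)
    _ ≤ ∫⁻ x in B, ‖f x‖ₑ ^ t := lintegral_mono_set hA
    _ ≤ _ := h.2
    _ ≤ _ := ENNReal.rpow_le_rpow (ENNReal.ofReal_le_ofReal hab) ht.le

theorem NB.const_mono {f : E3 → ℝ} {t a b : ℝ} {A : Set E3} (h : NB f t A a) (ht : 0 < t)
    (hab : a ≤ b) : NB f t A b :=
  ⟨h.1.trans hab, h.2.trans (ENNReal.rpow_le_rpow (ENNReal.ofReal_le_ofReal hab) ht.le)⟩

theorem NB.set_mono {f : E3 → ℝ} {t a : ℝ} {A B : Set E3} (h : NB f t B a)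
    (hA : A ⊆ B) : NB f t A a :=
  ⟨h.1, (lintegral_mono_set hA).trans h.2⟩

/-- Weighted Hölder inequality: the product, interpolation and exponent-lowering estimates
are all special cases. -/
theorem NB.holder {f g h : E3 → ℝ} {t t1 t2 μ ν a c : ℝ} {A : Set E3}
    (hf : NB f t1 A a) (hg : NB g t2 A c) (cf : Continuous f) (cg : Continuous g)
    (ht : 0 < t) (ht1 : 0 < t1) (ht2 : 0 < t2) (hμ : 0 ≤ μ) (hν : 0 ≤ ν)
    (hH : 1 / t = μ / t1 + ν / t2) (hh : ∀ x, |h x| ≤ |f x| ^ μ * |g x| ^ ν) :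
    NB h t A (a ^ μ * c ^ ν) := by
  have ha := hf.1
  have hc := hg.1
  refine ⟨by positivity, ?_⟩
  have hx0 : 0 ≤ μ * t / t1 := by positivity
  have hy0 : 0 ≤ ν * t / t2 := by positivity
  have hxy : μ * t / t1 + ν * t / t2 = 1 := by
    have : μ * t / t1 + ν * t / t2 = t * (μ / t1 + ν / t2) := by ring
    rw [this, ← hH]; field_simp
  have e1 : ∀ x, ‖h x‖ₑ ^ t ≤ (‖f x‖ₑ ^ t1) ^ (μ * t / t1) * (‖g x‖ₑ ^ t2) ^ (ν * t / t2) := by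
    intro x
    rw [← ENNReal.rpow_mul, ← ENNReal.rpow_mul]
    have q1 : t1 * (μ * t / t1) = μ * t := by field_simp
    have q2 : t2 * (ν * t / t2) = ν * t := by field_simp
    rw [q1, q2, ENNReal.rpow_mul, ENNReal.rpow_mul, ← ENNReal.mul_rpow_of_nonneg _ _ ht.le]
    refine ENNReal.rpow_le_rpow ?_ ht.le
    rw [← ofReal_norm, ← ofReal_norm, ← ofReal_norm,
      ENNReal.ofReal_rpow_of_nonneg (norm_nonneg _) hμ,
      ENNReal.ofReal_rpow_of_nonneg (norm_nonneg _) hν, ← ENNReal.ofReal_mul (by positivity)]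
    exact ENNReal.ofReal_le_ofReal (hh x)
  calc ∫⁻ x in A, ‖h x‖ₑ ^ t
      ≤ ∫⁻ x in A, (‖f x‖ₑ ^ t1) ^ (μ * t / t1) * (‖g x‖ₑ ^ t2) ^ (ν * t / t2) :=
        lintegral_mono e1
    _ ≤ (∫⁻ x in A, ‖f x‖ₑ ^ t1) ^ (μ * t / t1) * (∫⁻ x in A, ‖g x‖ₑ ^ t2) ^ (ν * t / t2) :=
        ENNReal.lintegral_mul_norm_pow_le (by fun_prop) (by fun_prop) hx0 hy0 hxy
    _ ≤ (ENNReal.ofReal a ^ t1) ^ (μ * t / t1) * (ENNReal.ofReal c ^ t2) ^ (ν * t / t2) := by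
        gcongr
        · exact hf.2
        · exact hg.2
    _ = ENNReal.ofReal (a ^ μ * c ^ ν) ^ t := by
        rw [← ENNReal.rpow_mul, ← ENNReal.rpow_mul]
        have q1 : t1 * (μ * t / t1) = μ * t := by field_simp
        have q2 : t2 * (ν * t / t2) = ν * t := by field_simp
        rw [q1, q2, ENNReal.rpow_mul, ENNReal.rpow_mul, ← ENNReal.mul_rpow_of_nonneg _ _ ht.le,
          ENNReal.ofReal_rpow_of_nonneg ha hμ,
          ENNReal.ofReal_rpow_of_nonneg hc hν, ← ENNReal.ofReal_mul (by positivity)]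

theorem NB.mul {f g : E3 → ℝ} {t t1 t2 a c : ℝ} {A : Set E3}
    (hf : NB f t1 A a) (hg : NB g t2 A c) (cf : Continuous f) (cg : Continuous g)
    (ht : 0 < t) (ht1 : 0 < t1) (ht2 : 0 < t2) (hH : 1 / t = 1 / t1 + 1 / t2) :
    NB (fun x => f x * g x) t A (a * c) := by
  have := NB.holder (h := fun x => f x * g x) hf hg cf cg ht ht1 ht2 zero_le_one zero_le_one hH
    (by intro x; simp [abs_mul])
  simpa using this

theorem NB.interp {f : E3 → ℝ} {t t1 t2 μ a c : ℝ} {A : Set E3}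
    (hf : NB f t1 A a) (hg : NB f t2 A c) (cf : Continuous f)
    (ht : 0 < t) (ht1 : 0 < t1) (ht2 : 0 < t2) (hμ : 0 ≤ μ) (hμ1 : μ ≤ 1)
    (hH : 1 / t = μ / t1 + (1 - μ) / t2) :
    NB f t A (a ^ μ * c ^ (1 - μ)) := by
  refine NB.holder hf hg cf cf ht ht1 ht2 hμ (by linarith) hH ?_
  intro x
  rw [← Real.rpow_add_of_nonneg (abs_nonneg _) hμ (by linarith)]
  simp

theorem NB.lower {f : E3 → ℝ} {t s a V : ℝ} {A : Set E3}
    (hf : NB f s A a) (cf : Continuous f) (hV : 0 ≤ V) (hvol : volume A ≤ ENNReal.ofReal V)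
    (ht : 0 < t) (hts : t ≤ s) :
    NB f t A (V ^ (1 / t - 1 / s) * a) := by
  rcases eq_or_lt_of_le hts with rfl | hlt
  · simpa using hf
  have hs : 0 < s := by linarith
  have hd : 0 < 1 / t - 1 / s := by
    rw [sub_pos]; exact one_div_lt_one_div_of_lt ht hlt
  have h1 : NB (fun _ => (1:ℝ)) (1 / (1 / t - 1 / s)) A (V ^ (1 / t - 1 / s)) := by
    refine ⟨by positivity, ?_⟩
    simp only [enorm_one, ENNReal.one_rpow, lintegral_const, one_mul]
    rw [Measure.restrict_apply MeasurableSet.univ, Set.univ_inter]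
    rw [← ENNReal.ofReal_rpow_of_nonneg hV hd.le, ← ENNReal.rpow_mul]
    rw [mul_one_div_cancel hd.ne', ENNReal.rpow_one]
    exact hvol
  have := NB.holder (h := f) h1 hf continuous_const cf ht (by positivity) hs zero_le_one
    zero_le_one (by rw [one_div_one_div]; ring) (by intro x; simp)
  simpa using this

theorem NB.of_LpS {f : E3 → ℝ} {t a : ℝ} {A : Set E3} (ht : 0 < t) (ha : 0 ≤ a)
    (h : LpS f t A ≤ ENNReal.ofReal a) : NB f t A a := by
  refine ⟨ha, ?_⟩
  unfold LpS at h
  rw [eLpNorm_eq_lintegral_rpow_enorm_toReal (by simpa using ht) (by simp),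
    ENNReal.toReal_ofReal ht.le] at h
  have := ENNReal.rpow_le_rpow h ht.le
  rwa [← ENNReal.rpow_mul, one_div_mul_cancel ht.ne', ENNReal.rpow_one] at this

theorem NB.eLpNorm_le {f : E3 → ℝ} {t a : ℝ} {A : Set E3} (ht : 0 < t) (h : NB f t A a) :
    eLpNorm f (ENNReal.ofReal t) (volume.restrict A) ≤ ENNReal.ofReal a := by
  rw [eLpNorm_eq_lintegral_rpow_enorm_toReal (by simpa using ht) (by simp),
    ENNReal.toReal_ofReal ht.le]
  have := ENNReal.rpow_le_rpow h.2 (by positivity : 0 ≤ 1 / t)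
  rwa [← ENNReal.rpow_mul, mul_one_div_cancel ht.ne', ENNReal.rpow_one] at this

theorem NB.lintegral_le {f : E3 → ℝ} {a : ℝ} {A : Set E3} (h : NB f 1 A a) :
    ∫⁻ x in A, ‖f x‖ₑ ≤ ENNReal.ofReal a := by
  simpa using h.2

/-- A continuous function has finite `L^t` norm on bounded sets. -/
theorem NB.exists {f : E3 → ℝ} (cf : Continuous f) {t ρ : ℝ} (ht : 0 < t) {A : Set E3}
    (hA : A ⊆ ball 0 ρ) : ∃ a, NB f t A a := by
  obtain ⟨M, hM⟩ := (isCompact_closedBall (0:E3) ρ).exists_bound_of_continuousOn cf.continuousOn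
  have hfin : ∫⁻ x in ball (0:E3) ρ, ‖f x‖ₑ ^ t < ⊤ := by
    calc ∫⁻ x in ball (0:E3) ρ, ‖f x‖ₑ ^ t
        ≤ ∫⁻ x in ball (0:E3) ρ, ENNReal.ofReal M ^ t := by
          refine setLIntegral_mono' measurableSet_ball fun x hx => ?_
          refine ENNReal.rpow_le_rpow ?_ ht.le
          rw [← ofReal_norm]
          exact ENNReal.ofReal_le_ofReal (hM x (ball_subset_closedBall hx))
      _ < ⊤ := by
          rw [lintegral_const]
          refine ENNReal.mul_lt_top (ENNReal.rpow_lt_top_of_nonneg ht.le (by simp)) ?_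
          rw [Measure.restrict_apply MeasurableSet.univ, Set.univ_inter]
          exact measure_ball_lt_top
  refine ⟨((∫⁻ x in ball (0:E3) ρ, ‖f x‖ₑ ^ t) ^ (1 / t)).toReal, by positivity, ?_⟩
  rw [ENNReal.ofReal_toReal (ENNReal.rpow_lt_top_of_nonneg (by positivity) hfin.ne).ne,
    ← ENNReal.rpow_mul, one_div_mul_cancel ht.ne', ENNReal.rpow_one]
  exact lintegral_mono_set hA

theorem vol_ball_le {ρ : ℝ} (hρ : 0 ≤ ρ) :
    volume (ball (0:E3) ρ) ≤ ENNReal.ofReal (5 * ρ ^ 3) := by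
  rw [EuclideanSpace.volume_ball_fin_three, ← ENNReal.ofReal_pow hρ,
    ← ENNReal.ofReal_mul (by positivity)]
  refine ENNReal.ofReal_le_ofReal ?_
  have := Real.pi_lt_d2
  have h3 : 0 ≤ ρ ^ 3 := by positivity
  nlinarith

/-! ### Partial derivatives -/

/-- Smooth scalar functions on `ℝ³`. -/
abbrev Sm (f : E3 → ℝ) : Prop := ContDiff ℝ (⊤ : ℕ∞) f

theorem Sm.differentiable {f : E3 → ℝ} (hf : Sm f) : Differentiable ℝ f :=
  ContDiff.differentiable hf (by simp)

theorem Sm.pd3 {f : E3 → ℝ} (hf : Sm f) (j : Fin 3) : Sm (pd3 j f) := by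
  unfold _root_.pd3
  exact (hf.fderiv_right (m := (⊤ : ℕ∞)) (by simp)).clm_apply contDiff_const

theorem pd3_add {f g : E3 → ℝ} (hf : Sm f) (hg : Sm g) (j : Fin 3) (x : E3) :
    pd3 j (fun y => f y + g y) x = pd3 j f x + pd3 j g x := by
  unfold pd3
  rw [fderiv_fun_add (hf.differentiable x) (hg.differentiable x)]; rfl

theorem pd3_sub {f g : E3 → ℝ} (hf : Sm f) (hg : Sm g) (j : Fin 3) (x : E3) :
    pd3 j (fun y => f y - g y) x = pd3 j f x - pd3 j g x := by
  unfold pd3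
  rw [fderiv_fun_sub (hf.differentiable x) (hg.differentiable x)]; rfl

theorem pd3_mul {f g : E3 → ℝ} (hf : Sm f) (hg : Sm g) (j : Fin 3) (x : E3) :
    pd3 j (fun y => f y * g y) x = f x * pd3 j g x + g x * pd3 j f x := by
  unfold pd3
  rw [fderiv_fun_mul (hf.differentiable x) (hg.differentiable x)]; rfl

theorem pd3_const_mul {f : E3 → ℝ} (hf : Sm f) (c : ℝ) (j : Fin 3) (x : E3) :
    pd3 j (fun y => c * f y) x = c * pd3 j f x := by
  unfold pd3
  rw [fderiv_const_mul (hf.differentiable x)]; rfl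

theorem pd3_sub_const (f : E3 → ℝ) (c : ℝ) (j : Fin 3) :
    pd3 j (fun y => f y - c) = pd3 j f := by
  funext x
  unfold pd3
  rw [fderiv_sub_const]

theorem pd3_sum {ι : Type*} (s : Finset ι) {f : ι → E3 → ℝ} (hf : ∀ i ∈ s, Sm (f i)) (j : Fin 3)
    (x : E3) : pd3 j (fun y => ∑ i ∈ s, f i y) x = ∑ i ∈ s, pd3 j (f i) x := by
  unfold pd3
  rw [fderiv_fun_sum (fun i hi => (hf i hi).differentiable x)]
  simp

theorem pd3_comm {f : E3 → ℝ} (hf : Sm f) (i j : Fin 3) :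
    pd3 i (pd3 j f) = pd3 j (pd3 i f) := by
  funext x
  have hd : DifferentiableAt ℝ (fderiv ℝ f) x :=
    ((hf.fderiv_right (m := (⊤ : ℕ∞)) (by simp)).differentiable (by simp)) x
  have hsym : IsSymmSndFDerivAt ℝ f x :=
    ContDiffAt.isSymmSndFDerivAt (n := (⊤ : ℕ∞)) hf.contDiffAt (by
      rw [minSmoothness_of_isRCLikeNormedField]; exact WithTop.coe_le_coe.mpr (le_top : (2:ℕ∞) ≤ ⊤))
  have key : ∀ a b : Fin 3, pd3 a (pd3 b f) x =
      fderiv ℝ (fderiv ℝ f) x (EuclideanSpace.single a 1) (EuclideanSpace.single b 1) := by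
    intro a b
    change fderiv ℝ (fun y => fderiv ℝ f y (EuclideanSpace.single b 1)) x _ = _
    rw [fderiv_clm_apply hd (differentiableAt_const _)]
    simp
  rw [key, key]
  exact hsym _ _

theorem pd3_comp_affine {f : E3 → ℝ} (hf : Sm f) (x : E3) (δ : ℝ) (j : Fin 3) (h : E3) :
    pd3 j (fun h => f (x - δ • h)) h = -δ * pd3 j f (x - δ • h) := by
  have h1 : HasFDerivAt (fun h : E3 => x - δ • h) (-(δ • ContinuousLinearMap.id ℝ E3)) h :=
    ((hasFDerivAt_id h).const_smul δ).const_sub x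
  have h2 := (hf.differentiable (x - δ • h)).hasFDerivAt.comp h h1
  change fderiv ℝ (f ∘ fun h => x - δ • h) h _ = _
  rw [h2.fderiv]
  simp [pd3]

theorem Sm.comp_affine {f : E3 → ℝ} (hf : Sm f) (x : E3) (δ : ℝ) :
    Sm (fun h => f (x - δ • h)) :=
  ContDiff.comp hf (by fun_prop)

theorem abs_pd3_le (f : E3 → ℝ) (j : Fin 3) (x : E3) : |pd3 j f x| ≤ ‖fderiv ℝ f x‖ := by
  have := (fderiv ℝ f x).le_opNorm (EuclideanSpace.single j 1)
  simpa [pd3] using this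

theorem fderiv_eq_sum (f : E3 → ℝ) (x y : E3) : fderiv ℝ f x y = ∑ j, y j * pd3 j f x := by
  have hy : y = ∑ j, y j • EuclideanSpace.single j (1:ℝ) := by
    ext k
    fin_cases k <;> simp [Fin.sum_univ_three]
  conv_lhs => rw [hy]
  simp [pd3]

theorem abs_coord_le (y : E3) (j : Fin 3) : |y j| ≤ ‖y‖ := by
  simpa using PiLp.norm_apply_le y j

theorem norm_fderiv_le (f : E3 → ℝ) (x : E3) : ‖fderiv ℝ f x‖ ≤ ∑ j, |pd3 j f x| := by
  refine ContinuousLinearMap.opNorm_le_bound _ (by positivity) fun y => ?_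
  rw [fderiv_eq_sum, Real.norm_eq_abs, Finset.sum_mul]
  refine (Finset.abs_sum_le_sum_abs _ _).trans (Finset.sum_le_sum fun j _ => ?_)
  rw [abs_mul, mul_comm]
  exact mul_le_mul_of_nonneg_left (abs_coord_le y j) (abs_nonneg _)

theorem hasCompactSupport_pd3 {g : E3 → ℝ} (hc : HasCompactSupport g) (j : Fin 3) :
    HasCompactSupport (pd3 j g) := by
  have := hc.fderiv_apply (𝕜 := ℝ) (EuclideanSpace.single j 1)
  exact this

/-- Integration by parts against a compactly supported function. -/
theorem ibp {f g : E3 → ℝ} (hf : Sm f) (hg : Sm g) (hc : HasCompactSupport g) (j : Fin 3) :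
    ∫ x, f x * pd3 j g x = -∫ x, pd3 j f x * g x := by
  refine integral_mul_fderiv_eq_neg_fderiv_mul_of_integrable ?_ ?_ ?_ ?_ ?_
  · exact ((hf.pd3 j).continuous.mul hg.continuous).integrable_of_hasCompactSupport hc.mul_left
  · exact (hf.continuous.mul (hg.pd3 j).continuous).integrable_of_hasCompactSupport
      (hasCompactSupport_pd3 hc j).mul_left
  · exact (hf.continuous.mul hg.continuous).integrable_of_hasCompactSupport hc.mul_left
  · exact fun x _ => hf.differentiable x
  · exact fun x _ => hg.differentiable x

/-! ### Cutoff functions -/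

/-- The radial cutoff equal to `1` on `|x| ≤ s` and to `0` on `|x| ≥ t`. -/
def eta (s t : ℝ) (x : E3) : ℝ := Real.smoothTransition ((t ^ 2 - ‖x‖ ^ 2) / (t ^ 2 - s ^ 2))

theorem eta_smooth (s t : ℝ) : Sm (eta s t) := by
  unfold eta
  have : Sm (fun x : E3 => (t ^ 2 - ‖x‖ ^ 2) / (t ^ 2 - s ^ 2)) :=
    (contDiff_const.sub (contDiff_norm_sq ℝ)).div_const _
  exact Real.smoothTransition.contDiff.comp this

theorem eta_nonneg (s t : ℝ) (x : E3) : 0 ≤ eta s t x := Real.smoothTransition.nonneg _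
theorem eta_le_one (s t : ℝ) (x : E3) : eta s t x ≤ 1 := Real.smoothTransition.le_one _

theorem eta_one {s t : ℝ} (hs : 0 ≤ s) (hst : s < t) {x : E3} (hx : ‖x‖ ≤ s) : eta s t x = 1 := by
  refine Real.smoothTransition.one_of_one_le ?_
  rw [le_div_iff₀ (by nlinarith)]
  nlinarith [norm_nonneg x]

theorem eta_zero {s t : ℝ} (hs : 0 ≤ s) (hst : s < t) {x : E3} (hx : t ≤ ‖x‖) : eta s t x = 0 := by
  refine Real.smoothTransition.zero_of_nonpos ?_
  refine div_nonpos_of_nonpos_of_nonneg ?_ ?_ <;> nlinarith [norm_nonneg x]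

theorem eta_supp {s t : ℝ} (hs : 0 ≤ s) (hst : s < t) : HasCompactSupport (eta s t) :=
  HasCompactSupport.intro (isCompact_closedBall (0:E3) t) fun x hx => by
    refine eta_zero hs hst ?_
    simp at hx; exact hx.le

theorem deriv_smoothTransition_zero_of_neg {y : ℝ} (hy : y ≤ 0) :
    deriv Real.smoothTransition y = 0 := by
  have hloc : IsLocalMin Real.smoothTransition y := by
    refine Filter.Eventually.of_forall fun z => ?_
    rw [Real.smoothTransition.zero_of_nonpos hy]
    exact Real.smoothTransition.nonneg z
  exact hloc.deriv_eq_zero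

theorem deriv_smoothTransition_zero_of_one_le {y : ℝ} (hy : 1 ≤ y) :
    deriv Real.smoothTransition y = 0 := by
  have hloc : IsLocalMax Real.smoothTransition y := by
    refine Filter.Eventually.of_forall fun z => ?_
    rw [Real.smoothTransition.one_of_one_le hy]
    exact Real.smoothTransition.le_one z
  exact hloc.deriv_eq_zero

theorem deriv_smoothTransition_bound :
    ∃ C > 0, ∀ y, |deriv Real.smoothTransition y| ≤ C := by
  have hcont : Continuous (deriv Real.smoothTransition) :=
    (Real.smoothTransition.contDiff (n := 1)).continuous_deriv le_rfl
  obtain ⟨C, hC⟩ := (isCompact_Icc (a := (0:ℝ)) (b := 1)).exists_bound_of_continuousOn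
    hcont.continuousOn
  refine ⟨max C 1, by positivity, fun y => ?_⟩
  by_cases h0 : y ≤ 0
  · rw [deriv_smoothTransition_zero_of_neg h0]; simp
  by_cases h1 : 1 ≤ y
  · rw [deriv_smoothTransition_zero_of_one_le h1]; simp
  push Not at h0 h1
  exact (hC y ⟨h0.le, h1.le⟩).trans (le_max_left _ _)

theorem pd3_eta (s t : ℝ) (j : Fin 3) (x : E3) :
    pd3 j (eta s t) x = deriv Real.smoothTransition ((t ^ 2 - ‖x‖ ^ 2) / (t ^ 2 - s ^ 2)) *
      (-(2 * x j) / (t ^ 2 - s ^ 2)) := by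
  have hST : DifferentiableAt ℝ Real.smoothTransition ((t ^ 2 - ‖x‖ ^ 2) / (t ^ 2 - s ^ 2)) :=
    (Real.smoothTransition.contDiff (n := 1)).differentiable (by simp) _
  have h1 : HasFDerivAt (fun x : E3 => (t ^ 2 - ‖x‖ ^ 2) / (t ^ 2 - s ^ 2))
      ((t ^ 2 - s ^ 2)⁻¹ • (-((2:ℝ) • (innerSL ℝ x : E3 →L[ℝ] ℝ)))) x := by
    have := ((hasStrictFDerivAt_norm_sq x).hasFDerivAt.const_sub (t ^ 2)).mul_const
      ((t ^ 2 - s ^ 2)⁻¹)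
    simpa [div_eq_mul_inv, ← Nat.cast_smul_eq_nsmul ℝ] using this
  have h2 := hST.hasDerivAt.comp_hasFDerivAt x h1
  change fderiv ℝ (Real.smoothTransition ∘ fun x : E3 => (t ^ 2 - ‖x‖ ^ 2) / (t ^ 2 - s ^ 2)) x _ = _
  rw [h2.fderiv]
  simp [EuclideanSpace.inner_single_right]
  ring

theorem exists_eta_bound : ∃ C > 0, ∀ s t : ℝ, 0 ≤ s → s < t → ∀ j x,
    |pd3 j (eta s t) x| ≤ C / (t - s) := by
  obtain ⟨C, hC, hb⟩ := deriv_smoothTransition_bound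
  refine ⟨2 * C, by positivity, fun s t hs hst j x => ?_⟩
  have hts : 0 < t - s := by linarith
  have hd : 0 < t ^ 2 - s ^ 2 := by nlinarith
  rw [pd3_eta, abs_mul]
  by_cases hx : t ≤ ‖x‖
  · rw [deriv_smoothTransition_zero_of_neg]
    · simp; positivity
    · refine div_nonpos_of_nonpos_of_nonneg ?_ hd.le
      nlinarith [norm_nonneg x]
  push Not at hx
  have h1 : |-(2 * x j) / (t ^ 2 - s ^ 2)| ≤ 2 / (t - s) := by
    rw [abs_div, abs_neg, abs_mul, abs_of_pos hd, abs_two, div_le_div_iff₀ hd hts]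
    have := (abs_coord_le x j).trans hx.le
    nlinarith [abs_nonneg (x j)]
  calc _ ≤ C * (2 / (t - s)) := mul_le_mul (hb _) h1 (abs_nonneg _) hC.le
    _ = _ := by ring

theorem pd3_eta_zero {s t : ℝ} (hs : 0 ≤ s) (hst : s < t) (j : Fin 3) {x : E3}
    (hx : ‖x‖ ≤ s ∨ t ≤ ‖x‖) : pd3 j (eta s t) x = 0 := by
  have hd : 0 < t ^ 2 - s ^ 2 := by nlinarith
  rw [pd3_eta]
  rcases hx with hx | hx
  · rw [deriv_smoothTransition_zero_of_one_le, zero_mul]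
    rw [le_div_iff₀ hd]; nlinarith [norm_nonneg x]
  · rw [deriv_smoothTransition_zero_of_neg, zero_mul]
    refine div_nonpos_of_nonpos_of_nonneg ?_ hd.le
    nlinarith [norm_nonneg x]

/-! ### A localized Sobolev inequality -/

theorem nb_univ_of_supp {f : E3 → ℝ} {t a : ℝ} {A : Set E3} (ht : 0 < t) (h : NB f t A a)
    (hA : MeasurableSet A) (hf : ∀ x, f x ≠ 0 → x ∈ A) : NB f t Set.univ a := by
  refine ⟨h.1, ?_⟩
  refine le_trans (le_of_eq ?_) h.2
  rw [Measure.restrict_univ, ← lintegral_indicator hA]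
  refine lintegral_congr fun x => ?_
  by_cases hx : x ∈ A
  · simp [hx]
  · have : f x = 0 := by by_contra h0; exact hx (hf x h0)
    simp [hx, this, ht]

/-- Gagliardo–Nirenberg–Sobolev for `ζ³ g`. The commutator term `ζ² g ∇ζ` is interpolated between
`L¹` and `L⁶` and absorbed, so that only the `L¹` norm of `g` on the support of `∇ζ` remains. -/
theorem sobolev_loc : ∃ C > 0, ∀ (g ζ : E3 → ℝ) (A' A'' : Set E3) (k G a : ℝ),
    Sm g → Sm ζ → HasCompactSupport ζ → (∀ x, 0 ≤ ζ x) → (∀ x, ζ x ≤ 1) → 0 < k →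
    (∀ j x, |pd3 j ζ x| ≤ k) → MeasurableSet A' → MeasurableSet A'' →
    (∀ x, ζ x ≠ 0 → x ∈ A') → (∀ j x, pd3 j ζ x ≠ 0 → x ∈ A'') →
    (∀ j, NB (pd3 j g) 2 A' G) → NB g 1 A'' a →
    NB (fun x => ζ x ^ 3 * g x) 6 Set.univ (C * (G + k ^ (5 / 2 : ℝ) * a)) := by
  set C1 : ℝ≥0 := SNormLESNormFDerivOfEqConst ℝ (volume : Measure E3) 2 with hC1
  set D : ℝ := 9 * C1 with hD
  have hD0 : 0 ≤ D := by positivity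
  refine ⟨10 * C1 + D ^ (5 / 2 : ℝ) + 1, by positivity, ?_⟩
  intro g ζ A' A'' k G a hg hζ hcs h0 h1 hk hk' mA' mA'' sA' sA'' hG ha
  have hG0 := (hG 0).1
  have ha0 := ha.1
  set w : E3 → ℝ := fun x => ζ x ^ 3 * g x with hw
  have sw : Sm w := (hζ.pow 3).mul hg
  have cw : HasCompactSupport w := by
    refine hcs.mono ?_
    intro x hx
    simp only [hw, Function.mem_support] at hx ⊢
    intro h; apply hx; rw [h]; ring
  -- `X` is the (finite) `L⁶` norm of `ζ³ g`
  have hXfin : eLpNorm w 6 volume ≠ ⊤ :=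
    (sw.continuous.memLp_of_hasCompactSupport cw (p := 6)).2.ne
  set X : ℝ := (eLpNorm w 6 volume).toReal with hX
  have hXe : eLpNorm w 6 volume = ENNReal.ofReal X := (ENNReal.ofReal_toReal hXfin).symm
  have hX0 : 0 ≤ X := ENNReal.toReal_nonneg
  have six : (6:ℝ≥0∞) = ENNReal.ofReal 6 := by simp
  have nbX : NB w 6 Set.univ X := by
    refine NB.of_LpS (by norm_num) hX0 ?_
    unfold LpS
    rw [Measure.restrict_univ, ← six, hXe]
  have nb2 : NB (fun x => ζ x ^ 2 * g x) 2 A'' (a ^ (2/5:ℝ) * X ^ (3/5:ℝ)) := by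
    refine NB.holder (h := fun x => ζ x ^ 2 * g x) ha (nbX.set_mono (Set.subset_univ _))
      hg.continuous sw.continuous
      (by norm_num) (by norm_num) (by norm_num) (by norm_num) (by norm_num) (by norm_num) ?_
    intro x
    simp only [hw]
    rw [abs_mul, abs_mul, Real.mul_rpow (abs_nonneg _) (abs_nonneg _)]
    have e1 : |g x| ^ (2/5:ℝ) * (|ζ x ^ 3| ^ (3/5:ℝ) * |g x| ^ (3/5:ℝ))
        = |ζ x ^ 3| ^ (3/5:ℝ) * |g x| := by
      rw [mul_left_comm, ← Real.rpow_add_of_nonneg (abs_nonneg _) (by norm_num) (by norm_num)]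
      norm_num
    rw [e1]
    refine mul_le_mul_of_nonneg_right ?_ (abs_nonneg _)
    rw [abs_of_nonneg (pow_nonneg (h0 x) 2), abs_of_nonneg (pow_nonneg (h0 x) 3),
      ← Real.rpow_natCast, ← Real.rpow_natCast, ← Real.rpow_mul (h0 x)]
    exact Real.rpow_le_rpow_of_exponent_ge_of_imp (h0 x) (h1 x) (by norm_num) (by norm_num)
  -- the functions dominating the gradient
  have hGNS : eLpNorm w 6 volume ≤ C1 * eLpNorm (fderiv ℝ w) 2 volume := by
    have := eLpNorm_le_eLpNorm_fderiv_of_eq (volume : Measure E3) (u := w) (p := 2) (p' := 6)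
      (sw.of_le (by simp)) cw (by norm_num) (by simp)
      (by simp; norm_num)
    simpa using this
  set F : E3 → ℝ := fun x => (∑ j, A'.indicator (fun x => |pd3 j g x|) x) +
    9 * k * A''.indicator (fun x => |ζ x ^ 2 * g x|) x with hF
  have hpt : ∀ x, ‖fderiv ℝ w x‖ ≤ ‖F x‖ := by
    intro x
    refine le_trans ?_ (le_abs_self _)
    refine (norm_fderiv_le w x).trans ?_
    have hj : ∀ j, |pd3 j w x| ≤ A'.indicator (fun x => |pd3 j g x|) x +
        3 * k * A''.indicator (fun x => |ζ x ^ 2 * g x|) x := by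
      intro j
      have e : pd3 j w x = ζ x ^ 3 * pd3 j g x + 3 * (ζ x ^ 2 * g x) * pd3 j ζ x := by
        have e3 : ∀ y, pd3 j (fun y => ζ y ^ 3) y = 3 * ζ y ^ 2 * pd3 j ζ y := by
          intro y
          unfold pd3
          rw [fderiv_fun_pow 3 (hζ.differentiable y)]
          simp
        simp only [hw]
        rw [pd3_mul (hζ.pow 3) hg, e3]
        ring
      rw [e]
      refine (abs_add_le _ _).trans (add_le_add ?_ ?_)
      · by_cases hx : x ∈ A'
        · rw [Set.indicator_of_mem hx, abs_mul, abs_of_nonneg (pow_nonneg (h0 x) 3)]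
          exact mul_le_of_le_one_left (abs_nonneg _) (pow_le_one₀ (h0 x) (h1 x))
        · have : ζ x = 0 := by by_contra h; exact hx (sA' x h)
          simp [this, hx]
      · by_cases hx : x ∈ A''
        · rw [Set.indicator_of_mem hx, abs_mul, abs_mul]
          have := hk' j x
          have h3 := abs_nonneg (ζ x ^ 2 * g x)
          rw [abs_of_pos (by norm_num : (0:ℝ) < 3)]
          nlinarith
        · have : pd3 j ζ x = 0 := by by_contra h; exact hx (sA'' j x h)
          simp [this, hx]
    calc ∑ j, |pd3 j w x| ≤ ∑ j, (A'.indicator (fun x => |pd3 j g x|) x +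
        3 * k * A''.indicator (fun x => |ζ x ^ 2 * g x|) x) := Finset.sum_le_sum fun j _ => hj j
      _ = F x := by
        simp only [hF, Fin.sum_univ_three]; ring
  have two : (2:ℝ≥0∞) = ENNReal.ofReal 2 := by simp
  have m1 : ∀ j, Measurable (A'.indicator (fun x => |pd3 j g x|)) := fun j =>
    ((hg.pd3 j).continuous.abs.measurable).indicator mA'
  have m2 : Measurable (A''.indicator (fun x => |ζ x ^ 2 * g x|)) :=
    (((hζ.continuous.pow 2).mul hg.continuous).abs.measurable).indicator mA''
  have hFle : eLpNorm F 2 volume ≤ ENNReal.ofReal (3 * G + 9 * k * (a ^ (2/5:ℝ) * X ^ (3/5:ℝ))) := by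
    have s1 : eLpNorm F 2 volume ≤ eLpNorm (fun x => ∑ j, A'.indicator (fun x => |pd3 j g x|) x) 2
        volume + eLpNorm (fun x => 9 * k * A''.indicator (fun x => |ζ x ^ 2 * g x|) x) 2 volume :=
      eLpNorm_add_le (Finset.measurable_sum _ (fun j _ => m1 j)).aestronglyMeasurable
        (m2.const_mul _).aestronglyMeasurable (by norm_num)
    have s2 : eLpNorm (fun x => ∑ j, A'.indicator (fun x => |pd3 j g x|) x) 2 volume
        ≤ ENNReal.ofReal (3 * G) := by
      have e : (fun x => ∑ j, A'.indicator (fun x => |pd3 j g x|) x) =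
        ∑ j, A'.indicator (fun x => |pd3 j g x|) := by funext x; simp
      rw [e]
      refine (eLpNorm_sum_le (fun j _ => (m1 j).aestronglyMeasurable) (by norm_num)).trans ?_
      calc ∑ j, eLpNorm (A'.indicator fun x => |pd3 j g x|) 2 volume
          ≤ ∑ j : Fin 3, ENNReal.ofReal G := by
            refine Finset.sum_le_sum fun j _ => ?_
            rw [eLpNorm_indicator_eq_eLpNorm_restrict mA']
            have := NB.eLpNorm_le (by norm_num) (hG j)
            rw [← two] at this
            refine le_trans (le_of_eq ?_) this
            exact eLpNorm_congr_norm_ae (Filter.Eventually.of_forall fun x => by simp)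
        _ = ENNReal.ofReal (3 * G) := by
            rw [Finset.sum_const, ENNReal.ofReal_mul (by norm_num)]; simp
    have s3 : eLpNorm (fun x => 9 * k * A''.indicator (fun x => |ζ x ^ 2 * g x|) x) 2 volume
        ≤ ENNReal.ofReal (9 * k * (a ^ (2/5:ℝ) * X ^ (3/5:ℝ))) := by
      have : eLpNorm (fun x => 9 * k * A''.indicator (fun x => |ζ x ^ 2 * g x|) x) 2 volume
          = ENNReal.ofReal (9 * k) * eLpNorm (A''.indicator (fun x => |ζ x ^ 2 * g x|)) 2 volume := by
        have := eLpNorm_const_smul (9 * k) (A''.indicator (fun x => |ζ x ^ 2 * g x|)) 2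
          (volume : Measure E3)
        rw [Real.enorm_of_nonneg (by positivity)] at this
        exact this
      rw [this, ENNReal.ofReal_mul (p := 9 * k) (by positivity)]
      refine mul_le_mul' le_rfl ?_
      rw [eLpNorm_indicator_eq_eLpNorm_restrict mA'']
      have := NB.eLpNorm_le (by norm_num) nb2
      rw [← two] at this
      refine le_trans (le_of_eq ?_) this
      exact eLpNorm_congr_norm_ae (Filter.Eventually.of_forall fun x => by simp)
    refine s1.trans ((add_le_add s2 s3).trans ?_)
    rw [← ENNReal.ofReal_add (by positivity) (by positivity)]
  have hmain : X ≤ C1 * (3 * G + 9 * k * (a ^ (2/5:ℝ) * X ^ (3/5:ℝ))) := by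
    have h2 : eLpNorm (fderiv ℝ w) 2 volume ≤ eLpNorm F 2 volume := eLpNorm_mono hpt
    have h3 := hGNS.trans (mul_le_mul_right (h2.trans hFle) (C1 : ℝ≥0∞))
    rw [hXe, ← ENNReal.ofReal_coe_nnreal, ← ENNReal.ofReal_mul (by positivity)] at h3
    exact (ENNReal.ofReal_le_ofReal_iff (by positivity)).1 h3
  set B : ℝ := k ^ (5/2:ℝ) * a with hB
  have hB0 : 0 ≤ B := by positivity
  have hY : D * (k * (a ^ (2/5:ℝ) * X ^ (3/5:ℝ))) ≤ 2/5 * (D ^ (5/2:ℝ) * B) + 3/5 * X := by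
    have := Real.geom_mean_le_arith_mean2_weighted (w₁ := 2/5) (w₂ := 3/5)
      (p₁ := D ^ (5/2:ℝ) * B) (p₂ := X) (by norm_num) (by norm_num) (by positivity) hX0 (by norm_num)
    refine le_trans (le_of_eq ?_) this
    rw [hB, Real.mul_rpow (by positivity) (by positivity), Real.mul_rpow (by positivity) ha0,
      ← Real.rpow_mul hD0, ← Real.rpow_mul hk.le]
    norm_num
    ring
  refine nbX.const_mono (by norm_num) ?_
  have hC1' : (0:ℝ) ≤ C1 := C1.coe_nonneg
  have hD1 : 0 ≤ D ^ (5/2:ℝ) := by positivity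
  have e : C1 * (3 * G + 9 * k * (a ^ (2/5:ℝ) * X ^ (3/5:ℝ))) = 3 * C1 * G +
    D * (k * (a ^ (2/5:ℝ) * X ^ (3/5:ℝ))) := by rw [hD]; ring
  nlinarith [mul_nonneg hC1' hG0, mul_nonneg hC1' hB0, mul_nonneg hD1 hG0, mul_nonneg hD1 hB0]

/-! ### Elementary inequalities replacing Calderón–Zygmund theory -/

/-- Change of variables `h ↦ x - δ h` in `ℝ³`. -/
theorem lintegral_affine (F : E3 → ℝ≥0∞) (hF : Measurable F) (x : E3) {δ : ℝ} (hδ : 0 < δ) :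
    ∫⁻ h, F (x - δ • h) = ENNReal.ofReal (δ ^ (-3 : ℝ)) * ∫⁻ y, F y := by
  have h1 : ∫⁻ h, F (x - δ • h) = ∫⁻ y, F (x - y) ∂(Measure.map (fun h : E3 => δ • h) volume) := by
    rw [lintegral_map (by fun_prop) (by fun_prop)]
  rw [h1, Measure.map_addHaar_smul _ hδ.ne', lintegral_smul_measure, lintegral_sub_left_eq_self]
  congr 2
  rw [finrank_euclideanSpace, Fintype.card_fin, abs_of_pos (by positivity), Real.rpow_neg hδ.le]
  norm_num

theorem vol_unit : volume (closedBall (0:E3) 1) ≤ 5 := by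
  rw [Measure.addHaar_closedBall_eq_addHaar_ball]
  simpa using vol_ball_le (ρ := 1) (by norm_num)

/-- Trilinear Young inequality at scale `δ`, obtained from Hölder with three factors. -/
theorem young_tri (G F : E3 → ℝ≥0∞) (hG : Measurable G) (hF : Measurable F) {a1 a2 δ g f : ℝ}
    (ha1 : 1 ≤ a1) (ha2 : 1 ≤ a2) (hσ : 1 ≤ 1 / a1 + 1 / a2) (hδ : 0 < δ) (hg : 0 ≤ g) (hf : 0 ≤ f)
    (hGb : ∫⁻ x, G x ^ a1 ≤ ENNReal.ofReal g ^ a1) (hFb : ∫⁻ x, F x ^ a2 ≤ ENNReal.ofReal f ^ a2) :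
    ∫⁻ x, ∫⁻ h in closedBall (0:E3) 1, G x * F (x - δ • h) ≤
      ENNReal.ofReal (5 * g * f * δ ^ (-3 * (1 / a1 + 1 / a2 - 1))) := by
  set σ := 1 / a1 + 1 / a2 - 1 with hσd
  have i1 : 1 / a1 ≤ 1 := by rw [div_le_one (by linarith)]; exact ha1
  have i2 : 1 / a2 ≤ 1 := by rw [div_le_one (by linarith)]; exact ha2
  set ν : Measure E3 := volume.restrict (closedBall (0:E3) 1) with hν
  have p1 : 0 < a1 := by linarith
  have p2 : 0 < a2 := by linarith
  have hνuniv : ν Set.univ ≤ 5 := by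
    rw [hν, Measure.restrict_apply MeasurableSet.univ, Set.univ_inter]; exact vol_unit
  have hmF : Measurable (fun z : E3 × E3 => F (z.1 - δ • z.2)) := by fun_prop
  have hmG : Measurable (fun z : E3 × E3 => G z.1) := by fun_prop
  have e0 : ∫⁻ x, ∫⁻ h, G x * F (x - δ • h) ∂ν = ∫⁻ z, G z.1 * F (z.1 - δ • z.2) ∂(volume.prod ν) := by
    rw [lintegral_prod _ (by fun_prop)]
  set φ : Fin 3 → E3 × E3 → ℝ≥0∞ := ![fun z => G z.1 ^ a1 * F (z.1 - δ • z.2) ^ a2,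
    fun z => G z.1 ^ a1, fun z => F (z.1 - δ • z.2) ^ a2] with hφ
  set ex : Fin 3 → ℝ := ![σ, 1 - 1 / a2, 1 - 1 / a1] with hex
  have e1 : ∀ z : E3 × E3, G z.1 * F (z.1 - δ • z.2) = ∏ i, φ i z ^ ex i := by
    intro z
    rw [Fin.prod_univ_three]
    change _ = (G z.1 ^ a1 * F (z.1 - δ • z.2) ^ a2) ^ σ * (G z.1 ^ a1) ^ (1 - 1 / a2) *
      (F (z.1 - δ • z.2) ^ a2) ^ (1 - 1 / a1)
    rw [ENNReal.mul_rpow_of_nonneg _ _ (by linarith), ← ENNReal.rpow_mul, ← ENNReal.rpow_mul,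
      ← ENNReal.rpow_mul, ← ENNReal.rpow_mul]
    have r1 : G z.1 = G z.1 ^ (a1 * σ) * G z.1 ^ (a1 * (1 - 1 / a2)) := by
      rw [← ENNReal.rpow_add_of_nonneg _ _ (mul_nonneg p1.le (by linarith))
        (mul_nonneg p1.le (by linarith))]
      have : a1 * σ + a1 * (1 - 1 / a2) = 1 := by rw [hσd]; field_simp; ring
      rw [this, ENNReal.rpow_one]
    have r2 : F (z.1 - δ • z.2) = F (z.1 - δ • z.2) ^ (a2 * σ) *
        F (z.1 - δ • z.2) ^ (a2 * (1 - 1 / a1)) := by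
      rw [← ENNReal.rpow_add_of_nonneg _ _ (mul_nonneg p2.le (by linarith))
        (mul_nonneg p2.le (by linarith))]
      have : a2 * σ + a2 * (1 - 1 / a1) = 1 := by rw [hσd]; field_simp; ring
      rw [this, ENNReal.rpow_one]
    conv_lhs => rw [r1, r2]
    ring
  have hH : ∫⁻ z, ∏ i, φ i z ^ ex i ∂(volume.prod ν) ≤ ∏ i, (∫⁻ z, φ i z ∂(volume.prod ν)) ^ ex i := by
    refine ENNReal.lintegral_prod_norm_pow_le Finset.univ ?_ ?_ ?_
    · intro i _
      fin_cases i
      · exact ((hmG.pow_const _).mul (hmF.pow_const _)).aemeasurable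
      · exact (hmG.pow_const _).aemeasurable
      · exact (hmF.pow_const _).aemeasurable
    · rw [Fin.sum_univ_three]
      change σ + (1 - 1 / a2) + (1 - 1 / a1) = 1
      rw [hσd]; ring
    · intro i _
      fin_cases i
      · change 0 ≤ σ; linarith
      · change 0 ≤ 1 - 1 / a2; linarith
      · change 0 ≤ 1 - 1 / a1; linarith
  have b0 : ∫⁻ z, φ 0 z ∂(volume.prod ν) ≤
      ENNReal.ofReal (δ ^ (-3:ℝ)) * (ENNReal.ofReal g ^ a1 * ENNReal.ofReal f ^ a2) := by
    change ∫⁻ z : E3 × E3, G z.1 ^ a1 * F (z.1 - δ • z.2) ^ a2 ∂(volume.prod ν) ≤ _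
    rw [lintegral_prod _ (by fun_prop)]
    calc ∫⁻ x, ∫⁻ h, G x ^ a1 * F (x - δ • h) ^ a2 ∂ν
        ≤ ∫⁻ x, G x ^ a1 * (ENNReal.ofReal (δ ^ (-3:ℝ)) * ENNReal.ofReal f ^ a2) := by
          refine lintegral_mono fun x => ?_
          rw [lintegral_const_mul _ (by fun_prop)]
          refine mul_le_mul' le_rfl ?_
          calc ∫⁻ h, F (x - δ • h) ^ a2 ∂ν ≤ ∫⁻ h, F (x - δ • h) ^ a2 :=
                lintegral_mono' Measure.restrict_le_self le_rfl
            _ = _ := lintegral_affine (fun y => F y ^ a2) (by fun_prop) x hδ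
            _ ≤ _ := mul_le_mul' le_rfl hFb
      _ = (∫⁻ x, G x ^ a1) * (ENNReal.ofReal (δ ^ (-3:ℝ)) * ENNReal.ofReal f ^ a2) := by
          rw [lintegral_mul_const _ (by fun_prop)]
      _ ≤ ENNReal.ofReal g ^ a1 * (ENNReal.ofReal (δ ^ (-3:ℝ)) * ENNReal.ofReal f ^ a2) :=
          mul_le_mul' hGb le_rfl
      _ = _ := by ring
  have b1 : ∫⁻ z, φ 1 z ∂(volume.prod ν) ≤ ENNReal.ofReal g ^ a1 * 5 := by
    change ∫⁻ z : E3 × E3, G z.1 ^ a1 ∂(volume.prod ν) ≤ _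
    rw [lintegral_prod _ (by fun_prop)]
    simp only [lintegral_const]
    rw [lintegral_mul_const _ (by fun_prop)]
    exact mul_le_mul' hGb hνuniv
  have b2 : ∫⁻ z, φ 2 z ∂(volume.prod ν) ≤ ENNReal.ofReal f ^ a2 * 5 := by
    change ∫⁻ z : E3 × E3, F (z.1 - δ • z.2) ^ a2 ∂(volume.prod ν) ≤ _
    rw [lintegral_prod_symm _ (by fun_prop)]
    have : ∀ h : E3, ∫⁻ x, F (x - δ • h) ^ a2 = ∫⁻ x, F x ^ a2 := fun h =>
      lintegral_sub_right_eq_self (fun x => F x ^ a2) (δ • h)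
    simp only [this, lintegral_const]
    exact mul_le_mul' hFb hνuniv
  have hσ0 : 0 ≤ σ := by linarith
  have n1 : 0 ≤ 1 - 1 / a2 := by linarith
  have n2 : 0 ≤ 1 - 1 / a1 := by linarith
  calc _ = ∫⁻ z, ∏ i, φ i z ^ ex i ∂(volume.prod ν) := by rw [e0]; simp only [e1]
    _ ≤ _ := hH
    _ ≤ (ENNReal.ofReal (δ ^ (-3:ℝ)) * (ENNReal.ofReal g ^ a1 * ENNReal.ofReal f ^ a2)) ^ σ *
        (ENNReal.ofReal g ^ a1 * 5) ^ (1 - 1 / a2) * (ENNReal.ofReal f ^ a2 * 5) ^ (1 - 1 / a1) := by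
        rw [Fin.prod_univ_three]
        exact mul_le_mul' (mul_le_mul' (ENNReal.rpow_le_rpow b0 hσ0) (ENNReal.rpow_le_rpow b1 n1))
          (ENNReal.rpow_le_rpow b2 n2)
    _ = ENNReal.ofReal ((δ ^ (-3:ℝ) * (g ^ a1 * f ^ a2)) ^ σ *
        (g ^ a1 * 5) ^ (1 - 1 / a2) * (f ^ a2 * 5) ^ (1 - 1 / a1)) := by
        have h5 : (5:ℝ≥0∞) = ENNReal.ofReal 5 := by simp
        rw [h5, ENNReal.ofReal_rpow_of_nonneg hg p1.le, ENNReal.ofReal_rpow_of_nonneg hf p2.le,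
          ← ENNReal.ofReal_mul (by positivity), ← ENNReal.ofReal_mul (by positivity),
          ← ENNReal.ofReal_mul (by positivity), ← ENNReal.ofReal_mul (by positivity),
          ENNReal.ofReal_rpow_of_nonneg (by positivity) hσ0,
          ENNReal.ofReal_rpow_of_nonneg (by positivity) n1,
          ENNReal.ofReal_rpow_of_nonneg (by positivity) n2,
          ← ENNReal.ofReal_mul (by positivity), ← ENNReal.ofReal_mul (by positivity)]
    _ ≤ _ := by
        refine ENNReal.ofReal_le_ofReal ?_
        have r1 : (g ^ a1) ^ σ * (g ^ a1) ^ (1 - 1 / a2) = g := by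
          rw [← Real.rpow_add_of_nonneg (by positivity) hσ0 n1, ← Real.rpow_mul hg]
          have : a1 * (σ + (1 - 1 / a2)) = 1 := by rw [hσd]; field_simp; ring
          rw [this, Real.rpow_one]
        have r2 : (f ^ a2) ^ σ * (f ^ a2) ^ (1 - 1 / a1) = f := by
          rw [← Real.rpow_add_of_nonneg (by positivity) hσ0 n2, ← Real.rpow_mul hf]
          have : a2 * (σ + (1 - 1 / a1)) = 1 := by rw [hσd]; field_simp; ring
          rw [this, Real.rpow_one]
        rw [Real.mul_rpow (by positivity) (by positivity), Real.mul_rpow (by positivity) (by positivity),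
          Real.mul_rpow (by positivity) (by norm_num), Real.mul_rpow (by positivity) (by norm_num),
          ← Real.rpow_mul hδ.le]
        have r3 : (5:ℝ) ^ (1 - 1 / a2) * 5 ^ (1 - 1 / a1) ≤ 5 := by
          rw [← Real.rpow_add (by norm_num)]
          calc (5:ℝ) ^ (1 - 1 / a2 + (1 - 1 / a1)) ≤ 5 ^ (1:ℝ) :=
                Real.rpow_le_rpow_of_exponent_le (by norm_num) (by linarith)
            _ = 5 := by simp
        calc _ = δ ^ (-3 * σ) * ((g ^ a1) ^ σ * (g ^ a1) ^ (1 - 1 / a2)) *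
              ((f ^ a2) ^ σ * (f ^ a2) ^ (1 - 1 / a1)) *
              ((5:ℝ) ^ (1 - 1 / a2) * 5 ^ (1 - 1 / a1)) := by ring
          _ = δ ^ (-3 * σ) * g * f * ((5:ℝ) ^ (1 - 1 / a2) * 5 ^ (1 - 1 / a1)) := by rw [r1, r2]
          _ ≤ δ ^ (-3 * σ) * g * f * 5 := by gcongr
          _ = _ := by ring

/-- Integrating the better of two power bounds. -/
theorem min_lemma (J : ℝ → ℝ≥0∞) {A B κ μ ℓ : ℝ} (hA : 0 ≤ A) (hB : 0 ≤ B) (hκ : 0 < κ)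
    (hμ : 0 < μ) (h1 : ∀ δ, 0 < δ → δ ≤ ℓ → J δ ≤ ENNReal.ofReal (A * δ ^ (κ - 1)))
    (h2 : ∀ δ, 0 < δ → δ ≤ ℓ → J δ ≤ ENNReal.ofReal (B * δ ^ (-μ - 1))) :
    ∫⁻ δ in Set.Ioc 0 ℓ, J δ ≤
      ENNReal.ofReal ((1 / κ + 1 / μ) * A ^ (μ / (κ + μ)) * B ^ (κ / (κ + μ))) := by
  have zero : (∀ δ, 0 < δ → δ ≤ ℓ → J δ = 0) → ∫⁻ δ in Set.Ioc 0 ℓ, J δ = 0 := by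
    intro h
    rw [setLIntegral_congr_fun measurableSet_Ioc (fun δ hδ => h δ hδ.1 hδ.2)]; simp
  rcases hA.eq_or_lt with rfl | hA
  · rw [zero fun δ a b => by simpa using h1 δ a b]; exact bot_le
  rcases hB.eq_or_lt with rfl | hB
  · rw [zero fun δ a b => by simpa using h2 δ a b]; exact bot_le
  set d := (B / A) ^ (1 / (κ + μ)) with hd
  have hd0 : 0 < d := by positivity
  have s1 : ∫⁻ δ in Set.Ioc 0 d, ENNReal.ofReal (A * δ ^ (κ - 1)) = ENNReal.ofReal (A * (d ^ κ / κ)) := by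
    rw [← ofReal_integral_eq_lintegral_ofReal]
    · congr 1
      rw [integral_const_mul, ← intervalIntegral.integral_of_le hd0.le,
        integral_rpow (Or.inl (by linarith))]
      simp [hκ.ne']
    · refine Integrable.const_mul ?_ A
      exact (intervalIntegrable_iff_integrableOn_Ioc_of_le hd0.le).1
        (intervalIntegral.intervalIntegrable_rpow' (by linarith))
    · refine (ae_restrict_mem measurableSet_Ioc).mono fun δ hδ => ?_
      have := hδ.1
      positivity
  have s2 : ∫⁻ δ in Set.Ioi d, ENNReal.ofReal (B * δ ^ (-μ - 1)) = ENNReal.ofReal (B * (d ^ (-μ) / μ)) := by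
    rw [← ofReal_integral_eq_lintegral_ofReal]
    · congr 1
      rw [integral_const_mul, integral_Ioi_rpow_of_lt (by linarith) hd0]
      simp [div_neg]
      ring
    · refine Integrable.const_mul ?_ B
      exact integrableOn_Ioi_rpow_of_lt (by linarith) hd0
    · refine (ae_restrict_mem measurableSet_Ioi).mono fun δ hδ => ?_
      have : 0 < δ := hd0.trans hδ
      positivity
  have hsub : Set.Ioc 0 ℓ ⊆ (Set.Ioc 0 ℓ ∩ Set.Ioc 0 d) ∪ (Set.Ioc 0 ℓ ∩ Set.Ioi d) := by
    intro x hx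
    by_cases h : x ≤ d
    · exact Or.inl ⟨hx, hx.1, h⟩
    · exact Or.inr ⟨hx, not_le.1 h⟩
  calc ∫⁻ δ in Set.Ioc 0 ℓ, J δ ≤ ∫⁻ δ in (Set.Ioc 0 ℓ ∩ Set.Ioc 0 d) ∪ (Set.Ioc 0 ℓ ∩ Set.Ioi d), J δ :=
        lintegral_mono_set hsub
    _ ≤ (∫⁻ δ in Set.Ioc 0 ℓ ∩ Set.Ioc 0 d, J δ) + ∫⁻ δ in Set.Ioc 0 ℓ ∩ Set.Ioi d, J δ :=
        lintegral_union_le _ _ _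
    _ ≤ (∫⁻ δ in Set.Ioc 0 d, ENNReal.ofReal (A * δ ^ (κ - 1))) +
        ∫⁻ δ in Set.Ioi d, ENNReal.ofReal (B * δ ^ (-μ - 1)) := by
        refine add_le_add ?_ ?_
        · exact (setLIntegral_mono' (measurableSet_Ioc.inter measurableSet_Ioc)
            fun δ hδ => h1 δ hδ.1.1 hδ.1.2).trans (lintegral_mono_set Set.inter_subset_right)
        · exact (setLIntegral_mono' (measurableSet_Ioc.inter measurableSet_Ioi)
            fun δ hδ => h2 δ hδ.1.1 hδ.1.2).trans (lintegral_mono_set Set.inter_subset_right)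
    _ = ENNReal.ofReal (A * (d ^ κ / κ) + B * (d ^ (-μ) / μ)) := by
        rw [s1, s2, ENNReal.ofReal_add (by positivity) (by positivity)]
    _ = _ := by
        congr 1
        have t1 : A * d ^ κ = A ^ (μ / (κ + μ)) * B ^ (κ / (κ + μ)) := by
          rw [hd, ← Real.rpow_mul (by positivity), Real.div_rpow hB.le hA.le]
          have e : A ^ (μ / (κ + μ)) = A / A ^ (κ / (κ + μ)) := by
            have : μ / (κ + μ) = 1 - κ / (κ + μ) := by field_simp; ring
            rw [this, Real.rpow_sub hA, Real.rpow_one]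
          rw [e, one_div_mul_eq_div]; ring
        have t2 : B * d ^ (-μ) = A ^ (μ / (κ + μ)) * B ^ (κ / (κ + μ)) := by
          rw [hd, ← Real.rpow_mul (by positivity), Real.div_rpow hB.le hA.le]
          have e : B ^ (κ / (κ + μ)) = B * B ^ (1 / (κ + μ) * -μ) := by
            have : κ / (κ + μ) = 1 + 1 / (κ + μ) * -μ := by field_simp; ring
            rw [this, Real.rpow_add hB, Real.rpow_one]
          have e' : A ^ (1 / (κ + μ) * -μ) = (A ^ (μ / (κ + μ)))⁻¹ := by
            rw [← Real.rpow_neg hA.le]; congr 1; ring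
          rw [e, e', div_inv_eq_mul]; ring
        calc A * (d ^ κ / κ) + B * (d ^ (-μ) / μ) = (A * d ^ κ) / κ + (B * d ^ (-μ)) / μ := by ring
          _ = _ := by rw [t1, t2]; ring

/-! ### The smoothing kernel -/

/-- A smooth radial bump, supported in the unit ball and normalised so that `∇(eta 0 1) = -h · bmp h`. -/
def bmp (h : E3) : ℝ := 2 * deriv Real.smoothTransition (1 - ‖h‖ ^ 2)

theorem bmp_smooth : Sm bmp := by
  unfold bmp
  have h1 : Sm (fun h : E3 => 1 - ‖h‖ ^ 2) := contDiff_const.sub (contDiff_norm_sq ℝ)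
  have h2 : ContDiff ℝ (⊤ : ℕ∞) (deriv Real.smoothTransition) := by
    have : ContDiff ℝ (((⊤ : ℕ∞) : WithTop ℕ∞) + 1) Real.smoothTransition :=
      Real.smoothTransition.contDiff
    exact this.deriv'
  exact contDiff_const.mul (h2.comp h1)

theorem bmp_nonneg (h : E3) : 0 ≤ bmp h :=
  mul_nonneg (by norm_num) Real.smoothTransition.monotone.deriv_nonneg

theorem bmp_zero {h : E3} (hh : 1 ≤ ‖h‖) : bmp h = 0 := by
  unfold bmp
  rw [deriv_smoothTransition_zero_of_neg (by nlinarith), mul_zero]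

theorem pd3_eta_bmp (i : Fin 3) (h : E3) : pd3 i (eta 0 1) h = -(h i * bmp h) := by
  rw [pd3_eta]; unfold bmp; norm_num; ring

theorem compactSupport_of_zero {φ : E3 → ℝ} (hφ : ∀ h : E3, 1 ≤ ‖h‖ → φ h = 0) :
    HasCompactSupport φ :=
  HasCompactSupport.intro (isCompact_closedBall (0:E3) 1) fun x hx => by
    refine hφ x ?_
    simp at hx; exact hx.le

theorem bmp_integral_pos : 0 < ∫ h, bmp h := by
  -- the derivative of `smoothTransition` cannot vanish identically on `[0, 1]`
  obtain ⟨c, hc, hc'⟩ := exists_deriv_eq_slope Real.smoothTransition (zero_lt_one)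
    (Real.smoothTransition.continuous.continuousOn)
    (((Real.smoothTransition.contDiff (n := 1)).differentiable (by simp)).differentiableOn)
  rw [Real.smoothTransition.one_of_one_le le_rfl, Real.smoothTransition.zero_of_nonpos le_rfl] at hc'
  refine Continuous.integral_pos_of_hasCompactSupport_nonneg_nonzero
    (x := EuclideanSpace.single 0 (√(1 - c))) bmp_smooth.continuous
    (compactSupport_of_zero fun h => bmp_zero) bmp_nonneg ?_
  unfold bmp
  rw [PiLp.norm_single, Real.norm_eq_abs, sq_abs, Real.sq_sqrt (by linarith [hc.2])]
  have : 1 - (1 - c) = c := by ring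
  rw [this, hc']
  norm_num

theorem bounded_of_zero {φ : E3 → ℝ} (cφ : Continuous φ) (hφ : HasCompactSupport φ) :
    ∃ c > 0, ∀ h, |φ h| ≤ c := by
  obtain ⟨c, hc⟩ := hφ.exists_bound_of_continuous cφ
  exact ⟨max c 1, by positivity, fun h => (hc h).trans (le_max_left _ _)⟩

theorem pd3_zero_of_zero {φ : E3 → ℝ} (hφ : ∀ h : E3, 1 ≤ ‖h‖ → φ h = 0) (j : Fin 3) {h : E3}
    (hh : h ∉ closedBall (0:E3) 1) : pd3 j φ h = 0 := by
  have : φ =ᶠ[nhds h] fun _ => 0 := by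
    filter_upwards [isClosed_closedBall.isOpen_compl.mem_nhds hh] with y hy
    refine hφ y ?_
    simp at hy; exact hy.le
  unfold pd3
  rw [this.fderiv_eq]; simp

/-- The average `∫ φ(h) f(x - δ h) dh` over the unit ball. -/
def av (φ f : E3 → ℝ) (x : E3) (δ : ℝ) : ℝ := ∫ h in closedBall (0:E3) 1, φ h * f (x - δ • h)

theorem av_cont {φ f : E3 → ℝ} (hφ : Continuous φ) (hf : Continuous f) :
    Continuous (fun z : E3 × ℝ => av φ f z.1 z.2) := by
  unfold av
  refine continuous_parametric_integral_of_continuous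
    (f := fun (z : E3 × ℝ) (h : E3) => φ h * f (z.1 - z.2 • h)) ?_ (isCompact_closedBall _ _)
  simp only [Function.uncurry_def]
  fun_prop

theorem av_bound {φ f : E3 → ℝ} {c : ℝ} (hc : ∀ h, |φ h| ≤ c) (hf : Continuous f) (x : E3) (δ : ℝ) :
    ‖av φ f x δ‖ₑ ≤ ENNReal.ofReal c * ∫⁻ h in closedBall (0:E3) 1, ‖f (x - δ • h)‖ₑ := by
  unfold av
  refine (enorm_integral_le_lintegral_enorm _).trans ?_
  rw [← lintegral_const_mul _ (Continuous.measurable (Continuous.enorm (by fun_prop)))]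
  refine lintegral_mono fun h => ?_
  rw [enorm_mul]
  refine mul_le_mul' ?_ le_rfl
  rw [← ofReal_norm]
  exact ENNReal.ofReal_le_ofReal (hc h)

theorem av_add {φ f g : E3 → ℝ} (hφ : Continuous φ) (hf : Continuous f) (hg : Continuous g)
    (x : E3) (δ : ℝ) : av φ (fun y => f y + g y) x δ = av φ f x δ + av φ g x δ := by
  unfold av
  rw [← integral_add]
  · simp only [mul_add]
  · exact (Continuous.continuousOn (by fun_prop)).integrableOn_compact (isCompact_closedBall _ _)
  · exact (Continuous.continuousOn (by fun_prop)).integrableOn_compact (isCompact_closedBall _ _)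

theorem av_sub {φ f g : E3 → ℝ} (hφ : Continuous φ) (hf : Continuous f) (hg : Continuous g)
    (x : E3) (δ : ℝ) : av φ (fun y => f y - g y) x δ = av φ f x δ - av φ g x δ := by
  unfold av
  rw [← integral_sub]
  · simp only [mul_sub]
  · exact (Continuous.continuousOn (by fun_prop)).integrableOn_compact (isCompact_closedBall _ _)
  · exact (Continuous.continuousOn (by fun_prop)).integrableOn_compact (isCompact_closedBall _ _)

theorem av_sum {ι : Type*} (s : Finset ι) {φ : E3 → ℝ} {f : ι → E3 → ℝ} (hφ : Continuous φ)
    (hf : ∀ i ∈ s, Continuous (f i))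
    (x : E3) (δ : ℝ) : av φ (fun y => ∑ i ∈ s, f i y) x δ = ∑ i ∈ s, av φ (f i) x δ := by
  unfold av
  rw [← integral_finsetSum]
  · simp only [Finset.mul_sum]
  · intro i hi
    have := hf i hi
    exact (Continuous.continuousOn (by fun_prop)).integrableOn_compact (isCompact_closedBall _ _)

theorem av_eq_integral {φ f : E3 → ℝ} (hφ : ∀ h : E3, h ∉ closedBall (0:E3) 1 → φ h = 0) (x : E3)
    (δ : ℝ) : av φ f x δ = ∫ h, φ h * f (x - δ • h) := by
  unfold av
  refine setIntegral_eq_integral_of_forall_compl_eq_zero fun h hh => ?_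
  rw [hφ h hh, zero_mul]

/-- Integration by parts in the average. -/
theorem av_ibp {φ f : E3 → ℝ} (sφ : Sm φ) (hφ : ∀ h : E3, 1 ≤ ‖h‖ → φ h = 0) (sf : Sm f) (j : Fin 3)
    (x : E3) (δ : ℝ) : δ * av φ (pd3 j f) x δ = av (pd3 j φ) f x δ := by
  have hφ' : ∀ h : E3, h ∉ closedBall (0:E3) 1 → φ h = 0 := fun h hh => by
    refine hφ h ?_
    simp at hh; exact hh.le
  rw [av_eq_integral hφ', av_eq_integral fun h hh => pd3_zero_of_zero hφ j hh]
  have := ibp (sf.comp_affine x δ) sφ (compactSupport_of_zero hφ) j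
  simp only [pd3_comp_affine sf] at this
  rw [← integral_const_mul]
  calc ∫ h, δ * (φ h * pd3 j f (x - δ • h)) = -∫ h, -δ * pd3 j f (x - δ • h) * φ h := by
        rw [← integral_neg]; congr 1; funext h; ring
    _ = _ := by rw [← this]; congr 1; funext h; ring

/-- Pairing a function with an average at scale `δ`, by the trilinear Young inequality. -/
theorem J_gen {G f φ : E3 → ℝ} {A1 A2 : Set E3} {ℓ δ a1 a2 c g n : ℝ} (cG : Continuous G)
    (cf : Continuous f) (hc : ∀ h, |φ h| ≤ c) (hc0 : 0 ≤ c)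
    (mA1 : MeasurableSet A1) (mA2 : MeasurableSet A2)
    (hGs : ∀ x, G x ≠ 0 → x ∈ A1) (hA : ∀ x ∈ A1, closedBall x ℓ ⊆ A2)
    (ha1 : 1 ≤ a1) (ha2 : 1 ≤ a2) (hσ : 1 ≤ 1 / a1 + 1 / a2) (hδ : 0 < δ) (hδℓ : δ ≤ ℓ)
    (hG : NB G a1 A1 g) (hf : NB f a2 A2 n) :
    ∫⁻ x, ‖G x‖ₑ * ‖av φ f x δ‖ₑ ≤
      ENNReal.ofReal (5 * c * g * n * δ ^ (-3 * (1 / a1 + 1 / a2 - 1))) := by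
  set F : E3 → ℝ≥0∞ := A2.indicator fun x => ‖f x‖ₑ with hF
  have mF : Measurable F := cf.measurable.enorm.indicator mA2
  have hFb : ∫⁻ x, F x ^ a2 ≤ ENNReal.ofReal n ^ a2 := by
    refine le_trans (le_of_eq ?_) hf.2
    rw [← lintegral_indicator mA2]
    refine lintegral_congr fun x => ?_
    by_cases hx : x ∈ A2
    · simp [hF, hx]
    · simp [hF, hx]; linarith
  have hGb : ∫⁻ x, ‖G x‖ₑ ^ a1 ≤ ENNReal.ofReal g ^ a1 := by
    have := (nb_univ_of_supp (by linarith) hG mA1 hGs).2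
    rwa [Measure.restrict_univ] at this
  have hY := young_tri (fun x => ‖G x‖ₑ) F cG.enorm.measurable mF ha1 ha2 hσ hδ hG.1 hf.1 hGb hFb
  calc ∫⁻ x, ‖G x‖ₑ * ‖av φ f x δ‖ₑ
      ≤ ∫⁻ x, ENNReal.ofReal c * ∫⁻ h in closedBall (0:E3) 1, ‖G x‖ₑ * F (x - δ • h) := by
        refine lintegral_mono fun x => ?_
        rcases eq_or_ne (G x) 0 with h0 | h0
        · simp [h0]
        rw [lintegral_const_mul' _ _ enorm_ne_top]
        calc ‖G x‖ₑ * ‖av φ f x δ‖ₑ ≤ ‖G x‖ₑ * (ENNReal.ofReal c *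
              ∫⁻ h in closedBall (0:E3) 1, ‖f (x - δ • h)‖ₑ) := mul_le_mul' le_rfl (av_bound hc cf x δ)
          _ = ‖G x‖ₑ * (ENNReal.ofReal c * ∫⁻ h in closedBall (0:E3) 1, F (x - δ • h)) := by
              congr 2
              refine setLIntegral_congr_fun measurableSet_closedBall fun h hh => ?_
              have : x - δ • h ∈ A2 := by
                refine hA x (hGs x h0) ?_
                simp only [mem_closedBall, dist_self_sub_left, norm_smul, Real.norm_eq_abs,
                  abs_of_pos hδ]
                simp at hh
                nlinarith
              simp [hF, this]
          _ = _ := by ring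
    _ = ENNReal.ofReal c * ∫⁻ x, ∫⁻ h in closedBall (0:E3) 1, ‖G x‖ₑ * F (x - δ • h) := by
        rw [lintegral_const_mul]
        exact Measurable.lintegral_prod_right' (f := fun z : E3 × E3 => ‖G z.1‖ₑ * F (z.1 - δ • z.2))
          ((cG.comp continuous_fst).enorm.measurable.mul
            (mF.comp (Continuous.measurable (by fun_prop))))
    _ ≤ ENNReal.ofReal c * ENNReal.ofReal (5 * g * n * δ ^ (-3 * (1 / a1 + 1 / a2 - 1))) :=
        mul_le_mul' le_rfl hY
    _ = _ := by
        rw [← ENNReal.ofReal_mul hc0]; congr 1; ring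

/-- The kernel `h_i bmp(h)`. -/
def kerI (i : Fin 3) (h : E3) : ℝ := h i * bmp h

theorem kerI_smooth (i : Fin 3) : Sm (kerI i) := by
  unfold kerI
  refine ContDiff.mul ?_ bmp_smooth
  fun_prop

theorem kerI_zero (i : Fin 3) {h : E3} (hh : 1 ≤ ‖h‖) : kerI i h = 0 := by
  unfold kerI; rw [bmp_zero hh, mul_zero]

theorem exists_bmp_bound : ∃ c > 0, (∀ h, |bmp h| ≤ c) ∧ (∀ j h, |pd3 j bmp h| ≤ c) ∧
    (∀ i h, |kerI i h| ≤ c) ∧ ∀ i j h, |pd3 j (kerI i) h| ≤ c := by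
  have s0 := compactSupport_of_zero fun h => bmp_zero (h := h)
  obtain ⟨c1, p1, h1⟩ := bounded_of_zero bmp_smooth.continuous s0
  choose c2 p2 h2 using fun j => bounded_of_zero (bmp_smooth.pd3 j).continuous
    (hasCompactSupport_pd3 s0 j)
  have s1 := fun i => compactSupport_of_zero fun h => kerI_zero i (h := h)
  choose c3 p3 h3 using fun i => bounded_of_zero (kerI_smooth i).continuous (s1 i)
  choose c4 p4 h4 using fun i j => bounded_of_zero ((kerI_smooth i).pd3 j).continuous
    (hasCompactSupport_pd3 (s1 i) j)
  have q2 : ∀ j, c2 j ≤ ∑ j, c2 j := fun j =>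
    Finset.single_le_sum (f := c2) (fun i _ => (p2 i).le) (Finset.mem_univ j)
  have q3 : ∀ j, c3 j ≤ ∑ j, c3 j := fun j =>
    Finset.single_le_sum (f := c3) (fun i _ => (p3 i).le) (Finset.mem_univ j)
  have q4 : ∀ i j, c4 i j ≤ ∑ i, ∑ j, c4 i j := fun i j =>
    (Finset.single_le_sum (f := c4 i) (fun k _ => (p4 i k).le) (Finset.mem_univ j)).trans
    (Finset.single_le_sum (f := fun i => ∑ j, c4 i j)
      (fun i _ => Finset.sum_nonneg fun k _ => (p4 i k).le) (Finset.mem_univ i))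
  have n2 : 0 ≤ ∑ j, c2 j := Finset.sum_nonneg fun j _ => (p2 j).le
  have n3 : 0 ≤ ∑ j, c3 j := Finset.sum_nonneg fun j _ => (p3 j).le
  have n4 : 0 ≤ ∑ i, ∑ j, c4 i j := Finset.sum_nonneg fun i _ => Finset.sum_nonneg fun j _ => (p4 i j).le
  refine ⟨c1 + ∑ j, c2 j + ∑ j, c3 j + ∑ i, ∑ j, c4 i j, by linarith, fun h => ?_, fun j h => ?_,
    fun i h => ?_, fun i j h => ?_⟩
  · linarith [h1 h]
  · linarith [h2 j h, q2 j]
  · linarith [h3 i h, q3 i]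
  · linarith [h4 i j h, q4 i j]

/-- Interpolation exponent: `1/(2p') - 1/6 = aexp p b * (1/b - 1/6)`. -/
def aexp (p b : ℝ) : ℝ := (1 / 3 - 1 / (2 * p)) / (1 / b - 1 / 6)

/-- The oscillation of the pressure below scale `ℓ`. For small scales the derivative is kept on `T`,
for large scales it is moved to the kernel; splitting at the optimal scale yields a bound of
interpolation type without singular integrals. -/
theorem near_far (p b : ℝ) (hp : 3 / 2 < p) (hp3 : p < 3) (hb : 2 ≤ b)
    (hab : 1 / 3 - 1 / (2 * p) < 1 / b - 1 / 6) :
    ∃ C > 0, ∀ (T G : E3 → ℝ) (A1 A2 : Set E3) (ℓ g n f : ℝ) (i j : Fin 3), Sm T → Continuous G →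
    MeasurableSet A1 → MeasurableSet A2 → 0 < ℓ →
    (∀ x, G x ≠ 0 → x ∈ A1) → (∀ x ∈ A1, closedBall x ℓ ⊆ A2) →
    NB G p A1 g → NB (pd3 j T) (3 / 2) A2 n → NB T (b / 2) A2 f →
    ∫⁻ x, ‖G x‖ₑ * ‖∫ δ in (0:ℝ)..ℓ, av (kerI i) (pd3 j T) x δ‖ₑ ≤
      ENNReal.ofReal (C * g * n ^ (1 - aexp p b) * f ^ aexp p b) := by
  obtain ⟨c, hc, -, -, hk, hk'⟩ := exists_bmp_bound
  have hp0 : 0 < p := by linarith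
  have hb0 : 0 < b := by linarith
  have ip : 1 / p < 2 / 3 := by rw [div_lt_div_iff₀ hp0 (by norm_num)]; linarith
  have ip3 : 1 / 3 < 1 / p := one_div_lt_one_div_of_lt hp0 hp3
  set κ := 2 - 3 / p with hκ
  set μ := 3 / p + 6 / b - 3 with hμ
  have e2p : 1 / (2 * p) = 1 / p / 2 := by field_simp
  rw [e2p] at hab
  have e3p : 3 / p = 3 * (1 / p) := by ring
  have e6b : 6 / b = 6 * (1 / b) := by ring
  have κ0 : 0 < κ := by rw [hκ, e3p]; linarith
  have μ0 : 0 < μ := by rw [hμ, e3p, e6b]; linarith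
  have ea : κ / (κ + μ) = aexp p b := by
    unfold aexp
    rw [e2p, div_eq_div_iff (by positivity) (by linarith)]
    rw [hκ, hμ, e3p, e6b]; ring
  have ea' : μ / (κ + μ) = 1 - aexp p b := by rw [← ea]; field_simp; ring
  have a0 : 0 ≤ aexp p b := by rw [← ea]; positivity
  have a1 : 0 ≤ 1 - aexp p b := by rw [← ea']; positivity
  refine ⟨(1 / κ + 1 / μ) * (5 * c), by positivity, ?_⟩
  intro T G A1 A2 ℓ g n f i j sT cG mA1 mA2 hℓ hGs hA hG hn hf
  have hg0 := hG.1
  have hn0 := hn.1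
  have hf0 := hf.1
  set q : E3 → ℝ → ℝ := fun x δ => av (kerI i) (pd3 j T) x δ with hq
  have cq : Continuous (fun z : E3 × ℝ => q z.1 z.2) :=
    av_cont (kerI_smooth i).continuous (sT.pd3 j).continuous
  have near : ∀ δ, 0 < δ → δ ≤ ℓ → ∫⁻ x, ‖G x‖ₑ * ‖q x δ‖ₑ ≤
      ENNReal.ofReal ((5 * c * g * n) * δ ^ (κ - 1)) := by
    intro δ hδ hδℓ
    have := J_gen (φ := kerI i) cG (sT.pd3 j).continuous (hk i) hc.le mA1 mA2 hGs hA
      (by linarith : 1 ≤ p) (by norm_num : (1:ℝ) ≤ 3 / 2) (by norm_num at ip3 ⊢; linarith) hδ hδℓ hG hn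
    refine this.trans (le_of_eq ?_)
    congr 3
    rw [hκ, e3p]; ring
  have far : ∀ δ, 0 < δ → δ ≤ ℓ → ∫⁻ x, ‖G x‖ₑ * ‖q x δ‖ₑ ≤
      ENNReal.ofReal ((5 * c * g * f) * δ ^ (-μ - 1)) := by
    intro δ hδ hδℓ
    have e2b : 1 / (b / 2) = 2 * (1 / b) := by field_simp
    have := J_gen (φ := pd3 j (kerI i)) cG sT.continuous (hk' i j) hc.le mA1 mA2 hGs hA
      (by linarith : 1 ≤ p) (by linarith : 1 ≤ b / 2) (by rw [e2b]; linarith) hδ hδℓ hG hf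
    have eq : ∀ x, ‖G x‖ₑ * ‖q x δ‖ₑ = ENNReal.ofReal δ⁻¹ * (‖G x‖ₑ * ‖av (pd3 j (kerI i)) T x δ‖ₑ) := by
      intro x
      have := av_ibp (kerI_smooth i) (fun h => kerI_zero i) sT j x δ
      have e : q x δ = δ⁻¹ * av (pd3 j (kerI i)) T x δ := by
        rw [← this, ← mul_assoc, inv_mul_cancel₀ hδ.ne', one_mul]
      rw [e, enorm_mul, Real.enorm_of_nonneg (inv_nonneg.2 hδ.le : (0:ℝ) ≤ δ⁻¹)]; ring
    simp only [eq]
    rw [lintegral_const_mul']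
    · refine (mul_le_mul' le_rfl this).trans (le_of_eq ?_)
      rw [← ENNReal.ofReal_mul (by positivity)]
      congr 1
      have e : δ ^ (-μ - 1) = δ⁻¹ * δ ^ (-3 * (1 / p + 1 / (b / 2) - 1)) := by
        rw [← Real.rpow_neg_one, ← Real.rpow_add hδ]
        congr 1
        rw [hμ, e3p, e6b, e2b]; ring
      rw [e]; ring
    · exact ENNReal.ofReal_ne_top
  have hmin := min_lemma (fun δ => ∫⁻ x, ‖G x‖ₑ * ‖q x δ‖ₑ) (ℓ := ℓ)
    (by positivity : 0 ≤ 5 * c * g * n) (by positivity : 0 ≤ 5 * c * g * f) κ0 μ0 near far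
  calc ∫⁻ x, ‖G x‖ₑ * ‖∫ δ in (0:ℝ)..ℓ, q x δ‖ₑ
      ≤ ∫⁻ x, ∫⁻ δ in Set.Ioc 0 ℓ, ‖G x‖ₑ * ‖q x δ‖ₑ := by
        refine lintegral_mono fun x => ?_
        rw [lintegral_const_mul' _ _ enorm_ne_top, intervalIntegral.integral_of_le hℓ.le]
        exact mul_le_mul' le_rfl (enorm_integral_le_lintegral_enorm _)
    _ = ∫⁻ δ in Set.Ioc 0 ℓ, ∫⁻ x, ‖G x‖ₑ * ‖q x δ‖ₑ := by
        refine lintegral_lintegral_swap ?_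
        refine Measurable.aemeasurable ?_
        simp only [Function.uncurry_def]
        exact ((cG.comp continuous_fst).enorm.measurable).mul cq.enorm.measurable
    _ ≤ _ := hmin
    _ = _ := by
        congr 1
        rw [ea, ea', Real.mul_rpow (by positivity) hn0, Real.mul_rpow (by positivity) hf0]
        have : (5 * c * g) ^ (1 - aexp p b) * (5 * c * g) ^ aexp p b = 5 * c * g := by
          rw [← Real.rpow_add_of_nonneg (by positivity) a1 a0]; simp
        calc _ = (1 / κ + 1 / μ) * ((5 * c * g) ^ (1 - aexp p b) * (5 * c * g) ^ aexp p b) *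
              n ^ (1 - aexp p b) * f ^ aexp p b := by ring
          _ = _ := by rw [this]; ring

/-! ### Local representation of the pressure -/

/-- The fundamental theorem of calculus along the segments from `a h` to `b h`, averaged in `h`. -/
theorem ftc_avg {φ P : E3 → ℝ} (cφ : Continuous φ) (sP : Sm P) {a b : E3 → E3} (ca : Continuous a)
    (cb : Continuous b) :
    ∫ h in closedBall (0:E3) 1, φ h * (P (b h) - P (a h)) =
      ∫ t in (0:ℝ)..1, ∫ h in closedBall (0:E3) 1,
        φ h * fderiv ℝ P (a h + t • (b h - a h)) (b h - a h) := by
  have cP : Continuous (fderiv ℝ P) := sP.continuous_fderiv (by simp)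
  rw [intervalIntegral_integral_swap]
  · refine integral_congr_ae (Filter.Eventually.of_forall fun h => ?_)
    dsimp only
    rw [intervalIntegral.integral_const_mul]
    congr 1
    have hd : ∀ t ∈ Set.uIcc (0:ℝ) 1, HasDerivAt (fun t : ℝ => P (a h + t • (b h - a h)))
        (fderiv ℝ P (a h + t • (b h - a h)) (b h - a h)) t := by
      intro t _
      refine ((sP.differentiable _).hasFDerivAt).comp_hasDerivAt t ?_
      simpa using ((hasDerivAt_id t).smul_const (b h - a h)).const_add (a h)
    rw [intervalIntegral.integral_eq_sub_of_hasDerivAt hd]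
    · simp
    · exact Continuous.intervalIntegrable (by fun_prop) _ _
  · rw [Measure.prod_restrict]
    have hi : IntegrableOn (Function.uncurry fun (t : ℝ) (h : E3) =>
        φ h * fderiv ℝ P (a h + t • (b h - a h)) (b h - a h))
        (Set.uIcc (0:ℝ) 1 ×ˢ closedBall (0:E3) 1) (volume.prod volume) := by
      refine ContinuousOn.integrableOn_compact (isCompact_uIcc.prod (isCompact_closedBall _ _)) ?_
      refine Continuous.continuousOn ?_
      simp only [Function.uncurry_def]
      fun_prop
    exact hi.mono_set (Set.prod_mono Set.uIoc_subset_uIcc le_rfl)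

/-- The difference between `P` and its mollification at scale `ℓ` is an integral over the
scales below `ℓ` of averages of `∇P`. -/
theorem av_bmp_diff {P : E3 → ℝ} (sP : Sm P) (x : E3) {ℓ : ℝ} :
    (∫ h, bmp h) * P x - av bmp P x ℓ = ∫ δ in (0:ℝ)..ℓ, ∑ i, av (kerI i) (pd3 i P) x δ := by
  have h1 := ftc_avg bmp_smooth.continuous sP (a := fun _ => x) (b := fun h => x - ℓ • h)
    continuous_const (by fun_prop)
  have h2 : ∫ h in closedBall (0:E3) 1, bmp h * (P (x - ℓ • h) - P x) =
      av bmp P x ℓ - (∫ h, bmp h) * P x := by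
    have e : ∫ h, bmp h = ∫ h in closedBall (0:E3) 1, bmp h :=
      (setIntegral_eq_integral_of_forall_compl_eq_zero fun h hh => bmp_zero (by
        simp at hh; exact hh.le)).symm
    rw [e, ← integral_mul_const]
    unfold av
    rw [← integral_sub]
    · simp only [mul_sub]
    · have := bmp_smooth.continuous
      have := sP.continuous
      exact (Continuous.continuousOn (by fun_prop)).integrableOn_compact (isCompact_closedBall _ _)
    · have := bmp_smooth.continuous
      exact (Continuous.continuousOn (by fun_prop)).integrableOn_compact (isCompact_closedBall _ _)
  have h3 : ∀ t : ℝ, ∫ h in closedBall (0:E3) 1,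
        bmp h * fderiv ℝ P (x + t • (x - ℓ • h - x)) (x - ℓ • h - x) =
        -(ℓ * ∑ i, av (kerI i) (pd3 i P) x (t * ℓ)) := by
    intro t
    unfold av
    rw [← integral_finsetSum, ← integral_const_mul, ← integral_neg]
    · refine integral_congr_ae (Filter.Eventually.of_forall fun h => ?_)
      dsimp only
      have e1 : x - ℓ • h - x = -(ℓ • h) := by abel
      rw [e1, fderiv_eq_sum, Finset.mul_sum, Finset.mul_sum, ← Finset.sum_neg_distrib]
      refine Finset.sum_congr rfl fun i _ => ?_
      have e2 : x + t • -(ℓ • h) = x - (t * ℓ) • h := by rw [smul_neg, smul_smul]; abel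
      rw [e2]; unfold kerI
      simp; ring
    · intro i _
      have := (kerI_smooth i).continuous
      have := (sP.pd3 i).continuous
      exact (Continuous.continuousOn (by fun_prop)).integrableOn_compact (isCompact_closedBall _ _)
  rw [h2] at h1
  simp only [h3] at h1
  rw [intervalIntegral.integral_neg, intervalIntegral.integral_const_mul] at h1
  have h4 := intervalIntegral.smul_integral_comp_mul_right (a := 0) (b := 1)
    (fun δ => ∑ i, av (kerI i) (pd3 i P) x δ) ℓ
  simp only [smul_eq_mul, zero_mul, one_mul] at h4
  rw [← h4]; linarith

/-- The averages `∫ ∇(eta 0 1)(h) · Δ U(x - δ h) dh` vanish for a solenoidal field `U`. -/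
theorem av_lap_zero {U : Fin 3 → E3 → ℝ} (sU : ∀ i, Sm (U i))
    (hdiv : ∀ x, ∑ j, pd3 j (U j) x = 0) (x : E3) (δ : ℝ) :
    ∑ i, av (kerI i) (lap3 (U i)) x δ = 0 := by
  have sl : ∀ i, Sm (lap3 (U i)) := fun i => by
    unfold lap3
    exact ContDiff.sum fun j _ => ((sU i).pd3 j).pd3 j
  have e0 : ∀ h : E3, 1 ≤ ‖h‖ → eta 0 1 h = 0 := fun h hh => eta_zero le_rfl one_pos hh
  have e1 : ∀ i, av (kerI i) (lap3 (U i)) x δ = -(δ * av (eta 0 1) (pd3 i (lap3 (U i))) x δ) := by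
    intro i
    rw [av_ibp (eta_smooth 0 1) e0 (sl i)]
    unfold av
    rw [← integral_neg]
    congr 1; funext h
    rw [pd3_eta_bmp]; unfold kerI; ring
  simp only [e1]
  rw [Finset.sum_neg_distrib, ← Finset.mul_sum, ← av_sum _ (eta_smooth 0 1).continuous
    (fun i _ => ((sl i).pd3 i).continuous)]
  have e2 : (fun y => ∑ i, pd3 i (lap3 (U i)) y) = fun _ => 0 := by
    funext y
    have e3 : ∀ i, pd3 i (lap3 (U i)) y = ∑ j, pd3 j (pd3 j (pd3 i (U i))) y := by
      intro i
      unfold lap3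
      rw [pd3_sum _ fun j _ => ((sU i).pd3 j).pd3 j]
      refine Finset.sum_congr rfl fun j _ => ?_
      rw [pd3_comm ((sU i).pd3 j), pd3_comm (sU i) i j]
    simp only [e3]
    rw [Finset.sum_comm]
    refine Finset.sum_eq_zero fun j _ => ?_
    rw [← pd3_sum _ fun i _ => ((sU i).pd3 i).pd3 j]
    have e4 : (fun y => ∑ i, pd3 j (pd3 i (U i)) y) = pd3 j (fun y => ∑ i, pd3 i (U i) y) := by
      funext z; rw [pd3_sum _ fun i _ => (sU i).pd3 i]
    rw [e4]
    have e5 : (fun y => ∑ i, pd3 i (U i) y) = fun _ => 0 := by funext z; exact hdiv z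
    rw [e5]
    unfold pd3; simp
  rw [e2]; simp [av]

theorem av_L1 {φ f : E3 → ℝ} {c a ℓ : ℝ} {A : Set E3} {x : E3} (hc : ∀ h, |φ h| ≤ c) (hc0 : 0 ≤ c)
    (cf : Continuous f) (mA : MeasurableSet A) (hℓ : 0 < ℓ) (hA : closedBall x ℓ ⊆ A) (h : NB f 1 A a) :
    |av φ f x ℓ| ≤ c * (ℓ ^ (-3:ℝ) * a) := by
  have h1 : ∫⁻ h in closedBall (0:E3) 1, ‖f (x - ℓ • h)‖ₑ ≤ ENNReal.ofReal (ℓ ^ (-3:ℝ) * a) := by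
    set F : E3 → ℝ≥0∞ := A.indicator fun x => ‖f x‖ₑ with hF
    have mF : Measurable F := cf.measurable.enorm.indicator mA
    calc ∫⁻ h in closedBall (0:E3) 1, ‖f (x - ℓ • h)‖ₑ
        = ∫⁻ h in closedBall (0:E3) 1, F (x - ℓ • h) := by
          refine setLIntegral_congr_fun measurableSet_closedBall fun h hh => ?_
          have : x - ℓ • h ∈ A := by
            refine hA ?_
            simp only [mem_closedBall, dist_self_sub_left, norm_smul, Real.norm_eq_abs,
              abs_of_pos hℓ]
            simp at hh
            nlinarith
          simp [hF, this]
      _ ≤ ∫⁻ h, F (x - ℓ • h) := setLIntegral_le_lintegral _ _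
      _ = ENNReal.ofReal (ℓ ^ (-3:ℝ)) * ∫⁻ y, F y := lintegral_affine F mF x hℓ
      _ = ENNReal.ofReal (ℓ ^ (-3:ℝ)) * ∫⁻ y in A, ‖f y‖ₑ := by rw [hF, lintegral_indicator mA]
      _ ≤ ENNReal.ofReal (ℓ ^ (-3:ℝ)) * ENNReal.ofReal a := mul_le_mul' le_rfl h.lintegral_le
      _ = _ := by rw [← ENNReal.ofReal_mul (by positivity)]
  have h2 := (av_bound hc cf x ℓ).trans (mul_le_mul' le_rfl h1)
  rw [← ENNReal.ofReal_mul hc0, ← ofReal_norm] at h2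
  have := h.1
  exact (ENNReal.ofReal_le_ofReal_iff (by positivity)).1 h2

/-- Variation of a mollified function along a segment. -/
theorem av_seg {P : E3 → ℝ} (sP : Sm P) {y z : E3} {ℓ s : ℝ}
    (hs : ∀ t ∈ Set.Icc (0:ℝ) 1, ∀ i, |av bmp (pd3 i P) (y + t • (z - y)) ℓ| ≤ s) :
    |av bmp P z ℓ - av bmp P y ℓ| ≤ 3 * s * ‖z - y‖ := by
  have h1 := ftc_avg bmp_smooth.continuous sP (a := fun h => y - ℓ • h) (b := fun h => z - ℓ • h)
    (by fun_prop) (by fun_prop)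
  have h2 : av bmp P z ℓ - av bmp P y ℓ =
      ∫ h in closedBall (0:E3) 1, bmp h * (P (z - ℓ • h) - P (y - ℓ • h)) := by
    unfold av
    rw [← integral_sub]
    · simp only [mul_sub]
    · have := bmp_smooth.continuous
      have := sP.continuous
      exact (Continuous.continuousOn (by fun_prop)).integrableOn_compact (isCompact_closedBall _ _)
    · have := bmp_smooth.continuous
      have := sP.continuous
      exact (Continuous.continuousOn (by fun_prop)).integrableOn_compact (isCompact_closedBall _ _)
  rw [h2, h1]
  have h3 : ∀ t ∈ Set.Icc (0:ℝ) 1, ‖∫ h in closedBall (0:E3) 1,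
      bmp h * fderiv ℝ P (y - ℓ • h + t • (z - ℓ • h - (y - ℓ • h))) (z - ℓ • h - (y - ℓ • h))‖
      ≤ 3 * s * ‖z - y‖ := by
    intro t ht
    have : (∫ h in closedBall (0:E3) 1,
      bmp h * fderiv ℝ P (y - ℓ • h + t • (z - ℓ • h - (y - ℓ • h))) (z - ℓ • h - (y - ℓ • h)))
      = ∑ i, (z - y) i * av bmp (pd3 i P) (y + t • (z - y)) ℓ := by
      unfold av
      simp only [← integral_const_mul]
      rw [← integral_finsetSum]
      · congr 1; funext h
        have e1 : z - ℓ • h - (y - ℓ • h) = z - y := by abel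
        have e2 : y - ℓ • h + t • (z - y) = y + t • (z - y) - ℓ • h := by abel
        rw [e1, e2, fderiv_eq_sum, Finset.mul_sum]
        refine Finset.sum_congr rfl fun i _ => ?_
        ring
      · intro i _
        have := bmp_smooth.continuous
        have := (sP.pd3 i).continuous
        exact (Continuous.continuousOn (by fun_prop)).integrableOn_compact (isCompact_closedBall _ _)
    rw [this]
    refine (norm_sum_le _ _).trans ?_
    have : ∀ i ∈ Finset.univ, ‖(z - y) i * av bmp (pd3 i P) (y + t • (z - y)) ℓ‖ ≤ ‖z - y‖ * s := by
      intro i _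
      rw [norm_mul]
      exact mul_le_mul (abs_coord_le _ i) (hs t ht i) (norm_nonneg _) (norm_nonneg _)
    refine (Finset.sum_le_sum this).trans (le_of_eq ?_)
    simp; ring
  have := intervalIntegral.norm_integral_le_of_norm_le_const (a := (0:ℝ)) (b := 1) (fun t ht => h3 t (by
    rw [Set.uIoc_of_le zero_le_one] at ht; exact ⟨ht.1.le, ht.2⟩))
  simpa using this

/-! ### The pressure estimate -/

/-- The spherical shell `a ≤ ‖x‖ < b`. -/
def Sh (a b : ℝ) : Set E3 := {x | a ≤ ‖x‖ ∧ ‖x‖ < b}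

theorem measurableSet_Sh (a b : ℝ) : MeasurableSet (Sh a b) :=
  (isClosed_le continuous_const continuous_norm).measurableSet.inter
    (isOpen_lt continuous_norm continuous_const).measurableSet

theorem exists_big {x : E3} {R : ℝ} (hR : 0 < R) (hx : 1.9 * R ≤ ‖x‖) :
    ∃ (i : Fin 3) (s : ℝ), (s = 1 ∨ s = -1) ∧ 1.09 * R ≤ s * x i := by
  have h1 : ‖x‖ ^ 2 = ∑ i, x i ^ 2 := EuclideanSpace.real_norm_sq_eq x
  have h2 : ∃ i, (1.09 * R) ^ 2 ≤ x i ^ 2 := by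
    by_contra! h
    rw [Fin.sum_univ_three] at h1
    nlinarith [h 0, h 1, h 2]
  obtain ⟨i, hi⟩ := h2
  have h3 := sq_le_sq.1 hi
  rw [abs_of_pos (by positivity)] at h3
  rcases le_total 0 (x i) with h | h
  · exact ⟨i, 1, Or.inl rfl, by rw [abs_of_nonneg h] at h3; linarith⟩
  · exact ⟨i, -1, Or.inr rfl, by rw [abs_of_nonpos h] at h3; linarith⟩

/-- Oscillation over a shell, by chaining through the convex caps `{± x_i ≥ 1.09 R}`. -/
theorem osc_shell {f : E3 → ℝ} {L R σ : ℝ} (hR : 0 < R) (hσ : 1.9 * R ≤ σ) (hσ2 : σ ≤ 2 * R)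
    (hL : 0 ≤ L)
    (hseg : ∀ y z : E3, (∀ t ∈ Set.Icc (0:ℝ) 1, 1.09 * R ≤ ‖y + t • (z - y)‖ ∧ ‖y + t • (z - y)‖ < σ) →
      |f z - f y| ≤ L * ‖z - y‖)
    {x y : E3} (hx : 1.9 * R ≤ ‖x‖) (hx' : ‖x‖ < σ) (hy : 1.9 * R ≤ ‖y‖) (hy' : ‖y‖ < σ) :
    |f x - f y| ≤ 12 * R * L := by
  have cap : ∀ (i : Fin 3) (s : ℝ), (s = 1 ∨ s = -1) → ∀ y z : E3, ‖y‖ < σ → ‖z‖ < σ →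
      1.09 * R ≤ s * y i → 1.09 * R ≤ s * z i → |f z - f y| ≤ 4 * R * L := by
    intro i s hs y z hy hz hyi hzi
    have h1 : ‖z - y‖ ≤ 4 * R := (norm_sub_le _ _).trans (by linarith)
    refine (hseg y z fun t ht => ⟨?_, ?_⟩).trans (by nlinarith)
    · have h2 := abs_coord_le (y + t • (z - y)) i
      have h3 : s * (y + t • (z - y)) i = (1 - t) * (s * y i) + t * (s * z i) := by
        simp; ring
      have h4 : s * (y + t • (z - y)) i ≤ |(y + t • (z - y)) i| := by
        rcases hs with rfl | rfl
        · rw [one_mul]; exact le_abs_self _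
        · rw [neg_one_mul]; exact neg_le_abs _
      have : 1.09 * R ≤ s * (y + t • (z - y)) i := by
        rw [h3]; nlinarith [ht.1, ht.2]
      linarith
    · have hc := (convex_ball (0:E3) σ).add_smul_sub_mem (by simpa using hy) (by simpa using hz) ht
      simpa using hc
  have mid : ∀ (i k : Fin 3) (s : ℝ), k ≠ i → (s = 1 ∨ s = -1) → ∃ w : E3, ‖w‖ < σ ∧
      1.09 * R ≤ s * w i ∧ 1.09 * R ≤ 1 * w k := by
    intro i k s hik hs
    have hs2 : s ^ 2 = 1 := by rcases hs with rfl | rfl <;> norm_num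
    refine ⟨EuclideanSpace.single i (1.09 * R * s) + EuclideanSpace.single k (1.09 * R), ?_, ?_, ?_⟩
    · have h0 : inner ℝ (EuclideanSpace.single i (1.09 * R * s) : E3)
          (EuclideanSpace.single k (1.09 * R)) = 0 := by
        simp [EuclideanSpace.inner_single_left, hik.symm]
      have h1 := norm_add_sq_real (EuclideanSpace.single i (1.09 * R * s) : E3)
        (EuclideanSpace.single k (1.09 * R))
      rw [h0, PiLp.norm_single, PiLp.norm_single, Real.norm_eq_abs, Real.norm_eq_abs, sq_abs,
        sq_abs, mul_pow, hs2] at h1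
      refine lt_of_pow_lt_pow_left₀ 2 (by linarith) ?_
      rw [h1]; nlinarith
    · simp [hik.symm]; nlinarith
    · simp [hik]
  obtain ⟨i, s, hs, hi⟩ := exists_big hR hx
  obtain ⟨j, t, ht, hj⟩ := exists_big hR hy
  have : ∀ i j : Fin 3, ∃ k, k ≠ i ∧ k ≠ j := by decide
  obtain ⟨k, hki, hkj⟩ := this i j
  obtain ⟨w1, a1, b1, c1⟩ := mid i k s hki hs
  obtain ⟨w2, a2, b2, c2⟩ := mid j k t hkj ht
  have d1 := cap i s hs w1 x a1 hx' b1 hi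
  have d2 := cap k 1 (Or.inl rfl) w2 w1 a2 a1 c2 c1
  have d3 := cap j t ht y w2 hy' a2 hj b2
  rw [abs_le] at *
  constructor <;> linarith [d1.1, d1.2, d2.1, d2.2, d3.1, d3.2]

/-- Pressure estimate against a mean-zero function supported in a thin shell. -/
theorem pressure_est (p b1 b2 : ℝ) (hp : 3 / 2 < p) (hp3 : p < 3) (hb1 : 2 ≤ b1)
    (hab1 : 1 / 3 - 1 / (2 * p) < 1 / b1 - 1 / 6) (hb2 : 2 ≤ b2)
    (hab2 : 1 / 3 - 1 / (2 * p) < 1 / b2 - 1 / 6) :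
    ∃ C > 0, ∀ (P G : E3 → ℝ) (U : Fin 3 → E3 → ℝ) (T1 T2 : Fin 3 → Fin 3 → E3 → ℝ)
    (R ρ ℓ g g1 n1 f1 n2 f2 hh : ℝ), Sm P → (∀ i, Sm (U i)) → (∀ i j, Sm (T1 i j)) →
    (∀ i j, Sm (T2 i j)) → (∀ x, ∑ j, pd3 j (U j) x = 0) →
    (∀ i x, pd3 i P x = lap3 (U i) x - ∑ j, pd3 j (T1 i j) x - ∑ j, pd3 j (T2 i j) x) →
    Continuous G → ∫ x, G x = 0 → 0 < R → 0 < ℓ → 1.9 * R ≤ ρ → ℓ ≤ R / 80 → ρ + 8 * ℓ ≤ 2 * R →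
    (∀ x, G x ≠ 0 → x ∈ Sh ρ (ρ + 5 * ℓ)) → NB G p (Sh ρ (ρ + 5 * ℓ)) g →
    NB G 1 (Sh ρ (ρ + 5 * ℓ)) g1 →
    (∀ i j, NB (pd3 j (T1 i j)) (3 / 2) (Sh (1.05 * R) (ρ + 6 * ℓ)) n1) →
    (∀ i j, NB (T1 i j) (b1 / 2) (Sh (1.05 * R) (ρ + 6 * ℓ)) f1) →
    (∀ i j, NB (pd3 j (T2 i j)) (3 / 2) (Sh (1.05 * R) (ρ + 6 * ℓ)) n2) →
    (∀ i j, NB (T2 i j) (b2 / 2) (Sh (1.05 * R) (ρ + 6 * ℓ)) f2) →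
    (∀ i j, NB (fun x => pd3 j (U i) x - T1 i j x - T2 i j x) 1 (Sh (1.05 * R) (ρ + 6 * ℓ)) hh) →
    |∫ x, G x * P x| ≤ C * (g * n1 ^ (1 - aexp p b1) * f1 ^ aexp p b1 +
      g * n2 ^ (1 - aexp p b2) * f2 ^ aexp p b2 + g1 * (R * (ℓ⁻¹ * (ℓ ^ (-3:ℝ) * hh)))) := by
  obtain ⟨C1, hC1, H1⟩ := near_far p b1 hp hp3 hb1 hab1
  obtain ⟨C2, hC2, H2⟩ := near_far p b2 hp hp3 hb2 hab2
  obtain ⟨c, hc, hb, hb', -, -⟩ := exists_bmp_bound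
  set M := ∫ h, bmp h with hM
  have M0 : 0 < M := bmp_integral_pos
  refine ⟨M⁻¹ * (9 * C1 + 9 * C2 + 108 * c), by positivity, ?_⟩
  intro P G U T1 T2 R ρ ℓ g g1 n1 f1 n2 f2 hh sP sU sT1 sT2 hdiv hP cG hG0 hR hℓ hρ hℓR hρ2 hGs hGp hG1
    hn1 hf1 hn2 hf2 hhh
  set A1 := Sh ρ (ρ + 5 * ℓ) with hA1
  set A2 := Sh (1.05 * R) (ρ + 6 * ℓ) with hA2
  have mA1 : MeasurableSet A1 := measurableSet_Sh _ _
  have mA2 : MeasurableSet A2 := measurableSet_Sh _ _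
  have hh0 := (hhh 0 0).1
  have hg0 := hGp.1
  have hg10 := hG1.1
  have hn10 := (hn1 0 0).1
  have hn20 := (hn2 0 0).1
  have hf10 := (hf1 0 0).1
  have hf20 := (hf2 0 0).1
  have hball : ∀ x : E3, 1.09 * R ≤ ‖x‖ → ‖x‖ < ρ + 5 * ℓ → closedBall x ℓ ⊆ A2 := by
    intro x h1 h2 y hy
    rw [mem_closedBall, dist_eq_norm] at hy
    have e1 : ‖y‖ ≤ ‖x‖ + ‖y - x‖ := by
      have := norm_add_le x (y - x); simpa using this
    have e2 : ‖x‖ ≤ ‖y‖ + ‖y - x‖ := by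
      have := norm_sub_le y (y - x); simpa using this
    exact ⟨by linarith, by linarith⟩
  have hA12 : ∀ x ∈ A1, closedBall x ℓ ⊆ A2 := fun x hx => hball x (by linarith [hx.1]) hx.2
  have cker := fun i => (kerI_smooth i).continuous
  -- the mollified pressure has small oscillation
  set Pm : E3 → ℝ := fun x => av bmp P x ℓ with hPm
  set s := 3 * (ℓ⁻¹ * (c * (ℓ ^ (-3:ℝ) * hh))) with hs
  have s0 : 0 ≤ s := by positivity
  have hS : ∀ z : E3, closedBall z ℓ ⊆ A2 → ∀ i, |av bmp (pd3 i P) z ℓ| ≤ s := by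
    intro z hz i
    have sF : ∀ j, Sm (fun x => pd3 j (U i) x - T1 i j x - T2 i j x) := fun j =>
      (((sU i).pd3 j).sub (sT1 i j)).sub (sT2 i j)
    have e1 : pd3 i P = fun y => ∑ j, pd3 j (fun x => pd3 j (U i) x - T1 i j x - T2 i j x) y := by
      funext y
      rw [hP]; unfold lap3
      rw [← Finset.sum_sub_distrib, ← Finset.sum_sub_distrib]
      refine Finset.sum_congr rfl fun j _ => ?_
      rw [pd3_sub (((sU i).pd3 j).sub (sT1 i j)) (sT2 i j), pd3_sub ((sU i).pd3 j) (sT1 i j)]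
    rw [e1, av_sum _ bmp_smooth.continuous fun j _ => ((sF j).pd3 j).continuous]
    refine (Finset.abs_sum_le_sum_abs _ _).trans ?_
    have : ∀ j ∈ Finset.univ, |av bmp (pd3 j (fun x => pd3 j (U i) x - T1 i j x - T2 i j x)) z ℓ| ≤
        ℓ⁻¹ * (c * (ℓ ^ (-3:ℝ) * hh)) := by
      intro j _
      have e2 := av_ibp bmp_smooth (fun h => bmp_zero) (sF j) j z ℓ
      have e3 := av_L1 (hb' j) hc.le (sF j).continuous mA2 hℓ hz (hhh i j)
      rw [← e2, abs_mul, abs_of_pos hℓ] at e3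
      rw [le_inv_mul_iff₀ hℓ]; exact e3
    refine (Finset.sum_le_sum this).trans (le_of_eq ?_)
    simp [hs]
  have hosc : ∀ x ∈ A1, ∀ y ∈ A1, |Pm x - Pm y| ≤ 12 * R * (3 * s) := by
    intro x hx y hy
    refine osc_shell (f := Pm) (σ := ρ + 5 * ℓ) hR (by linarith) (by linarith) (by positivity) ?_
      (by linarith [hx.1]) hx.2 (by linarith [hy.1]) hy.2
    intro y z hyz
    refine av_seg sP fun t ht i => hS _ (hball _ (hyz t ht).1 (hyz t ht).2) i
  set x0 : E3 := EuclideanSpace.single 0 ρ with hx0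
  have hx0' : x0 ∈ A1 := by
    have : ‖x0‖ = ρ := by
      rw [hx0, PiLp.norm_single, Real.norm_eq_abs, abs_of_pos (by linarith)]
    exact ⟨this.ge, by rw [this]; linarith⟩
  set k := Pm x0 with hk
  set Q1 : Fin 3 → Fin 3 → E3 → ℝ := fun i j x => ∫ δ in (0:ℝ)..ℓ, av (kerI i) (pd3 j (T1 i j)) x δ with hQ1
  set Q2 : Fin 3 → Fin 3 → E3 → ℝ := fun i j x => ∫ δ in (0:ℝ)..ℓ, av (kerI i) (pd3 j (T2 i j)) x δ with hQ2
  have cav : ∀ (φ f : E3 → ℝ), Continuous φ → Continuous f → ∀ x, Continuous fun δ => av φ f x δ :=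
    fun φ f h1 h2 x => (av_cont h1 h2).comp (Continuous.prodMk_right x)
  have cQ : ∀ (φ f : E3 → ℝ), Continuous φ → Continuous f →
      Continuous fun x => ∫ δ in (0:ℝ)..ℓ, av φ f x δ := fun φ f h1 h2 =>
    intervalIntegral.continuous_parametric_intervalIntegral_of_continuous' (av_cont h1 h2) _ _
  have cQ1 : ∀ i j, Continuous (Q1 i j) := fun i j => cQ _ _ (cker i) ((sT1 i j).pd3 j).continuous
  have cQ2 : ∀ i j, Continuous (Q2 i j) := fun i j => cQ _ _ (cker i) ((sT2 i j).pd3 j).continuous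
  have rep : ∀ x, M * P x = Pm x - ∑ i, ∑ j, Q1 i j x - ∑ i, ∑ j, Q2 i j x := by
    intro x
    have h1 := av_bmp_diff sP x (ℓ := ℓ)
    have h2 : ∀ δ, ∑ i, av (kerI i) (pd3 i P) x δ =
        -(∑ i, ∑ j, av (kerI i) (pd3 j (T1 i j)) x δ) - ∑ i, ∑ j, av (kerI i) (pd3 j (T2 i j)) x δ := by
      intro δ
      have h3 : ∀ i, av (kerI i) (pd3 i P) x δ = av (kerI i) (lap3 (U i)) x δ -
          ∑ j, av (kerI i) (pd3 j (T1 i j)) x δ - ∑ j, av (kerI i) (pd3 j (T2 i j)) x δ := by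
        intro i
        have c1 : Continuous (lap3 (U i)) := by
          unfold lap3
          exact continuous_finsetSum _ fun j _ => (((sU i).pd3 j).pd3 j).continuous
        have c2 : ∀ j ∈ Finset.univ, Continuous (pd3 j (T1 i j)) := fun j _ => ((sT1 i j).pd3 j).continuous
        have c3 : ∀ j ∈ Finset.univ, Continuous (pd3 j (T2 i j)) := fun j _ => ((sT2 i j).pd3 j).continuous
        rw [show pd3 i P = fun y => lap3 (U i) y - ∑ j, pd3 j (T1 i j) y - ∑ j, pd3 j (T2 i j) y from
          funext (hP i), av_sub (cker i) (f := fun y => lap3 (U i) y - ∑ j, pd3 j (T1 i j) y)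
            (c1.sub (continuous_finsetSum _ c2)) (continuous_finsetSum _ c3),
          av_sub (cker i) c1 (continuous_finsetSum _ c2), av_sum _ (cker i) c2, av_sum _ (cker i) c3]
      simp only [h3, Finset.sum_sub_distrib, av_lap_zero sU hdiv x δ]
      ring
    have i1 : ∀ i j, IntervalIntegrable (fun δ => av (kerI i) (pd3 j (T1 i j)) x δ) volume 0 ℓ :=
      fun i j => (cav _ _ (cker i) ((sT1 i j).pd3 j).continuous x).intervalIntegrable _ _
    have i2 : ∀ i j, IntervalIntegrable (fun δ => av (kerI i) (pd3 j (T2 i j)) x δ) volume 0 ℓ :=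
      fun i j => (cav _ _ (cker i) ((sT2 i j).pd3 j).continuous x).intervalIntegrable _ _
    have i1' : ∀ i, IntervalIntegrable (fun δ => ∑ j, av (kerI i) (pd3 j (T1 i j)) x δ) volume 0 ℓ :=
      fun i => (continuous_finsetSum _ fun j _ => cav _ _ (cker i) ((sT1 i j).pd3 j).continuous x).intervalIntegrable _ _
    have i2' : ∀ i, IntervalIntegrable (fun δ => ∑ j, av (kerI i) (pd3 j (T2 i j)) x δ) volume 0 ℓ :=
      fun i => (continuous_finsetSum _ fun j _ => cav _ _ (cker i) ((sT2 i j).pd3 j).continuous x).intervalIntegrable _ _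
    simp only [h2] at h1
    rw [intervalIntegral.integral_sub, intervalIntegral.integral_neg,
      intervalIntegral.integral_finsetSum (fun i _ => i1' i),
      intervalIntegral.integral_finsetSum (fun i _ => i2' i)] at h1
    · have j1 : ∀ i, ∫ δ in (0:ℝ)..ℓ, ∑ j, av (kerI i) (pd3 j (T1 i j)) x δ = ∑ j, Q1 i j x := fun i =>
        intervalIntegral.integral_finsetSum (fun j _ => i1 i j)
      have j2 : ∀ i, ∫ δ in (0:ℝ)..ℓ, ∑ j, av (kerI i) (pd3 j (T2 i j)) x δ = ∑ j, Q2 i j x := fun i =>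
        intervalIntegral.integral_finsetSum (fun j _ => i2 i j)
      simp only [j1, j2] at h1
      simp only [hPm]; linarith
    · exact (continuous_finsetSum _ fun i _ => continuous_finsetSum _ fun j _ =>
        cav _ _ (cker i) ((sT1 i j).pd3 j).continuous x).neg.intervalIntegrable _ _
    · exact (continuous_finsetSum _ fun i _ => continuous_finsetSum _ fun j _ =>
        cav _ _ (cker i) ((sT2 i j).pd3 j).continuous x).intervalIntegrable _ _
  have suppG : HasCompactSupport G := HasCompactSupport.intro (isCompact_closedBall (0:E3) (ρ + 5 * ℓ))
    fun x hx => by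
      by_contra h
      have := (hGs x h).2
      simp at hx; linarith
  have e1 : M * ∫ x, G x * P x = ∫ x, G x * (M * P x - k) := by
    have i1 : Integrable (fun x => G x * P x) :=
      (cG.mul sP.continuous).integrable_of_hasCompactSupport suppG.mul_right
    have i2 : Integrable G := cG.integrable_of_hasCompactSupport suppG
    rw [show (fun x => G x * (M * P x - k)) = fun x => M * (G x * P x) - k * G x from by
      funext x; ring, integral_sub (i1.const_mul _) (i2.const_mul _), integral_const_mul,
      integral_const_mul, hG0]
    ring
  have mG : Measurable fun x => ‖G x‖ₑ := cG.enorm.measurable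
  have bound : ‖∫ x, G x * (M * P x - k)‖ₑ ≤ ENNReal.ofReal (g1 * (12 * R * (3 * s))) +
      9 * ENNReal.ofReal (C1 * g * n1 ^ (1 - aexp p b1) * f1 ^ aexp p b1) +
      9 * ENNReal.ofReal (C2 * g * n2 ^ (1 - aexp p b2) * f2 ^ aexp p b2) := by
    calc ‖∫ x, G x * (M * P x - k)‖ₑ ≤ ∫⁻ x, ‖G x * (M * P x - k)‖ₑ := enorm_integral_le_lintegral_enorm _
      _ ≤ ∫⁻ x, (‖G x‖ₑ * ENNReal.ofReal (12 * R * (3 * s)) + ∑ i, ∑ j, ‖G x‖ₑ * ‖Q1 i j x‖ₑ +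
          ∑ i, ∑ j, ‖G x‖ₑ * ‖Q2 i j x‖ₑ) := by
          refine lintegral_mono fun x => ?_
          rw [enorm_mul]
          rcases eq_or_ne (G x) 0 with h0 | h0
          · simp [h0]
          simp only [← Finset.mul_sum, ← mul_add]
          refine mul_le_mul' le_rfl ?_
          rw [rep, show Pm x - ∑ i, ∑ j, Q1 i j x - ∑ i, ∑ j, Q2 i j x - k =
            (Pm x - k) + -(∑ i, ∑ j, Q1 i j x) + -(∑ i, ∑ j, Q2 i j x) by ring]
          refine (enorm_add_le _ _).trans (add_le_add ((enorm_add_le _ _).trans (add_le_add ?_ ?_)) ?_)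
          · rw [← ofReal_norm]
            exact ENNReal.ofReal_le_ofReal (hosc x (hGs x h0) x0 hx0')
          · rw [enorm_neg]
            exact (enorm_sum_le _ _).trans (Finset.sum_le_sum fun i _ => enorm_sum_le _ _)
          · rw [enorm_neg]
            exact (enorm_sum_le _ _).trans (Finset.sum_le_sum fun i _ => enorm_sum_le _ _)
      _ = (∫⁻ x, ‖G x‖ₑ * ENNReal.ofReal (12 * R * (3 * s))) + (∑ i, ∑ j, ∫⁻ x, ‖G x‖ₑ * ‖Q1 i j x‖ₑ) +
          ∑ i, ∑ j, ∫⁻ x, ‖G x‖ₑ * ‖Q2 i j x‖ₑ := by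
          have m1 : ∀ i j, Measurable fun x => ‖G x‖ₑ * ‖Q1 i j x‖ₑ := fun i j =>
            mG.mul (cQ1 i j).enorm.measurable
          have m2 : ∀ i j, Measurable fun x => ‖G x‖ₑ * ‖Q2 i j x‖ₑ := fun i j =>
            mG.mul (cQ2 i j).enorm.measurable
          rw [lintegral_add_right _ (Finset.measurable_fun_sum _ fun i _ => Finset.measurable_fun_sum _ fun j _ => m2 i j),
            lintegral_add_right _ (Finset.measurable_fun_sum _ fun i _ => Finset.measurable_fun_sum _ fun j _ => m1 i j),
            lintegral_finsetSum _ (fun i _ => Finset.measurable_fun_sum _ fun j _ => m1 i j),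
            lintegral_finsetSum _ (fun i _ => Finset.measurable_fun_sum _ fun j _ => m2 i j)]
          congr 1
          · congr 1
            exact Finset.sum_congr rfl fun i _ => lintegral_finsetSum _ fun j _ => m1 i j
          · exact Finset.sum_congr rfl fun i _ => lintegral_finsetSum _ fun j _ => m2 i j
      _ ≤ _ := by
          refine add_le_add (add_le_add ?_ ?_) ?_
          · rw [lintegral_mul_const' _ _ ENNReal.ofReal_ne_top, ENNReal.ofReal_mul hg10]
            refine mul_le_mul' ?_ le_rfl
            have := (nb_univ_of_supp (by norm_num) hG1 mA1 hGs).lintegral_le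
            rwa [Measure.restrict_univ] at this
          · have := Finset.sum_le_sum fun (i : Fin 3) (_ : i ∈ Finset.univ) =>
              Finset.sum_le_sum fun (j : Fin 3) (_ : j ∈ Finset.univ) =>
              H1 (T1 i j) G A1 A2 ℓ g n1 f1 i j (sT1 i j) cG mA1 mA2 hℓ hGs hA12 hGp (hn1 i j) (hf1 i j)
            refine this.trans (le_of_eq ?_)
            simp [← mul_assoc]; norm_num
          · have := Finset.sum_le_sum fun (i : Fin 3) (_ : i ∈ Finset.univ) =>
              Finset.sum_le_sum fun (j : Fin 3) (_ : j ∈ Finset.univ) =>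
              H2 (T2 i j) G A1 A2 ℓ g n2 f2 i j (sT2 i j) cG mA1 mA2 hℓ hGs hA12 hGp (hn2 i j) (hf2 i j)
            refine this.trans (le_of_eq ?_)
            simp [← mul_assoc]; norm_num
  have e9 : (9:ℝ≥0∞) = ENNReal.ofReal 9 := by norm_num
  rw [e9, ← ENNReal.ofReal_mul (by norm_num), ← ENNReal.ofReal_mul (by norm_num),
    ← ENNReal.ofReal_add (by positivity) (by positivity),
    ← ENNReal.ofReal_add (by positivity) (by positivity), ← ofReal_norm] at bound
  have bound2 := (ENNReal.ofReal_le_ofReal_iff (by positivity)).1 bound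
  rw [← e1, norm_mul, Real.norm_of_nonneg M0.le, Real.norm_eq_abs] at bound2
  rw [mul_assoc, le_inv_mul_iff₀ M0]
  refine bound2.trans ?_
  have x1 : 0 ≤ g * n1 ^ (1 - aexp p b1) * f1 ^ aexp p b1 := by positivity
  have x2 : 0 ≤ g * n2 ^ (1 - aexp p b2) * f2 ^ aexp p b2 := by positivity
  have x3 : 0 ≤ g1 * (R * (ℓ⁻¹ * (ℓ ^ (-3:ℝ) * hh))) := by positivity
  have x4 : g1 * (12 * R * (3 * s)) = 108 * c * (g1 * (R * (ℓ⁻¹ * (ℓ ^ (-3:ℝ) * hh)))) := by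
    rw [hs]; ring
  rw [x4]
  nlinarith [mul_nonneg hC1.le x1, mul_nonneg hC1.le x2, mul_nonneg hC1.le x3, mul_nonneg hC2.le x1,
    mul_nonneg hC2.le x2, mul_nonneg hC2.le x3, mul_nonneg hc.le x1, mul_nonneg hc.le x2,
    mul_nonneg hc.le x3]

/-! ### The energy identity -/

theorem NB.add {f g : E3 → ℝ} {t a b : ℝ} {A : Set E3} (hf : NB f t A a) (hg : NB g t A b)
    (cf : Continuous f) (cg : Continuous g) (ht : 1 ≤ t) : NB (fun x => f x + g x) t A (a + b) := by
  have t0 : 0 < t := by linarith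
  refine ⟨add_nonneg hf.1 hg.1, ?_⟩
  have h := ENNReal.lintegral_Lp_add_le (μ := volume.restrict A) (f := fun x => ‖f x‖ₑ)
    (g := fun x => ‖g x‖ₑ) cf.enorm.measurable.aemeasurable cg.enorm.measurable.aemeasurable ht
  have h1 : (∫⁻ x in A, ‖f x‖ₑ ^ t) ^ (1 / t) ≤ ENNReal.ofReal a := by
    rw [one_div, ENNReal.rpow_inv_le_iff t0]; exact hf.2
  have h2 : (∫⁻ x in A, ‖g x‖ₑ ^ t) ^ (1 / t) ≤ ENNReal.ofReal b := by
    rw [one_div, ENNReal.rpow_inv_le_iff t0]; exact hg.2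
  have h3 := h.trans (add_le_add h1 h2)
  rw [← ENNReal.ofReal_add hf.1 hg.1, one_div, ENNReal.rpow_inv_le_iff t0] at h3
  refine le_trans (lintegral_mono fun x => ?_) h3
  exact ENNReal.rpow_le_rpow (enorm_add_le _ _) t0.le

theorem NB.sum3 {f : Fin 3 → E3 → ℝ} {t a : ℝ} {A : Set E3} (hf : ∀ i, NB (f i) t A a)
    (cf : ∀ i, Continuous (f i)) (ht : 1 ≤ t) : NB (fun x => ∑ i, f i x) t A (3 * a) := by
  have h := (((hf 0).add (hf 1) (cf 0) (cf 1) ht).add (hf 2) ((cf 0).add (cf 1)) (cf 2) ht)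
  simp only [Fin.sum_univ_three]
  exact h.const_mono (by linarith) (by linarith)

theorem NB.mul_bdd {f g : E3 → ℝ} {t a k : ℝ} {A : Set E3} (hf : NB f t A a)
    (hk : 0 ≤ k) (hg : ∀ x, |g x| ≤ k) (ht : 0 < t) :
    NB (fun x => g x * f x) t A (k * a) := by
  refine ⟨mul_nonneg hk hf.1, ?_⟩
  rw [ENNReal.ofReal_mul hk, ENNReal.mul_rpow_of_nonneg _ _ ht.le]
  refine le_trans ?_ (mul_le_mul' le_rfl hf.2)
  rw [← lintegral_const_mul' _ _ (ENNReal.rpow_ne_top_of_nonneg ht.le ENNReal.ofReal_ne_top)]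
  refine lintegral_mono fun x => ?_
  rw [enorm_mul, ENNReal.mul_rpow_of_nonneg _ _ ht.le]
  refine mul_le_mul' (ENNReal.rpow_le_rpow ?_ ht.le) le_rfl
  rw [← ofReal_norm]; exact ENNReal.ofReal_le_ofReal (hg x)

theorem NB.abs_integral_le {f : E3 → ℝ} {a : ℝ} {A : Set E3} (hf : NB f 1 A a) (hA : MeasurableSet A)
    (hs : ∀ x, f x ≠ 0 → x ∈ A) : |∫ x, f x| ≤ a := by
  have h := (nb_univ_of_supp one_pos hf hA hs).lintegral_le
  rw [Measure.restrict_univ] at h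
  have h2 := (enorm_integral_le_lintegral_enorm f).trans h
  rw [← ofReal_norm] at h2
  exact (ENNReal.ofReal_le_ofReal_iff hf.1).1 h2

/-- The equations in components, with the second-order terms isolated and products expanded. -/
structure CSol (U V : Fin 3 → E3 → ℝ) (P Θ : E3 → ℝ) : Prop where
  sU : ∀ i, Sm (U i)
  sV : ∀ i, Sm (V i)
  sP : Sm P
  sΘ : Sm Θ
  eu : ∀ i x, lap3 (U i) x = (∑ j, U j x * pd3 j (U i) x) + pd3 i P x +
    ∑ j, (V j x * pd3 j (V i) x + V i x * pd3 j (V j) x)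
  ev : ∀ i x, lap3 (V i) x = (∑ j, U j x * pd3 j (V i) x) + pd3 i Θ x + ∑ j, V j x * pd3 j (U i) x
  eθ : ∀ x, lap3 Θ x = (∑ j, U j x * pd3 j Θ x) + ∑ j, pd3 j (V j) x
  dU : ∀ x, ∑ j, pd3 j (U j) x = 0

/-- The dissipation density `|∇U|² + |∇V|² + |∇Θ|²`. -/
def Ds (U V : Fin 3 → E3 → ℝ) (Θ : E3 → ℝ) (x : E3) : ℝ :=
  (∑ i, ∑ j, pd3 j (U i) x ^ 2) + (∑ i, ∑ j, pd3 j (V i) x ^ 2) + ∑ j, pd3 j Θ x ^ 2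

theorem sm_coord {u : E3 → E3} (hu : ContDiff ℝ (⊤ : ℕ∞) u) (i : Fin 3) : Sm (fun y => u y i) :=
  (contDiff_euclidean.1 hu) i

theorem CSol.of_sol {u v : E3 → E3} {pr θ : E3 → ℝ} (h : IsTCMSolution u pr v θ) (c : ℝ) :
    CSol (fun i y => u y i) (fun i y => v y i) pr (fun y => θ y - c) where
  sU := sm_coord h.smooth_u
  sV := sm_coord h.smooth_v
  sP := h.smooth_pr
  sΘ := ContDiff.sub h.smooth_θ contDiff_const
  eu := fun i x => by
    have := h.eq_u x i
    simp only [pd3_mul (sm_coord h.smooth_v _) (sm_coord h.smooth_v _)] at this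
    linarith
  ev := fun i x => by
    have := h.eq_v x i
    simp only [pd3_sub_const]; linarith
  eθ := fun x => by
    have := h.eq_θ x
    unfold lap3 at this ⊢
    simp only [pd3_sub_const]; linarith
  dU := h.div_u

/-- The energy flux without its pressure part. -/
def flux (U V : Fin 3 → E3 → ℝ) (Θ : E3 → ℝ) (j : Fin 3) (x : E3) : ℝ :=
  (∑ i, U i x * pd3 j (U i) x) + (∑ i, V i x * pd3 j (V i) x) + Θ x * pd3 j Θ x +
    (-1 / 2) * ((∑ i, U j x * (U i x * U i x)) + (∑ i, U j x * (V i x * V i x)) + U j x * (Θ x * Θ x)) +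
    (-1) * (∑ i, U i x * (V j x * V i x)) + (-1) * (Θ x * V j x)

theorem flux_smooth {U V : Fin 3 → E3 → ℝ} {P Θ : E3 → ℝ} (h : CSol U V P Θ) (j : Fin 3) :
    Sm (flux U V Θ j) := by
  have sU := h.sU
  have sV := h.sV
  have sΘ := h.sΘ
  have gU := fun i => (h.sU i).pd3 j
  have gV := fun i => (h.sV i).pd3 j
  have gΘ := h.sΘ.pd3 j
  unfold flux
  unfold Sm at *
  fun_prop

set_option maxHeartbeats 1000000 in
/-- The dissipation density is the divergence of the energy flux. The terms `v·∇θ + θ div v` and the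
quadratic couplings of `u` and `v` combine to divergences. -/
theorem energy_pointwise {U V : Fin 3 → E3 → ℝ} {P Θ : E3 → ℝ} (h : CSol U V P Θ) (x : E3) :
    Ds U V Θ x = ∑ j, pd3 j (fun y => flux U V Θ j y - U j y * P y) x := by
  have sU := h.sU
  have sV := h.sV
  have sΘ := h.sΘ
  have sP := h.sP
  have gU := fun i j => (h.sU i).pd3 j
  have gV := fun i j => (h.sV i).pd3 j
  have gΘ := fun j => h.sΘ.pd3 j
  have sf := flux_smooth h
  have e1 : ∀ j, pd3 j (fun y => flux U V Θ j y - U j y * P y) x =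
      pd3 j (flux U V Θ j) x - (U j x * pd3 j P x + P x * pd3 j (U j) x) := by
    intro j
    rw [pd3_sub (sf j) ((sU j).mul sP), pd3_mul (sU j) sP]
  have e2 : ∀ j, pd3 j (flux U V Θ j) x =
      (∑ i, (U i x * pd3 j (pd3 j (U i)) x + pd3 j (U i) x * pd3 j (U i) x)) +
      (∑ i, (V i x * pd3 j (pd3 j (V i)) x + pd3 j (V i) x * pd3 j (V i) x)) +
      (Θ x * pd3 j (pd3 j Θ) x + pd3 j Θ x * pd3 j Θ x) +
      (-1 / 2) * ((∑ i, (U j x * (U i x * pd3 j (U i) x + U i x * pd3 j (U i) x) +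
          (U i x * U i x) * pd3 j (U j) x)) +
        (∑ i, (U j x * (V i x * pd3 j (V i) x + V i x * pd3 j (V i) x) +
          (V i x * V i x) * pd3 j (U j) x)) +
        (U j x * (Θ x * pd3 j Θ x + Θ x * pd3 j Θ x) + (Θ x * Θ x) * pd3 j (U j) x)) +
      (-1) * (∑ i, (U i x * (V j x * pd3 j (V i) x + V i x * pd3 j (V j) x) +
        (V j x * V i x) * pd3 j (U i) x)) +
      (-1) * (Θ x * pd3 j (V j) x + V j x * pd3 j Θ x) := by
    intro j
    have hfl : flux U V Θ j = fun x => (∑ i, U i x * pd3 j (U i) x) + (∑ i, V i x * pd3 j (V i) x) +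
      Θ x * pd3 j Θ x + (-1 / 2) * ((∑ i, U j x * (U i x * U i x)) +
        (∑ i, U j x * (V i x * V i x)) + U j x * (Θ x * Θ x)) +
      (-1) * (∑ i, U i x * (V j x * V i x)) + (-1) * (Θ x * V j x) := rfl
    have gU' := fun i => gU i j
    have gV' := fun i => gV i j
    have gΘ' := gΘ j
    clear gU gV gΘ sf e1
    rw [hfl]
    rw [pd3_add, pd3_add, pd3_add, pd3_add, pd3_add, pd3_const_mul, pd3_const_mul, pd3_const_mul,
      pd3_add, pd3_add, pd3_sum, pd3_sum, pd3_sum, pd3_sum, pd3_sum, pd3_mul sΘ gΘ',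
      pd3_mul sΘ (sV j), pd3_mul (sU j) (sΘ.mul sΘ), pd3_mul sΘ sΘ]
    · simp only [fun i => pd3_mul (sU i) (gU' i) j x, fun i => pd3_mul (sV i) (gV' i) j x,
        fun i => pd3_mul (sU j) ((sU i).mul (sU i)) j x, fun i => pd3_mul (sU i) (sU i) j x,
        fun i => pd3_mul (sU j) ((sV i).mul (sV i)) j x, fun i => pd3_mul (sV i) (sV i) j x,
        fun i => pd3_mul (sU i) ((sV j).mul (sV i)) j x, fun i => pd3_mul (sV j) (sV i) j x]
    all_goals
      unfold Sm at *
      fun_prop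
  simp only [e1, e2]
  have hu := fun i => h.eu i x
  have hv := fun i => h.ev i x
  have ht := h.eθ x
  have hd := h.dU x
  unfold Ds
  unfold lap3 at hu hv ht
  simp only [Fin.sum_univ_three] at *
  have hd' : pd3 2 (U 2) x = - pd3 0 (U 0) x - pd3 1 (U 1) x := by linarith
  linear_combination (-U 0 x) * hu 0 + (-U 1 x) * hu 1 + (-U 2 x) * hu 2 + (-V 0 x) * hv 0 +
    (-V 1 x) * hv 1 + (-V 2 x) * hv 2 - Θ x * ht + ((1 / 2) * (U 0 x ^ 2 + U 1 x ^ 2 + U 2 x ^ 2 +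
      V 0 x ^ 2 + V 1 x ^ 2 + V 2 x ^ 2 + Θ x ^ 2) + P x) * hd

/-- The energy balance tested against a cutoff `η`. -/
theorem energy_identity {U V : Fin 3 → E3 → ℝ} {P Θ : E3 → ℝ} (h : CSol U V P Θ) {η : E3 → ℝ}
    (sη : Sm η) (cη : HasCompactSupport η) :
    ∫ x, η x * Ds U V Θ x = -(∑ j, ∫ x, pd3 j η x * flux U V Θ j x) +
      ∫ x, (∑ j, pd3 j η x * U j x) * P x := by
  have sf : ∀ j, Sm (fun y => flux U V Θ j y - U j y * P y) := fun j =>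
    (flux_smooth h j).sub ((h.sU j).mul h.sP)
  have i0 : ∀ (j : Fin 3) (g : E3 → ℝ), Continuous g → Integrable (fun x => pd3 j η x * g x) :=
    fun j g cg => ((sη.pd3 j).continuous.mul cg).integrable_of_hasCompactSupport
      (hasCompactSupport_pd3 cη j).mul_right
  have e1 : ∫ x, η x * Ds U V Θ x =
      ∑ j, ∫ x, pd3 j (fun y => flux U V Θ j y - U j y * P y) x * η x := by
    rw [← integral_finsetSum]
    · congr 1; funext x
      rw [energy_pointwise h x, ← Finset.sum_mul, mul_comm]
    · intro j _
      exact (((sf j).pd3 j).continuous.mul sη.continuous).integrable_of_hasCompactSupport cη.mul_left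
  have e2 : ∀ j, ∫ x, pd3 j (fun y => flux U V Θ j y - U j y * P y) x * η x =
      -(∫ x, pd3 j η x * flux U V Θ j x) + ∫ x, pd3 j η x * (U j x * P x) := by
    intro j
    have := ibp (sf j) sη cη j
    have e3 : ∫ x, (flux U V Θ j x - U j x * P x) * pd3 j η x =
      (∫ x, pd3 j η x * flux U V Θ j x) - ∫ x, pd3 j η x * (U j x * P x) := by
      rw [← integral_sub (i0 j _ (flux_smooth h j).continuous)
        (i0 j (fun x => U j x * P x) ((h.sU j).continuous.mul h.sP.continuous))]
      congr 1; funext x; ring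
    rw [e3] at this; linarith
  rw [e1]
  simp only [e2, Finset.sum_add_distrib, Finset.sum_neg_distrib]
  congr 1
  rw [← integral_finsetSum _ fun j _ => i0 j (fun x => U j x * P x) ((h.sU j).continuous.mul h.sP.continuous)]
  congr 1; funext x
  rw [Finset.sum_mul]
  exact Finset.sum_congr rfl fun j _ => by ring

/-- The weight of the pressure in the energy identity has mean zero, as `u` is solenoidal. -/
theorem flux_G_zero {U V : Fin 3 → E3 → ℝ} {P Θ : E3 → ℝ} (h : CSol U V P Θ) {η : E3 → ℝ}
    (sη : Sm η) (cη : HasCompactSupport η) : ∫ x, (∑ j, pd3 j η x * U j x) = 0 := by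
  rw [integral_finsetSum]
  · have : ∀ j, ∫ x, pd3 j η x * U j x = -∫ x, pd3 j (U j) x * η x := by
      intro j
      rw [← ibp (h.sU j) sη cη j]; congr 1; funext x; ring
    simp only [this, Finset.sum_neg_distrib]
    rw [← integral_finsetSum]
    · simp only [← Finset.sum_mul, h.dU]; simp
    · intro j _
      exact (((h.sU j).pd3 j).continuous.mul sη.continuous).integrable_of_hasCompactSupport cη.mul_left
  · intro j _
    exact ((sη.pd3 j).continuous.mul (h.sU j).continuous).integrable_of_hasCompactSupport
      (hasCompactSupport_pd3 cη j).mul_right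

theorem Ds_nonneg (U V : Fin 3 → E3 → ℝ) (Θ : E3 → ℝ) (x : E3) : 0 ≤ Ds U V Θ x := by
  unfold Ds; positivity

theorem CSol.pressure {U V : Fin 3 → E3 → ℝ} {P Θ : E3 → ℝ} (h : CSol U V P Θ) (i : Fin 3) (x : E3) :
    pd3 i P x = lap3 (U i) x - ∑ j, pd3 j (fun y => U i y * U j y) x -
      ∑ j, pd3 j (fun y => V i y * V j y) x := by
  simp only [pd3_mul (h.sU _) (h.sU _), pd3_mul (h.sV _) (h.sV _)]
  have hd := h.dU x
  rw [h.eu]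
  simp only [Fin.sum_univ_three] at hd ⊢
  linear_combination U i x * hd

/-! ### The local energy estimate -/

/-- The square of the interpolated `L^{2p'}` bound `x^a N^{1-a}`, `a = aexp p b`, of a function
bounded by `x` in `L^b` and by `N` in `L^6`. -/
def Qe (p b N x : ℝ) : ℝ := (x * x) ^ aexp p b * (N * N) ^ (1 - aexp p b)

theorem aexp_bounds {p b : ℝ} (hp : 3 / 2 < p) (hab : 1 / 3 - 1 / (2 * p) < 1 / b - 1 / 6) :
    0 < aexp p b ∧ aexp p b < 1 := by
  have h1 : 1 / (2 * p) < 1 / 3 := one_div_lt_one_div_of_lt (by norm_num) (by linarith)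
  unfold aexp
  exact ⟨div_pos (by linarith) (by linarith), (div_lt_one (by linarith)).2 hab⟩

theorem Qe_nonneg (p b N x : ℝ) : 0 ≤ Qe p b N x :=
  mul_nonneg (Real.rpow_nonneg (mul_self_nonneg _) _) (Real.rpow_nonneg (mul_self_nonneg _) _)

/-- Hölder's inequality with exponents `p`, `2p'`, `2p'`; the `L^{2p'}` norms are interpolated
between `L^b` and `L⁶`. -/
theorem nb_triple {p b : ℝ} (hp : 3 / 2 < p) (hb : 2 ≤ b)
    (hab : 1 / 3 - 1 / (2 * p) < 1 / b - 1 / 6) {x y z : E3 → ℝ} {A : Set E3} {up wb N : ℝ}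
    (hx : NB x p A up) (hy : NB y b A wb) (hy6 : NB y 6 A N) (hz : NB z b A wb) (hz6 : NB z 6 A N)
    (cx : Continuous x) (cy : Continuous y) (cz : Continuous z) :
    NB (fun s => x s * (y s * z s)) 1 A (up * Qe p b N wb) := by
  obtain ⟨a0, a1⟩ := aexp_bounds hp hab
  have p0 : 0 < p := by linarith
  have p1 : 0 < p - 1 := by linarith
  have b0 : 0 < b := by linarith
  have hd : 0 < 1 / b - 1 / 6 := by
    have h1 : 1 / (2 * p) < 1 / 3 := one_div_lt_one_div_of_lt (by norm_num) (by linarith)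
    linarith
  have hH : 1 / (2 * (p / (p - 1))) = aexp p b / b + (1 - aexp p b) / 6 := by
    have e : aexp p b / b + (1 - aexp p b) / 6 = aexp p b * (1 / b - 1 / 6) + 1 / 6 := by ring
    rw [e]; unfold aexp; rw [div_mul_cancel₀ _ hd.ne']
    field_simp; ring
  have i1 := NB.interp hy hy6 cy (t := 2 * (p / (p - 1))) (by positivity) b0 (by norm_num) a0.le
    a1.le hH
  have i2 := NB.interp hz hz6 cz (t := 2 * (p / (p - 1))) (by positivity) b0 (by norm_num) a0.le
    a1.le hH
  have i3 := NB.mul i1 i2 cy cz (t := p / (p - 1)) (by positivity) (by positivity) (by positivity)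
    (by field_simp; norm_num)
  have i4 := NB.mul hx i3 cx (cy.mul cz) (t := 1) one_pos p0 (by positivity) (by field_simp; ring)
  have e : Qe p b N wb = wb ^ aexp p b * N ^ (1 - aexp p b) * (wb ^ aexp p b * N ^ (1 - aexp p b)) := by
    unfold Qe
    rw [Real.mul_rpow hy.1 hy.1, Real.mul_rpow hy6.1 hy6.1]; ring
  rw [e]; exact i4

/-- The `L¹` norm of the energy flux: the contributions of the gradient terms, the convective terms
and the coupling term `v θ`. -/
theorem nb_flux {p b1 b2 b3 : ℝ} (hp : 3 / 2 < p) (hb1 : 2 ≤ b1)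
    (hab1 : 1 / 3 - 1 / (2 * p) < 1 / b1 - 1 / 6) (hb2 : 2 ≤ b2)
    (hab2 : 1 / 3 - 1 / (2 * p) < 1 / b2 - 1 / 6) (hb3 : 2 ≤ b3)
    (hab3 : 1 / 3 - 1 / (2 * p) < 1 / b3 - 1 / 6)
    {U V : Fin 3 → E3 → ℝ} {P Θ : E3 → ℝ} {A : Set E3} {N up ub vb tb u2 v2 t2 : ℝ}
    (h : CSol U V P Θ)
    (gU : ∀ i j, NB (pd3 j (U i)) 2 A N) (gV : ∀ i j, NB (pd3 j (V i)) 2 A N)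
    (gΘ : ∀ j, NB (pd3 j Θ) 2 A N)
    (U6 : ∀ i, NB (U i) 6 A N) (V6 : ∀ i, NB (V i) 6 A N) (Θ6 : NB Θ 6 A N)
    (Up : ∀ i, NB (U i) p A up) (Ub : ∀ i, NB (U i) b1 A ub) (Vb : ∀ i, NB (V i) b2 A vb)
    (Θb : NB Θ b3 A tb) (U2 : ∀ i, NB (U i) 2 A u2) (V2 : ∀ i, NB (V i) 2 A v2)
    (Θ2 : NB Θ 2 A t2) (j : Fin 3) :
    NB (flux U V Θ j) 1 A (6 * ((u2 + v2 + t2) * N + up * (Qe p b1 N ub + Qe p b2 N vb + Qe p b3 N tb)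
      + v2 * t2)) := by
  have cU := fun i => (h.sU i).continuous
  have cV := fun i => (h.sV i).continuous
  have cΘ := h.sΘ.continuous
  have dU := fun i j => ((h.sU i).pd3 j).continuous
  have dV := fun i j => ((h.sV i).pd3 j).continuous
  have dΘ := fun j => (h.sΘ.pd3 j).continuous
  have m2 : ∀ {f g : E3 → ℝ} {a c : ℝ}, NB f 2 A a → NB g 2 A c → Continuous f → Continuous g →
      NB (fun x => f x * g x) 1 A (a * c) := fun hf hg cf cg =>
    NB.mul hf hg cf cg one_pos two_pos two_pos (by norm_num)
  have k1 := NB.sum3 (fun i => m2 (U2 i) (gU i j) (cU i) (dU i j)) (fun i => (cU i).mul (dU i j)) le_rfl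
  have k2 := NB.sum3 (fun i => m2 (V2 i) (gV i j) (cV i) (dV i j)) (fun i => (cV i).mul (dV i j)) le_rfl
  have k3 := m2 Θ2 (gΘ j) cΘ (dΘ j)
  have k4 := NB.sum3 (fun i => nb_triple hp hb1 hab1 (Up j) (Ub i) (U6 i) (Ub i) (U6 i) (cU j) (cU i)
    (cU i)) (fun i => (cU j).mul ((cU i).mul (cU i))) le_rfl
  have k5 := NB.sum3 (fun i => nb_triple hp hb2 hab2 (Up j) (Vb i) (V6 i) (Vb i) (V6 i) (cU j) (cV i)
    (cV i)) (fun i => (cU j).mul ((cV i).mul (cV i))) le_rfl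
  have k6 := nb_triple hp hb3 hab3 (Up j) Θb Θ6 Θb Θ6 (cU j) cΘ cΘ
  have k7 := NB.sum3 (fun i => nb_triple hp hb2 hab2 (Up i) (Vb j) (V6 j) (Vb i) (V6 i) (cU i) (cV j)
    (cV i)) (fun i => (cU i).mul ((cV j).mul (cV i))) le_rfl
  have k8 := m2 Θ2 (V2 j) cΘ (cV j)
  have k46 := ((k4.add k5 (by fun_prop) (by fun_prop) le_rfl).add k6 (by fun_prop) (by fun_prop)
    le_rfl).mul_bdd (g := fun _ => (-1 / 2 : ℝ)) (k := 1) zero_le_one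
    (by intro x; rw [abs_le]; norm_num) one_pos
  have k7' := k7.mul_bdd (g := fun _ => (-1 : ℝ)) (k := 1) zero_le_one (by intro x; norm_num) one_pos
  have k8' := k8.mul_bdd (g := fun _ => (-1 : ℝ)) (k := 1) zero_le_one (by intro x; norm_num) one_pos
  have dUj := fun i => dU i j
  have dVj := fun i => dV i j
  have dΘj := dΘ j
  have k := ((((k1.add k2 (by fun_prop) (by fun_prop) le_rfl).add k3 (by fun_prop) (by fun_prop)
    le_rfl).add k46 (by fun_prop) (by fun_prop) le_rfl).add k7' (by fun_prop) (by fun_prop)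
    le_rfl).add k8' (by fun_prop) (by fun_prop) le_rfl
  refine NB.const_mono k one_pos ?_
  have n0 := (U6 0).1
  have up0 := (Up 0).1
  have q1 := mul_nonneg up0 (Qe_nonneg p b1 N ub)
  have q2 := mul_nonneg up0 (Qe_nonneg p b2 N vb)
  have q3 := mul_nonneg up0 (Qe_nonneg p b3 N tb)
  have s1 := mul_nonneg (U2 0).1 n0
  have s2 := mul_nonneg (V2 0).1 n0
  have s3 := mul_nonneg Θ2.1 n0
  have s4 := mul_nonneg (V2 0).1 Θ2.1
  nlinarith

theorem Ds_continuous {U V : Fin 3 → E3 → ℝ} {P Θ : E3 → ℝ} (h : CSol U V P Θ) :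
    Continuous (Ds U V Θ) := by
  have dU := fun i j => ((h.sU i).pd3 j).continuous
  have dV := fun i j => ((h.sV i).pd3 j).continuous
  have dΘ := fun j => (h.sΘ.pd3 j).continuous
  unfold Ds
  fun_prop

set_option maxHeartbeats 1000000 in
/-- The dissipation in `B_ρ` in terms of norms on the surrounding shell. The last term comes from the
oscillation of the mollified pressure; all other pressure terms are of the same form as the
convective ones. -/
theorem main_est (p b1 b2 b3 : ℝ) (hp : 3 / 2 < p) (hp3 : p < 3) (hb1 : 2 ≤ b1)
    (hab1 : 1 / 3 - 1 / (2 * p) < 1 / b1 - 1 / 6) (hb2 : 2 ≤ b2)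
    (hab2 : 1 / 3 - 1 / (2 * p) < 1 / b2 - 1 / 6) (hb3 : 2 ≤ b3)
    (hab3 : 1 / 3 - 1 / (2 * p) < 1 / b3 - 1 / 6) :
    ∃ C > 0, ∀ (U V : Fin 3 → E3 → ℝ) (P Θ : E3 → ℝ) (R ρ ℓ N up ub vb tb u2 v2 t2 u1 : ℝ),
    CSol U V P Θ → 0 < R → 0 < ℓ → 1.9 * R ≤ ρ → ℓ ≤ R / 80 → ρ + 8 * ℓ ≤ 2 * R →
    (∀ i j, NB (pd3 j (U i)) 2 (Sh (1.05 * R) (ρ + 6 * ℓ)) N) →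
    (∀ i j, NB (pd3 j (V i)) 2 (Sh (1.05 * R) (ρ + 6 * ℓ)) N) →
    (∀ j, NB (pd3 j Θ) 2 (Sh (1.05 * R) (ρ + 6 * ℓ)) N) →
    (∀ i, NB (U i) 6 (Sh (1.05 * R) (ρ + 6 * ℓ)) N) →
    (∀ i, NB (V i) 6 (Sh (1.05 * R) (ρ + 6 * ℓ)) N) →
    NB Θ 6 (Sh (1.05 * R) (ρ + 6 * ℓ)) N →
    (∀ i, NB (U i) p (Sh (1.05 * R) (ρ + 6 * ℓ)) up) →
    (∀ i, NB (U i) b1 (Sh (1.05 * R) (ρ + 6 * ℓ)) ub) →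
    (∀ i, NB (V i) b2 (Sh (1.05 * R) (ρ + 6 * ℓ)) vb) →
    NB Θ b3 (Sh (1.05 * R) (ρ + 6 * ℓ)) tb →
    (∀ i, NB (U i) 2 (Sh (1.05 * R) (ρ + 6 * ℓ)) u2) →
    (∀ i, NB (V i) 2 (Sh (1.05 * R) (ρ + 6 * ℓ)) v2) →
    NB Θ 2 (Sh (1.05 * R) (ρ + 6 * ℓ)) t2 →
    (∀ i, NB (U i) 1 (Sh (1.05 * R) (ρ + 6 * ℓ)) u1) →
    ∫ x in ball 0 ρ, Ds U V Θ x ≤ C * (ℓ⁻¹ * ((u2 + v2 + t2) * N) +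
      ℓ⁻¹ * (up * (Qe p b1 N ub + Qe p b2 N vb + Qe p b3 N tb)) + ℓ⁻¹ * (v2 * t2) +
      ℓ⁻¹ * (u1 * (R * (ℓ⁻¹ * (ℓ ^ (-3 : ℝ) * (R ^ (3 / 2 : ℝ) * N + u2 * u2 + v2 * v2)))))) := by
  obtain ⟨Cp, hCp, HP⟩ := pressure_est p b1 b2 hp hp3 hb1 hab1 hb2 hab2
  obtain ⟨Ce, hCe, HE⟩ := exists_eta_bound
  refine ⟨18 * Ce + 50 * Cp * Ce, by positivity, ?_⟩
  intro U V P Θ R ρ ℓ N up ub vb tb u2 v2 t2 u1 h R0 ℓ0 hρ hℓ hρ2 gU gV gΘ U6 V6 Θ6 Up Ub Vb Θb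
    U2 V2 Θ2 U1
  set A := Sh (1.05 * R) (ρ + 6 * ℓ) with hA
  have p0 : 0 < p := by linarith
  have cU := fun i => (h.sU i).continuous
  have cV := fun i => (h.sV i).continuous
  set η := eta (ρ + 3 * ℓ) (ρ + 5 * ℓ) with hη
  have hs : (0:ℝ) ≤ ρ + 3 * ℓ := by linarith
  have hst : ρ + 3 * ℓ < ρ + 5 * ℓ := by linarith
  have sη : Sm η := eta_smooth _ _
  have cη : HasCompactSupport η := eta_supp hs hst
  have kη : ∀ j x, |pd3 j η x| ≤ Ce * ℓ⁻¹ := by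
    intro j x
    refine (HE _ _ hs hst j x).trans ?_
    rw [← div_eq_mul_inv]
    exact div_le_div_of_nonneg_left hCe.le ℓ0 (by linarith)
  have k0 : 0 ≤ Ce * ℓ⁻¹ := by positivity
  have supη : ∀ j x, pd3 j η x ≠ 0 → x ∈ Sh ρ (ρ + 5 * ℓ) := by
    intro j x hx
    refine ⟨?_, ?_⟩
    · by_contra hc; exact hx (pd3_eta_zero hs hst j (Or.inl (by linarith)))
    · by_contra hc; exact hx (pd3_eta_zero hs hst j (Or.inr (by linarith)))
  have hAA : Sh ρ (ρ + 5 * ℓ) ⊆ A := fun x hx => ⟨by linarith [hx.1], by linarith [hx.2]⟩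
  -- left side
  have hL : ∫ x in ball 0 ρ, Ds U V Θ x ≤ ∫ x, η x * Ds U V Θ x := by
    have i1 : Integrable (fun x => η x * Ds U V Θ x) :=
      (sη.continuous.mul (Ds_continuous h)).integrable_of_hasCompactSupport cη.mul_right
    calc ∫ x in ball 0 ρ, Ds U V Θ x = ∫ x in ball 0 ρ, η x * Ds U V Θ x := by
          refine setIntegral_congr_fun measurableSet_ball fun x hx => ?_
          have : η x = 1 := eta_one hs hst (by rw [mem_ball_zero_iff] at hx; linarith)
          simp [this]
      _ ≤ _ := setIntegral_le_integral i1
          (Filter.Eventually.of_forall fun x => mul_nonneg (eta_nonneg _ _ _) (Ds_nonneg _ _ _ _))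
  refine hL.trans ?_
  rw [energy_identity h sη cη]
  -- flux part
  set F := (u2 + v2 + t2) * N + up * (Qe p b1 N ub + Qe p b2 N vb + Qe p b3 N tb) + v2 * t2 with hF
  have hfl : ∀ j, |∫ x, pd3 j η x * flux U V Θ j x| ≤ Ce * ℓ⁻¹ * (6 * F) := by
    intro j
    refine NB.abs_integral_le ((nb_flux hp hb1 hab1 hb2 hab2 hb3 hab3 h gU gV gΘ U6 V6 Θ6 Up Ub Vb Θb
      U2 V2 Θ2 j).mul_bdd k0 (kη j) one_pos) (measurableSet_Sh _ _) fun x hx => hAA (supη j x ?_)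
    exact left_ne_zero_of_mul hx
  -- pressure part
  have n0 := (U6 0).1
  have up0 := (Up 0).1
  have u10 := (U1 0).1
  have gp : NB (fun x => ∑ j, pd3 j η x * U j x) p (Sh ρ (ρ + 5 * ℓ)) (3 * (Ce * ℓ⁻¹ * up)) :=
    NB.sum3 (fun j => ((Up j).set_mono hAA).mul_bdd k0 (kη j) p0)
      (fun j => (sη.pd3 j).continuous.mul (cU j)) (by linarith)
  have g1 : NB (fun x => ∑ j, pd3 j η x * U j x) 1 (Sh ρ (ρ + 5 * ℓ)) (3 * (Ce * ℓ⁻¹ * u1)) :=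
    NB.sum3 (fun j => ((U1 j).set_mono hAA).mul_bdd k0 (kη j) one_pos)
      (fun j => (sη.pd3 j).continuous.mul (cU j)) le_rfl
  have dprod : ∀ (W : Fin 3 → E3 → ℝ), (∀ i, Sm (W i)) → (∀ i j, NB (pd3 j (W i)) 2 A N) →
      (∀ i, NB (W i) 6 A N) → ∀ i j, NB (pd3 j (fun y => W i y * W j y)) (3 / 2) A (2 * (N * N)) := by
    intro W sW gW W6 i j
    have m1 := NB.mul (W6 i) (gW j j) (sW i).continuous ((sW j).pd3 j).continuous (t := 3 / 2)
      (by norm_num) (by norm_num) (by norm_num) (by norm_num)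
    have m2 := NB.mul (W6 j) (gW i j) (sW j).continuous ((sW i).pd3 j).continuous (t := 3 / 2)
      (by norm_num) (by norm_num) (by norm_num) (by norm_num)
    have e : pd3 j (fun y => W i y * W j y) = fun x => W i x * pd3 j (W j) x + W j x * pd3 j (W i) x :=
      funext fun x => pd3_mul (sW i) (sW j) j x
    rw [e]
    exact (m1.add m2 ((sW i).continuous.mul ((sW j).pd3 j).continuous)
      ((sW j).continuous.mul ((sW i).pd3 j).continuous) (by norm_num)).const_mono (by norm_num)
      (by linarith)
  have fprod : ∀ (W : Fin 3 → E3 → ℝ) (b w : ℝ), 2 ≤ b → (∀ i, Sm (W i)) → (∀ i, NB (W i) b A w) →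
      ∀ i j, NB (fun y => W i y * W j y) (b / 2) A (w * w) := by
    intro W b w hb sW hW i j
    have b0 : 0 < b := by linarith
    exact NB.mul (hW i) (hW j) (sW i).continuous (sW j).continuous (by positivity) b0 b0
      (by field_simp; norm_num)
  have hvol : volume A ≤ ENNReal.ofReal (5 * (2 * R) ^ 3) := by
    refine (measure_mono ?_).trans (vol_ball_le (by positivity))
    intro x hx
    rw [mem_ball_zero_iff]; linarith [hx.2]
  set H := R ^ (3 / 2 : ℝ) * N + u2 * u2 + v2 * v2 with hH
  have hh : ∀ i j, NB (fun x => pd3 j (U i) x - U i x * U j x - V i x * V j x) 1 A (7 * H) := by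
    intro i j
    have a1 := NB.lower (gU i j) ((h.sU i).pd3 j).continuous (by positivity) hvol one_pos one_le_two
    have a2 := (fprod U 2 u2 le_rfl h.sU U2 i j).mul_bdd (g := fun _ => (-1 : ℝ)) (k := 1) zero_le_one
      (by intro x; norm_num) (by norm_num)
    have a3 := (fprod V 2 v2 le_rfl h.sV V2 i j).mul_bdd (g := fun _ => (-1 : ℝ)) (k := 1) zero_le_one
      (by intro x; norm_num) (by norm_num)
    norm_num at a2 a3
    have dUij := ((h.sU i).pd3 j).continuous
    have a4 := (a1.add a2 dUij (by fun_prop) le_rfl).add a3 (by fun_prop) (by fun_prop) le_rfl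
    refine a4.mono one_pos subset_rfl (fun x _ => le_of_eq (by congr 1)) (measurableSet_Sh _ _) ?_
    have e : (5 * (2 * R) ^ 3) ^ ((1:ℝ) / 1 - 1 / 2) ≤ 7 * R ^ (3 / 2 : ℝ) := by
      have : (5 * (2 * R) ^ 3) = 40 * R ^ (3:ℝ) := by norm_cast; ring
      rw [this, Real.mul_rpow (by norm_num) (by positivity), ← Real.rpow_mul R0.le]
      norm_num
      have : (40:ℝ) ^ (1 / 2 : ℝ) ≤ 7 := by
        rw [← Real.sqrt_eq_rpow, Real.sqrt_le_left (by norm_num)]; norm_num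
      exact mul_le_mul_of_nonneg_right this (by positivity)
    have := mul_le_mul_of_nonneg_right e n0
    have := mul_self_nonneg u2
    have := mul_self_nonneg v2
    rw [hH]; linarith
  have hpr := HP P (fun x => ∑ j, pd3 j η x * U j x) U (fun i j y => U i y * U j y)
    (fun i j y => V i y * V j y) R ρ ℓ _ _ _ _ _ _ _ h.sP h.sU (fun i j => (h.sU i).mul (h.sU j))
    (fun i j => (h.sV i).mul (h.sV j)) h.dU h.pressure
    (continuous_finsetSum _ fun j _ => (sη.pd3 j).continuous.mul (cU j)) (flux_G_zero h sη cη)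
    R0 ℓ0 hρ hℓ hρ2 (by
      intro x hx
      by_contra hc
      apply hx
      refine Finset.sum_eq_zero fun j _ => ?_
      have : pd3 j η x = 0 := by by_contra h0; exact hc (supη j x h0)
      rw [this, zero_mul]) gp g1 (dprod U h.sU gU U6) (fprod U b1 ub hb1 h.sU Ub)
    (dprod V h.sV gV V6) (fprod V b2 vb hb2 h.sV Vb) hh
  have hQ : ∀ b w, 0 < aexp p b ∧ aexp p b < 1 → 3 * (Ce * ℓ⁻¹ * up) * (2 * (N * N)) ^ (1 - aexp p b) *
      (w * w) ^ aexp p b ≤ 6 * Ce * (ℓ⁻¹ * (up * Qe p b N w)) := by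
    intro b w ⟨a0, a1⟩
    rw [Real.mul_rpow (by norm_num) (mul_self_nonneg N)]
    have h2 : (2:ℝ) ^ (1 - aexp p b) ≤ 2 := by
      calc (2:ℝ) ^ (1 - aexp p b) ≤ 2 ^ (1:ℝ) :=
            Real.rpow_le_rpow_of_exponent_le (by norm_num) (by linarith)
        _ = 2 := by norm_num
    have hq := Qe_nonneg p b N w
    calc _ = 3 * (Ce * ℓ⁻¹ * up) * Qe p b N w * 2 ^ (1 - aexp p b) := by unfold Qe; ring
      _ ≤ 3 * (Ce * ℓ⁻¹ * up) * Qe p b N w * 2 := mul_le_mul_of_nonneg_left h2 (by positivity)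
      _ = _ := by ring
  have hQ1 := hQ b1 ub (aexp_bounds hp hab1)
  have hQ2 := hQ b2 vb (aexp_bounds hp hab2)
  have q1 := Qe_nonneg p b1 N ub
  have q2 := Qe_nonneg p b2 N vb
  have q3 := Qe_nonneg p b3 N tb
  have u20 := (U2 0).1
  have v20 := (V2 0).1
  have t20 := Θ2.1
  have H0 : 0 ≤ H := by positivity
  set X := ℓ⁻¹ * ((u2 + v2 + t2) * N) + ℓ⁻¹ * (up * (Qe p b1 N ub + Qe p b2 N vb + Qe p b3 N tb)) +
    ℓ⁻¹ * (v2 * t2) with hX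
  set Y := ℓ⁻¹ * (u1 * (R * (ℓ⁻¹ * (ℓ ^ (-3 : ℝ) * H)))) with hY
  have X0 : 0 ≤ X := by positivity
  have Y0 : 0 ≤ Y := by positivity
  have b1' : -(∑ j, ∫ x, pd3 j η x * flux U V Θ j x) ≤ 18 * Ce * X := by
    have hx : X = ℓ⁻¹ * F := by rw [hX, hF]; ring
    rw [hx, Fin.sum_univ_three]
    have := (abs_le.1 (hfl 0)).1
    have := (abs_le.1 (hfl 1)).1
    have := (abs_le.1 (hfl 2)).1
    linarith
  have b2' : (∫ x, (∑ j, pd3 j η x * U j x) * P x) ≤ Cp * (6 * Ce * X + 21 * Ce * Y) := by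
    refine ((le_abs_self _).trans hpr).trans (mul_le_mul_of_nonneg_left ?_ hCp.le)
    have e1 : 3 * (Ce * ℓ⁻¹ * u1) * (R * (ℓ⁻¹ * (ℓ ^ (-3 : ℝ) * (7 * H)))) = 21 * Ce * Y := by
      rw [hY]; ring
    have e2 : 6 * Ce * (ℓ⁻¹ * (up * Qe p b1 N ub)) + 6 * Ce * (ℓ⁻¹ * (up * Qe p b2 N vb)) ≤
        6 * Ce * X := by
      have z1 : 0 ≤ ℓ⁻¹ * ((u2 + v2 + t2) * N) := by positivity
      have z2 : 0 ≤ ℓ⁻¹ * (v2 * t2) := by positivity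
      have z3 : 0 ≤ ℓ⁻¹ * (up * Qe p b3 N tb) := by positivity
      have : ℓ⁻¹ * (up * Qe p b1 N ub) + ℓ⁻¹ * (up * Qe p b2 N vb) ≤ X := by
        rw [hX]; linarith
      nlinarith
    linarith
  have c1 : 0 ≤ Cp * Ce * X := by positivity
  have c2 : 0 ≤ Cp * Ce * Y := by positivity
  have c3 : 0 ≤ Ce * Y := by positivity
  nlinarith

/-! ### Normalised bounds -/

theorem NB.min {f : E3 → ℝ} {t a b : ℝ} {A : Set E3} (h1 : NB f t A a) (h2 : NB f t A b) :
    NB f t A (min a b) := by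
  rcases min_choice a b with h | h <;> rw [h] <;> assumption

/-- An `L^b` bound from the given `L^q` bound, with weight `μ`, and the `L⁶` bound, with weight `1 - μ`.
The volume of the shell accounts for the remaining loss of integrability. -/
theorem nb_norm {w : E3 → ℝ} {q β b μ N K R : ℝ} {A : Set E3} (hq : 1 ≤ q) (hb : 1 ≤ b)
    (hμ0 : 0 ≤ μ) (hμ1 : μ ≤ 1) (hμ : μ * (1 / q - 1 / 6) ≤ 1 / b - 1 / 6) (hK : 1 ≤ K) (hR : 0 < R)
    (cw : Continuous w) (hvol : volume A ≤ ENNReal.ofReal (40 * R ^ 3))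
    (h1 : NB w q A (K * R ^ β)) (h6 : NB w 6 A N) :
    NB w b A (40 * K * R ^ (3 / b - 1 / 2 - μ * (3 / q - 1 / 2 - β)) * N ^ (1 - μ)) := by
  have q0 : 0 < q := by linarith
  have b0 : 0 < b := by linarith
  have K0 : 0 < K := by linarith
  have N0 := h6.1
  set m := μ / q + (1 - μ) / 6 with hm
  have m0 : 0 < m := by
    rcases eq_or_lt_of_le hμ0 with h | h
    · rw [hm, ← h]; norm_num
    · have : 0 < μ / q := by positivity
      have : 0 ≤ (1 - μ) / 6 := by linarith
      linarith
  have hmb : m ≤ 1 / b := by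
    have : m = μ * (1 / q - 1 / 6) + 1 / 6 := by rw [hm]; ring
    linarith
  have hb1 : 1 / b ≤ 1 := by rw [div_le_one b0]; exact hb
  have i1 := NB.interp h1 h6 cw (t := 1 / m) (by positivity) q0 (by norm_num) hμ0 hμ1
    (by rw [one_div_one_div])
  have i2 := NB.lower i1 cw (t := b) (by positivity) hvol b0
    (by rw [le_div_iff₀ m0]; rw [le_div_iff₀ b0] at hmb; linarith)
  rw [one_div_one_div] at i2
  refine i2.const_mono b0 ?_
  rw [Real.mul_rpow (by norm_num) (by positivity), Real.mul_rpow K0.le (by positivity),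
    ← Real.rpow_mul hR.le, ← Real.rpow_natCast R 3, ← Real.rpow_mul hR.le]
  have e1 : (40:ℝ) ^ (1 / b - m) ≤ 40 := by
    calc (40:ℝ) ^ (1 / b - m) ≤ 40 ^ (1:ℝ) :=
          Real.rpow_le_rpow_of_exponent_le (by norm_num) (by linarith)
      _ = 40 := by norm_num
  have e2 : K ^ μ ≤ K := by
    calc K ^ μ ≤ K ^ (1:ℝ) := Real.rpow_le_rpow_of_exponent_le hK hμ1
      _ = K := by norm_num
  have e3 : R ^ (((3:ℕ):ℝ) * (1 / b - m)) * R ^ (β * μ) =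
      R ^ (3 / b - 1 / 2 - μ * (3 / q - 1 / 2 - β)) := by
    rw [← Real.rpow_add hR]; congr 1; rw [hm]; push_cast; ring
  rw [← e3]
  have r1 : 0 ≤ R ^ (((3:ℕ):ℝ) * (1 / b - m)) := by positivity
  have r2 : 0 ≤ R ^ (β * μ) := by positivity
  have r3 : 0 ≤ N ^ (1 - μ) := by positivity
  have := mul_le_mul e1 e2 (by positivity) (by norm_num)
  calc _ = ((40:ℝ) ^ (1 / b - m) * K ^ μ) * (R ^ (((3:ℕ):ℝ) * (1 / b - m)) * R ^ (β * μ) * N ^ (1 - μ)) := by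
        ring
    _ ≤ (40 * K) * (R ^ (((3:ℕ):ℝ) * (1 / b - m)) * R ^ (β * μ) * N ^ (1 - μ)) :=
        mul_le_mul_of_nonneg_right this (by positivity)
    _ = _ := by ring

/-- Exponents `b`, `μ` for which the convective term `u w w` of a field `w` with integrability `q`
and normalised decay rate `e` is controlled by a subquadratic power of the energy. -/
structure XD (p eu q e b μ : ℝ) : Prop where
  hb : 2 ≤ b
  hab : 1 / 3 - 1 / (2 * p) < 1 / b - 1 / 6
  μ0 : 0 < μ
  μ1 : μ ≤ 1
  hμ : μ * (1 / q - 1 / 6) ≤ 1 / b - 1 / 6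
  he : 1 / 2 ≤ eu + 2 * (aexp p b * μ) * e

/-- The convective terms after normalisation: the condition `XD.he` makes the power of `R`
nonpositive. -/
theorem Q_bound {p α q e b μ N K R ℓ : ℝ} (hp : 3 / 2 < p)
    (hx : XD p (3 / p - 1 / 2 - α) q e b μ) (hK : 1 ≤ K) (hR : 1 ≤ R) (hℓ : 0 < ℓ) (hN : 0 ≤ N) :
    ℓ⁻¹ * (K * R ^ α * Qe p b N (40 * K * R ^ (3 / b - 1 / 2 - μ * e) * N ^ (1 - μ))) ≤
      R / ℓ * (40 * K) ^ 3 * N ^ (2 - 2 * (aexp p b * μ)) := by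
  obtain ⟨a0, a1⟩ := aexp_bounds hp hx.hab
  have R0 : 0 < R := by linarith
  have p0 : 0 < p := by linarith
  have hd : 0 < 1 / b - 1 / 6 := by
    have h1 : 1 / (2 * p) < 1 / 3 := one_div_lt_one_div_of_lt (by norm_num) (by linarith)
    linarith [hx.hab]
  have ha : aexp p b * (1 / b - 1 / 6) = 1 / 3 - 1 / (2 * p) := by
    unfold aexp; rw [div_mul_cancel₀ _ hd.ne']
  set a := aexp p b with haa
  set c := 3 / b - 1 / 2 - μ * e with hc
  set J := 40 * K with hJ
  have J1 : 1 ≤ J := by linarith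
  have J0 : 0 ≤ J := by linarith
  have m1 := hx.μ1
  have m0 := hx.μ0
  have eQ : Qe p b N (J * R ^ c * N ^ (1 - μ)) = (J * J) ^ a * R ^ ((c + c) * a) *
      N ^ (2 - 2 * (a * μ)) := by
    unfold Qe
    rw [← haa]
    have s1 : J * R ^ c * N ^ (1 - μ) * (J * R ^ c * N ^ (1 - μ)) =
      (J * J) * R ^ (c + c) * N ^ ((1 - μ) + (1 - μ)) := by
      rw [Real.rpow_add R0, Real.rpow_add_of_nonneg hN (by linarith) (by linarith)]; ring
    have s2 : N * N = N ^ (2:ℝ) := by norm_cast; ring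
    rw [s1, s2, Real.mul_rpow (by positivity) (by positivity), Real.mul_rpow (by positivity)
      (by positivity), ← Real.rpow_mul R0.le, ← Real.rpow_mul hN, ← Real.rpow_mul hN, mul_assoc,
      ← Real.rpow_add_of_nonneg hN (mul_nonneg (by linarith) a0.le) (by linarith)]
    congr 2; ring
  have eJ : (J * J) ^ a ≤ J * J := by
    calc (J * J) ^ a ≤ (J * J) ^ (1:ℝ) := Real.rpow_le_rpow_of_exponent_le (by nlinarith) a1.le
      _ = J * J := by norm_num
  have eR : R ^ α * R ^ ((c + c) * a) ≤ R := by
    rw [← Real.rpow_add R0]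
    calc R ^ (α + (c + c) * a) ≤ R ^ (1:ℝ) := by
          refine Real.rpow_le_rpow_of_exponent_le hR ?_
          have := hx.he
          have e1 : (c + c) * a = 6 * (a * (1 / b - 1 / 6)) - 2 * (a * μ) * e := by rw [hc]; ring
          have e2 : 3 / p = 6 * (1 / (2 * p)) := by field_simp; norm_num
          rw [e1, ha]; linarith
      _ = R := by norm_num
  rw [eQ]
  have hNn : 0 ≤ N ^ (2 - 2 * (a * μ)) := by positivity
  calc ℓ⁻¹ * (K * R ^ α * ((J * J) ^ a * R ^ ((c + c) * a) * N ^ (2 - 2 * (a * μ)))) =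
      ℓ⁻¹ * (K * (J * J) ^ a * (R ^ α * R ^ ((c + c) * a))) * N ^ (2 - 2 * (a * μ)) := by ring
    _ ≤ ℓ⁻¹ * (J * (J * J) * R) * N ^ (2 - 2 * (a * μ)) := by
        gcongr
        linarith
    _ = _ := by field_simp

set_option maxHeartbeats 1000000 in
/-- The energy estimate with all norms expressed through the given bounds and `N`. -/
theorem norm_est (p q r α β γ b1 μ1 b2 μ2 b3 μ3 m n : ℝ) (hp : 3 / 2 < p) (hp3 : p < 3)
    (hq : 1 ≤ q) (hr : 1 ≤ r)
    (heu : 0 ≤ 3 / p - 1 / 2 - α) (hev : 0 ≤ 3 / q - 1 / 2 - β) (het : 0 ≤ 3 / r - 1 / 2 - γ)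
    (x1 : XD p (3 / p - 1 / 2 - α) p (3 / p - 1 / 2 - α) b1 μ1)
    (x2 : XD p (3 / p - 1 / 2 - α) q (3 / q - 1 / 2 - β) b2 μ2)
    (x3 : XD p (3 / p - 1 / 2 - α) r (3 / r - 1 / 2 - γ) b3 μ3)
    (m0 : 0 ≤ m) (m1 : m ≤ 1) (n0 : 0 ≤ n) (n1 : n ≤ 1) (hm : m * (1 / q - 1 / 6) ≤ 1 / 3)
    (hn : n * (1 / r - 1 / 6) ≤ 1 / 3)
    (hmn : 1 ≤ m * (3 / q - 1 / 2 - β) + n * (3 / r - 1 / 2 - γ)) :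
    ∃ C > 0, ∀ (U V : Fin 3 → E3 → ℝ) (P Θ : E3 → ℝ) (R ρ ℓ N K : ℝ),
    CSol U V P Θ → 1 ≤ R → 0 < ℓ → 1.9 * R ≤ ρ → ℓ ≤ R / 80 → ρ + 8 * ℓ ≤ 2 * R → 1 ≤ K →
    (∀ i j, NB (pd3 j (U i)) 2 (Sh (1.05 * R) (ρ + 6 * ℓ)) N) →
    (∀ i j, NB (pd3 j (V i)) 2 (Sh (1.05 * R) (ρ + 6 * ℓ)) N) →
    (∀ j, NB (pd3 j Θ) 2 (Sh (1.05 * R) (ρ + 6 * ℓ)) N) →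
    (∀ i, NB (U i) 6 (Sh (1.05 * R) (ρ + 6 * ℓ)) N) →
    (∀ i, NB (V i) 6 (Sh (1.05 * R) (ρ + 6 * ℓ)) N) →
    NB Θ 6 (Sh (1.05 * R) (ρ + 6 * ℓ)) N →
    (∀ i, NB (U i) p (Sh (1.05 * R) (ρ + 6 * ℓ)) (K * R ^ α)) →
    (∀ i, NB (V i) q (Sh (1.05 * R) (ρ + 6 * ℓ)) (K * R ^ β)) →
    NB Θ r (Sh (1.05 * R) (ρ + 6 * ℓ)) (K * R ^ γ) →
    ∫ x in ball 0 ρ, Ds U V Θ x ≤ C * ((R / ℓ) ^ 5 * K ^ 3) * (N ^ (8 / 5 : ℝ) +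
      N ^ (2 - 2 * (aexp p b1 * μ1)) + N ^ (2 - 2 * (aexp p b2 * μ2)) +
      N ^ (2 - 2 * (aexp p b3 * μ3)) + N ^ (2 - m - n) + N) := by
  obtain ⟨C, hC, H⟩ := main_est p b1 b2 b3 hp hp3 x1.hb x1.hab x2.hb x2.hab x3.hb x3.hab
  refine ⟨C * 40 ^ 3 * 8, by positivity, ?_⟩
  intro U V P Θ R ρ ℓ N K h R1 ℓ0 hρ hℓ hρ2 K1 gU gV gΘ U6 V6 Θ6 Up Vq Θr
  set A := Sh (1.05 * R) (ρ + 6 * ℓ) with hA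
  have R0 : 0 < R := by linarith
  have K0 : 0 < K := by linarith
  have N0 := (U6 0).1
  have cU := fun i => (h.sU i).continuous
  have cV := fun i => (h.sV i).continuous
  have cΘ := h.sΘ.continuous
  have hvol : volume A ≤ ENNReal.ofReal (40 * R ^ 3) := by
    have : 40 * R ^ 3 = 5 * (2 * R) ^ 3 := by ring
    rw [this]
    refine (measure_mono ?_).trans (vol_ball_le (by positivity))
    intro x hx
    rw [mem_ball_zero_iff]; linarith [hx.2]
  obtain ⟨a10, a11⟩ := aexp_bounds hp x1.hab
  obtain ⟨a20, a21⟩ := aexp_bounds hp x2.hab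
  have iq : ∀ {s : ℝ}, 1 ≤ s → (2 / 5 : ℝ) * (1 / s - 1 / 6) ≤ 1 / 2 - 1 / 6 := by
    intro s hs
    have : 1 / s ≤ 1 := by rw [div_le_one (by linarith)]; exact hs
    linarith
  -- `μ * aexp` is admissible at exponent `2` because `aexp ≤ 1` and `b ≥ 2`
  have hab2 : ∀ {s e b μ}, XD p (3 / p - 1 / 2 - α) s e b μ →
      aexp p b * μ * (1 / s - 1 / 6) ≤ 1 / 2 - 1 / 6 ∧ 0 ≤ aexp p b * μ ∧ aexp p b * μ ≤ 1 := by
    intro s e b μ hx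
    obtain ⟨a0, a1⟩ := aexp_bounds hp hx.hab
    have hb2 : 1 / b ≤ 1 / 2 := one_div_le_one_div_of_le (by norm_num) hx.hb
    have h1 := hx.hμ
    refine ⟨?_, mul_nonneg a0.le hx.μ0.le, mul_le_one₀ a1.le hx.μ0.le hx.μ1⟩
    rw [mul_assoc]
    rcases le_total 0 (μ * (1 / s - 1 / 6)) with h2 | h2
    · nlinarith
    · nlinarith
  obtain ⟨k1, k10, k11⟩ := hab2 x1
  obtain ⟨k2, k20, k21⟩ := hab2 x2
  have p1 : 1 ≤ p := by linarith
  set J := 40 * K with hJ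
  set eu := 3 / p - 1 / 2 - α with heu'
  set ev := 3 / q - 1 / 2 - β with hev'
  set et := 3 / r - 1 / 2 - γ with het'
  have U2a := fun i => nb_norm p1 one_le_two (by norm_num) (by norm_num) (iq p1) K1 R0 (cU i) hvol (Up i)
    (U6 i)
  have V2a := fun i => nb_norm hq one_le_two (by norm_num) (by norm_num) (iq hq) K1 R0 (cV i) hvol (Vq i)
    (V6 i)
  have Θ2a := nb_norm hr one_le_two (by norm_num) (by norm_num) (iq hr) K1 R0 cΘ hvol Θr Θ6
  have U2b := fun i => nb_norm p1 one_le_two k10 k11 k1 K1 R0 (cU i) hvol (Up i) (U6 i)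
  have V2b := fun i => nb_norm hq one_le_two k20 k21 k2 K1 R0 (cV i) hvol (Vq i) (V6 i)
  have V2c := fun i => nb_norm hq one_le_two m0 m1 (by linarith) K1 R0 (cV i) hvol (Vq i) (V6 i)
  have Θ2c := nb_norm hr one_le_two n0 n1 (by linarith) K1 R0 cΘ hvol Θr Θ6
  have U1 := fun i => nb_norm p1 le_rfl zero_le_one le_rfl
    (by have : 1 / p ≤ 1 / 1 := one_div_le_one_div_of_le one_pos p1
        linarith) K1 R0 (cU i) hvol (Up i) (U6 i)
  have Ub := fun i => nb_norm p1 (by linarith [x1.hb]) x1.μ0.le x1.μ1 x1.hμ K1 R0 (cU i) hvol (Up i)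
    (U6 i)
  have Vb := fun i => nb_norm hq (by linarith [x2.hb]) x2.μ0.le x2.μ1 x2.hμ K1 R0 (cV i) hvol (Vq i)
    (V6 i)
  have Θb := nb_norm hr (by linarith [x3.hb]) x3.μ0.le x3.μ1 x3.hμ K1 R0 cΘ hvol Θr Θ6
  have E := H U V P Θ R ρ ℓ N _ _ _ _ _ _ _ _ h R0 ℓ0 hρ hℓ hρ2 gU gV gΘ U6 V6 Θ6 Up Ub Vb Θb
    (fun i => (U2a i).min (U2b i)) (fun i => (V2a i).min ((V2b i).min (V2c i))) (Θ2a.min Θ2c) U1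
  refine E.trans ?_
  have B1 := Q_bound hp x1 K1 R1 ℓ0 N0
  have B2 := Q_bound hp x2 K1 R1 ℓ0 N0
  have B3 := Q_bound hp x3 K1 R1 ℓ0 N0
  clear E
  have J1 : 1 ≤ J := by linarith
  have J0 : 0 < J := by linarith
  set Λ := R / ℓ with hΛ
  have Λ1 : 1 ≤ Λ := by rw [hΛ, one_le_div ℓ0]; linarith
  have Λ0 : 0 < Λ := by linarith
  have hℓΛ : ℓ⁻¹ = Λ * R⁻¹ := by rw [hΛ]; field_simp
  set s1 := N ^ (2 - 2 * (aexp p b1 * μ1)) with hs1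
  set s2 := N ^ (2 - 2 * (aexp p b2 * μ2)) with hs2
  set s3 := N ^ (2 - 2 * (aexp p b3 * μ3)) with hs3
  set s4 := N ^ (2 - m - n) with hs4
  set s0 := N ^ (8 / 5 : ℝ) with hs0
  have s00 : 0 ≤ s0 := by positivity
  have s10 : 0 ≤ s1 := by positivity
  have s20 : 0 ≤ s2 := by positivity
  have s30 : 0 ≤ s3 := by positivity
  have s40 : 0 ≤ s4 := by positivity
  set u2 := min (J * R ^ (3 / 2 - 1 / 2 - 2 / 5 * eu) * N ^ (1 - 2 / 5 : ℝ))
    (J * R ^ (3 / 2 - 1 / 2 - aexp p b1 * μ1 * eu) * N ^ (1 - aexp p b1 * μ1)) with hu2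
  set v2 := min (J * R ^ (3 / 2 - 1 / 2 - 2 / 5 * ev) * N ^ (1 - 2 / 5 : ℝ))
    (min (J * R ^ (3 / 2 - 1 / 2 - aexp p b2 * μ2 * ev) * N ^ (1 - aexp p b2 * μ2))
      (J * R ^ (3 / 2 - 1 / 2 - m * ev) * N ^ (1 - m))) with hv2
  set t2 := min (J * R ^ (3 / 2 - 1 / 2 - 2 / 5 * et) * N ^ (1 - 2 / 5 : ℝ))
    (J * R ^ (3 / 2 - 1 / 2 - n * et) * N ^ (1 - n)) with ht2
  set u1 := J * R ^ (3 / 1 - 1 / 2 - 1 * eu) * N ^ (1 - 1 : ℝ) with hu1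
  have u20 : 0 ≤ u2 := by positivity
  have v20 : 0 ≤ v2 := by positivity
  have t20 : 0 ≤ t2 := by positivity
  have u10 : 0 ≤ u1 := by positivity
  have c1 : ∀ e : ℝ, 0 ≤ e → J * R ^ (3 / 2 - 1 / 2 - 2 / 5 * e) * N ^ (1 - 2 / 5 : ℝ) * N ≤ J * R * s0 := by
    intro e he
    have : R ^ (3 / 2 - 1 / 2 - 2 / 5 * e) ≤ R := by
      calc R ^ (3 / 2 - 1 / 2 - 2 / 5 * e) ≤ R ^ (1:ℝ) :=
            Real.rpow_le_rpow_of_exponent_le R1 (by linarith)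
        _ = R := by norm_num
    have e2 : N ^ (1 - 2 / 5 : ℝ) * N = s0 := by
      rw [hs0]
      nth_rewrite 2 [← Real.rpow_one N]
      rw [← Real.rpow_add_of_nonneg N0 (by norm_num) (by norm_num)]; norm_num
    rw [mul_assoc, e2]
    gcongr
  have c2 : ∀ e μ : ℝ, 0 ≤ μ → μ ≤ 1 → 1 / 2 ≤ eu + 2 * μ * e → ∀ w, 0 ≤ w →
      w ≤ J * R ^ (3 / 2 - 1 / 2 - μ * e) * N ^ (1 - μ) →
      u1 * (w * w) ≤ J ^ 3 * R ^ 4 * N ^ (2 - 2 * μ) := by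
    intro e μ h0 h1 he w w0 hw
    have : R ^ (3 / 1 - 1 / 2 - 1 * eu + (3 / 2 - 1 / 2 - μ * e) + (3 / 2 - 1 / 2 - μ * e)) ≤ R ^ 4 := by
      rw [← Real.rpow_natCast R 4]
      exact Real.rpow_le_rpow_of_exponent_le R1 (by push_cast; linarith)
    rw [Real.rpow_add R0, Real.rpow_add R0] at this
    have e2 : N ^ (1 - μ) * N ^ (1 - μ) = N ^ (2 - 2 * μ) := by
      rw [← Real.rpow_add_of_nonneg N0 (by linarith) (by linarith)]; congr 1; ring
    have e3 : u1 = J * R ^ (3 / 1 - 1 / 2 - 1 * eu) := by rw [hu1]; simp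
    calc u1 * (w * w) ≤ u1 * ((J * R ^ (3 / 2 - 1 / 2 - μ * e) * N ^ (1 - μ)) *
          (J * R ^ (3 / 2 - 1 / 2 - μ * e) * N ^ (1 - μ))) := by gcongr
      _ = J ^ 3 * (R ^ (3 / 1 - 1 / 2 - 1 * eu) * R ^ (3 / 2 - 1 / 2 - μ * e) *
          R ^ (3 / 2 - 1 / 2 - μ * e)) * (N ^ (1 - μ) * N ^ (1 - μ)) := by rw [e3]; ring
      _ ≤ _ := by rw [e2]; gcongr
  have T1 : ℓ⁻¹ * ((u2 + v2 + t2) * N) ≤ 3 * J * Λ * s0 := by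
    have z1 : u2 * N ≤ J * R * s0 := (mul_le_mul_of_nonneg_right (min_le_left _ _ : u2 ≤ _) N0).trans (c1 eu heu)
    have z2 : v2 * N ≤ J * R * s0 := (mul_le_mul_of_nonneg_right (min_le_left _ _ : v2 ≤ _) N0).trans (c1 ev hev)
    have z3 : t2 * N ≤ J * R * s0 := (mul_le_mul_of_nonneg_right (min_le_left _ _ : t2 ≤ _) N0).trans (c1 et het)
    calc ℓ⁻¹ * ((u2 + v2 + t2) * N) ≤ ℓ⁻¹ * (3 * (J * R * s0)) := by
          refine mul_le_mul_of_nonneg_left ?_ (by positivity)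
          linarith
      _ = _ := by rw [hℓΛ]; field_simp
  have T3 : ℓ⁻¹ * (v2 * t2) ≤ J ^ 2 * Λ * s4 := by
    have z1 : v2 ≤ J * R ^ (3 / 2 - 1 / 2 - m * ev) * N ^ (1 - m) :=
      (min_le_right _ _).trans (min_le_right _ _)
    have z2 : t2 ≤ J * R ^ (3 / 2 - 1 / 2 - n * et) * N ^ (1 - n) := min_le_right _ _
    have z3 := mul_le_mul z1 z2 t20 (by positivity)
    have z4 : R ^ (3 / 2 - 1 / 2 - m * ev + (3 / 2 - 1 / 2 - n * et)) ≤ R := by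
      calc _ ≤ R ^ (1:ℝ) := Real.rpow_le_rpow_of_exponent_le R1 (by linarith)
        _ = R := by norm_num
    rw [Real.rpow_add R0] at z4
    have z5 : N ^ (1 - m) * N ^ (1 - n) = s4 := by
      rw [hs4, ← Real.rpow_add_of_nonneg N0 (by linarith) (by linarith)]; congr 1; ring
    have z6 : v2 * t2 ≤ J ^ 2 * R * s4 := by
      refine z3.trans ?_
      calc _ = J ^ 2 * (R ^ (3 / 2 - 1 / 2 - m * ev) * R ^ (3 / 2 - 1 / 2 - n * et)) *
            (N ^ (1 - m) * N ^ (1 - n)) := by ring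
        _ ≤ _ := by rw [z5]; gcongr
    calc ℓ⁻¹ * (v2 * t2) ≤ ℓ⁻¹ * (J ^ 2 * R * s4) := by gcongr
      _ = _ := by rw [hℓΛ]; field_simp
  have T4 : ℓ⁻¹ * (u1 * (R * (ℓ⁻¹ * (ℓ ^ (-3 : ℝ) * (R ^ (3 / 2 : ℝ) * N + u2 * u2 + v2 * v2))))) ≤
      Λ ^ 5 * J ^ 3 * (N + s1 + s2) := by
    have z1 : u1 * (R ^ (3 / 2 : ℝ) * N) ≤ J ^ 3 * R ^ 4 * N := by
      have e3 : u1 = J * R ^ (3 / 1 - 1 / 2 - 1 * eu) := by rw [hu1]; simp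
      have : R ^ (3 / 1 - 1 / 2 - 1 * eu + 3 / 2) ≤ R ^ 4 := by
        rw [← Real.rpow_natCast R 4]
        exact Real.rpow_le_rpow_of_exponent_le R1 (by push_cast; linarith)
      rw [Real.rpow_add R0] at this
      have hJ3 : J ≤ J ^ 3 := le_self_pow₀ J1 (by norm_num)
      calc _ = J * (R ^ (3 / 1 - 1 / 2 - 1 * eu) * R ^ (3 / 2 : ℝ)) * N := by rw [e3]; ring
        _ ≤ _ := by gcongr
    have z2 := c2 eu (aexp p b1 * μ1) k10 k11 x1.he u2 u20 (min_le_right _ _)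
    have z3 := c2 ev (aexp p b2 * μ2) k20 k21 x2.he v2 v20 ((min_le_right _ _).trans (min_le_left _ _))
    have eℓ : ℓ ^ (-3 : ℝ) = ℓ⁻¹ ^ 3 := by
      rw [Real.rpow_neg ℓ0.le, inv_pow]; norm_cast
    calc _ = Λ ^ 5 * (R⁻¹ ^ 4) * (u1 * (R ^ (3 / 2 : ℝ) * N) + u1 * (u2 * u2) + u1 * (v2 * v2)) := by
          rw [eℓ, hℓΛ]; field_simp
      _ ≤ Λ ^ 5 * (R⁻¹ ^ 4) * (J ^ 3 * R ^ 4 * N + J ^ 3 * R ^ 4 * s1 + J ^ 3 * R ^ 4 * s2) := by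
          gcongr
      _ = _ := by field_simp
  have hΛ5 : Λ ≤ Λ ^ 5 := le_self_pow₀ Λ1 (by norm_num)
  have hJ3 : J ≤ J ^ 3 := le_self_pow₀ J1 (by norm_num)
  have hJ23 : J ^ 2 ≤ J ^ 3 := pow_le_pow_right₀ J1 (by norm_num)
  have T1' : ℓ⁻¹ * ((u2 + v2 + t2) * N) ≤ 3 * (Λ ^ 5 * J ^ 3 * s0) := by
    refine T1.trans ?_
    have := mul_le_mul_of_nonneg_right (mul_le_mul hJ3 hΛ5 Λ0.le (by positivity)) s00
    linarith
  have T3' : ℓ⁻¹ * (v2 * t2) ≤ Λ ^ 5 * J ^ 3 * s4 := by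
    refine T3.trans ?_
    have := mul_le_mul_of_nonneg_right (mul_le_mul hJ23 hΛ5 Λ0.le (by positivity)) s40
    linarith
  have hB : ∀ s, 0 ≤ s → Λ * J ^ 3 * s ≤ Λ ^ 5 * J ^ 3 * s := by intro s hs; gcongr
  have B1' := B1.trans (hB s1 s10)
  have B2' := B2.trans (hB s2 s20)
  have B3' := B3.trans (hB s3 s30)
  have hJK : C * 40 ^ 3 * 8 * (Λ ^ 5 * K ^ 3) = C * (8 * (Λ ^ 5 * J ^ 3)) := by rw [hJ]; ring
  rw [hJK, mul_assoc C (8 * (Λ ^ 5 * J ^ 3))]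
  refine mul_le_mul_of_nonneg_left ?_ hC.le
  set D := Λ ^ 5 * J ^ 3 with hD
  have D0 : 0 ≤ D := by positivity
  have y0 := mul_nonneg D0 s00
  have y1 := mul_nonneg D0 s10
  have y2 := mul_nonneg D0 s20
  have y3 := mul_nonneg D0 s30
  have y4 := mul_nonneg D0 s40
  have y5 := mul_nonneg D0 N0
  have T4' := T4
  rw [show D * (N + s1 + s2) = D * N + D * s1 + D * s2 by ring] at T4'
  linarith

/-! ### Choice of exponents -/

/-- Below the exponent `2p'` one takes `b = max q 2` and the largest admissible weight `μ` of the
given bound. -/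
theorem xd_lt {p q α β : ℝ} (hp : 3 / 2 < p) (hq : 1 ≤ q) (hq2 : q < 2 * (p / (p - 1)))
    (hc : α + ((4 * p - 6) * q) / ((6 - q) * p) * β ≤ 1) :
    ∃ b μ, XD p (3 / p - 1 / 2 - α) q (3 / q - 1 / 2 - β) b μ := by
  have p0 : 0 < p := by linarith
  have p1 : 0 < p - 1 := by linarith
  have q0 : 0 < q := by linarith
  have hP6 : 2 * (p / (p - 1)) < 6 := by
    rw [← mul_div_assoc, div_lt_iff₀ p1]; linarith
  have hP2 : 2 < 2 * (p / (p - 1)) := by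
    rw [← mul_div_assoc, lt_div_iff₀ p1]; linarith
  have q6 : q < 6 := by linarith
  have hcp : 0 < 1 / 3 - 1 / (2 * p) := by
    have h1 : 1 / (2 * p) < 1 / 3 := one_div_lt_one_div_of_lt (by norm_num) (by linarith)
    linarith
  have hP : 1 / (2 * (p / (p - 1))) - 1 / 6 = 1 / 3 - 1 / (2 * p) := by field_simp; ring
  have hdq : 0 < 1 / q - 1 / 6 := by
    have := one_div_lt_one_div_of_lt q0 q6; linarith
  have hb0 : (0:ℝ) < max q 2 := by positivity
  have hab : 1 / 3 - 1 / (2 * p) < 1 / max q 2 - 1 / 6 := by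
    have := one_div_lt_one_div_of_lt hb0 (max_lt hq2 hP2); linarith
  have hdb : 0 < 1 / max q 2 - 1 / 6 := by linarith
  have hle : 1 / max q 2 ≤ 1 / q := one_div_le_one_div_of_le q0 (le_max_left _ _)
  refine ⟨max q 2, (1 / max q 2 - 1 / 6) / (1 / q - 1 / 6), le_max_right _ _, hab, div_pos hdb hdq,
    (div_le_one hdq).2 (by linarith), (div_mul_cancel₀ _ hdq.ne').le, ?_⟩
  have e1 : aexp p (max q 2) * ((1 / max q 2 - 1 / 6) / (1 / q - 1 / 6)) =
      (1 / 3 - 1 / (2 * p)) / (1 / q - 1 / 6) := by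
    unfold aexp
    rw [div_mul_div_cancel₀ hdb.ne']
  have hq6 : 6 - q ≠ 0 := by linarith
  have e2 : 2 * ((1 / 3 - 1 / (2 * p)) / (1 / q - 1 / 6)) = ((4 * p - 6) * q) / ((6 - q) * p) := by
    have h3 : 1 / q - 1 / 6 = (6 - q) / (6 * q) := by field_simp
    rw [h3]; field_simp; ring
  rw [e1, e2]
  have e3 : ((4 * p - 6) * q) / ((6 - q) * p) * (3 / q - 1 / 2) = 2 - 3 / p := by
    field_simp; ring
  rw [mul_sub, e3]; linarith

/-- From the exponent `2p'` on, `b` is chosen slightly below `2p'`; this uses the strict inequality. -/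
theorem xd_ge {p q α β : ℝ} (hp : 3 / 2 < p) (hp3 : p < 3) (hq2 : 2 * (p / (p - 1)) ≤ q)
    (he : 0 ≤ 3 / q - 1 / 2 - β) (hc : α + 2 * β < 3 / p + 6 / q - 2) :
    ∃ b μ, XD p (3 / p - 1 / 2 - α) q (3 / q - 1 / 2 - β) b μ := by
  have p0 : 0 < p := by linarith
  have p1 : 0 < p - 1 := by linarith
  have q0 : 0 < q := lt_of_lt_of_le (by positivity) hq2
  have hcp : 0 < 1 / 3 - 1 / (2 * p) := by
    have h1 : 1 / (2 * p) < 1 / 3 := one_div_lt_one_div_of_lt (by norm_num) (by linarith)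
    linarith
  have hcp2 : 1 / 3 - 1 / (2 * p) < 1 / 6 := by
    have h1 : 1 / 6 < 1 / (2 * p) := one_div_lt_one_div_of_lt (by positivity) (by linarith)
    linarith
  have hP : 1 / (2 * (p / (p - 1))) - 1 / 6 = 1 / 3 - 1 / (2 * p) := by field_simp; ring
  have hdq : 1 / q - 1 / 6 ≤ 1 / 3 - 1 / (2 * p) := by
    have := one_div_le_one_div_of_le (by positivity) hq2; linarith
  set e := 3 / q - 1 / 2 - β with hee
  set eu := 3 / p - 1 / 2 - α with heu
  set c := 1 / 3 - 1 / (2 * p) with hcc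
  have hδ : 0 < eu + 2 * e - 1 / 2 := by
    have : 6 / q = 2 * (3 / q) := by ring
    rw [heu, hee]; linarith
  -- `a` slightly below `1`, so that the strict inequality at `a = 1` persists
  set t := min (1 / 2) ((eu + 2 * e - 1 / 2) / (2 * e + 1)) with ht
  have t0 : 0 < t := lt_min (by norm_num) (by positivity)
  have t1 : t ≤ 1 / 2 := min_le_left _ _
  have t2 : t * (2 * e + 1) ≤ eu + 2 * e - 1 / 2 := by
    rw [← le_div_iff₀ (by positivity)]; exact min_le_right _ _
  have a0 : 0 < 1 - t := by linarith
  have hca : c < c / (1 - t) := by rw [lt_div_iff₀ a0]; nlinarith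
  have hca2 : c / (1 - t) ≤ 1 / 3 := by rw [div_le_iff₀ a0]; linarith
  have hb : 1 / (1 / (1 / 6 + c / (1 - t))) - 1 / 6 = c / (1 - t) := by rw [one_div_one_div]; ring
  have hs : 0 < 1 / 6 + c / (1 - t) := by positivity
  refine ⟨1 / (1 / 6 + c / (1 - t)), 1, ?_, ?_, one_pos, le_rfl, ?_, ?_⟩
  · rw [le_div_iff₀ hs]; linarith
  · rw [hb]; exact hca
  · rw [hb]; linarith
  · have ea : aexp p (1 / (1 / 6 + c / (1 - t))) = 1 - t := by
      unfold aexp; rw [hb, ← hcc]; field_simp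
    rw [ea]; nlinarith

/-- Exponents controlling the linear coupling term `v θ`. -/
structure MN (q r β γ m n : ℝ) : Prop where
  m0 : 0 < m
  m1 : m ≤ 1
  n0 : 0 < n
  n1 : n ≤ 1
  lt2 : m + n < 2
  hm : m * (1 / q - 1 / 6) ≤ 1 / 3
  hn : n * (1 / r - 1 / 6) ≤ 1 / 3
  hmn : 1 ≤ m * (3 / q - 1 / 2 - β) + n * (3 / r - 1 / 2 - γ)

theorem mn_aux {q : ℝ} (hq : 1 ≤ q ∧ q < 2) : 0 < 2 * q / (6 - q) ∧ 2 * q / (6 - q) < 1 ∧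
    2 * q / (6 - q) * (1 / q - 1 / 6) = 1 / 3 ∧ 2 * q / (6 - q) * (3 / q - 1 / 2) = 1 := by
  obtain ⟨h1, h2⟩ := hq
  have q0 : 0 < q := by linarith
  have q6 : 0 < 6 - q := by linarith
  refine ⟨by positivity, ?_, ?_, ?_⟩
  · rw [div_lt_one q6]; linarith
  · field_simp; norm_num
  · field_simp; norm_num

theorem mn_aux2 {q : ℝ} (hq : 2 ≤ q) : (1:ℝ) * (1 / q - 1 / 6) ≤ 1 / 3 := by
  have := one_div_le_one_div_of_le two_pos hq; linarith

theorem mn_ss {q r β γ : ℝ} (hq : 1 ≤ q ∧ q < 2) (hr : 1 ≤ r ∧ r < 2)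
    (h : 2 * q / (6 - q) * β + 2 * r / (6 - r) * γ ≤ 1) : ∃ m n, MN q r β γ m n := by
  obtain ⟨a1, a2, a3, a4⟩ := mn_aux hq
  obtain ⟨b1, b2, b3, b4⟩ := mn_aux hr
  exact ⟨_, _, a1, a2.le, b1, b2.le, by linarith, a3.le, b3.le, by
    rw [mul_sub _ _ β, mul_sub _ _ γ, a4, b4]; linarith⟩

theorem mn_sl {q r β γ : ℝ} (hq : 1 ≤ q ∧ q < 2) (hr : 2 ≤ r)
    (h : 2 * q / (6 - q) * β + γ ≤ (6 - r) / (2 * r)) : ∃ m n, MN q r β γ m n := by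
  obtain ⟨a1, a2, a3, a4⟩ := mn_aux hq
  have e : (6 - r) / (2 * r) = 3 / r - 1 / 2 := by
    have : r ≠ 0 := by linarith
    field_simp; norm_num
  exact ⟨_, 1, a1, a2.le, one_pos, le_rfl, by linarith, a3.le, mn_aux2 hr, by
    rw [mul_sub _ _ β, a4]; linarith⟩

theorem mn_ls {q r β γ : ℝ} (hq : 2 ≤ q) (hr : 1 ≤ r ∧ r < 2)
    (h : β + 2 * r / (6 - r) * γ ≤ (6 - q) / (2 * q)) : ∃ m n, MN q r β γ m n := by
  obtain ⟨m, n, h⟩ := mn_sl (β := γ) (γ := β) hr hq (by linarith)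
  exact ⟨n, m, h.n0, h.n1, h.m0, h.m1, by linarith [h.lt2], h.hn, h.hm, by linarith [h.hmn]⟩

theorem mn_ll {q r β γ : ℝ} (hq : 2 ≤ q) (hr : 2 ≤ r)
    (h : β + γ < 3 / q + 3 / r - 2) : ∃ m n, MN q r β γ m n := by
  set s := (3 / q - 1 / 2 - β) + (3 / r - 1 / 2 - γ) with hs
  have s1 : 1 < s := by linarith
  have s0 : 0 < s := by linarith
  have i1 : 1 / s < 1 := by rw [div_lt_one s0]; exact s1
  have i0 : 0 < 1 / s := by positivity
  have hi : ∀ {x : ℝ}, 2 ≤ x → 1 / s * (1 / x - 1 / 6) ≤ 1 / 3 := by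
    intro x hx
    have := mn_aux2 hx
    rcases le_total 0 (1 / x - 1 / 6) with h2 | h2
    · nlinarith
    · nlinarith
  refine ⟨1 / s, 1 / s, i0, i1.le, i0, i1.le, by linarith, hi hq, hi hr, ?_⟩
  rw [← mul_add, ← hs, one_div_mul_cancel s0.ne']

/-- Each of the eight cases of the hypothesis provides exponents for the convective terms
and for the coupling term. -/
theorem exponents {p q r α β γ : ℝ}
    (hp : 3 / 2 < p ∧ p < 3) (hq : 1 ≤ q ∧ q ≤ 6) (hr : 1 ≤ r ∧ r ≤ 6)
    (hα : 0 ≤ α ∧ α ≤ 2 / p - 1 / 3) (hβ : 0 ≤ β ∧ β ≤ 3 / q - 1 / 2)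
    (hγ : 0 ≤ γ ∧ γ ≤ 3 / r - 1 / 2)
    (hA : ((1 ≤ q ∧ q < 2) ∧ (1 ≤ r ∧ r < 2) ∧
      α + ((4 * p - 6) * q) / ((6 - q) * p) * β ≤ 1 ∧
      α + ((4 * p - 6) * r) / ((6 - r) * p) * γ ≤ 1 ∧
      2 * q / (6 - q) * β + 2 * r / (6 - r) * γ ≤ 1) ∨
      ((1 ≤ q ∧ q < 2) ∧ (2 ≤ r ∧ r < 2 * (p / (p - 1))) ∧
      α + ((4 * p - 6) * q) / ((6 - q) * p) * β ≤ 1 ∧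
      α + ((4 * p - 6) * r) / ((6 - r) * p) * γ ≤ 1 ∧
      2 * q / (6 - q) * β + γ ≤ (6 - r) / (2 * r)) ∨
      ((1 ≤ q ∧ q < 2) ∧ (2 * (p / (p - 1)) ≤ r ∧ r ≤ 6) ∧
      α + ((4 * p - 6) * q) / ((6 - q) * p) * β ≤ 1 ∧
      α + 2 * γ < 3 / p + 6 / r - 2 ∧
      2 * q / (6 - q) * β + γ ≤ (6 - r) / (2 * r)) ∨
      ((2 ≤ q ∧ q < 2 * (p / (p - 1))) ∧ (1 ≤ r ∧ r < 2) ∧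
      α + ((4 * p - 6) * q) / ((6 - q) * p) * β ≤ 1 ∧
      α + ((4 * p - 6) * r) / ((6 - r) * p) * γ ≤ 1 ∧
      β + 2 * r / (6 - r) * γ ≤ (6 - q) / (2 * q)) ∨
      ((2 ≤ q ∧ q < 2 * (p / (p - 1))) ∧ (2 ≤ r ∧ r < 2 * (p / (p - 1))) ∧
      α + ((4 * p - 6) * q) / ((6 - q) * p) * β ≤ 1 ∧
      α + ((4 * p - 6) * r) / ((6 - r) * p) * γ ≤ 1 ∧
      β + γ < 3 / q + 3 / r - 2) ∨
      ((2 ≤ q ∧ q < 2 * (p / (p - 1))) ∧ (2 * (p / (p - 1)) ≤ r ∧ r ≤ 6) ∧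
      α + ((4 * p - 6) * q) / ((6 - q) * p) * β ≤ 1 ∧
      α + 2 * γ < 3 / p + 6 / r - 2 ∧
      β + γ < 3 / q + 3 / r - 2) ∨
      ((2 * (p / (p - 1)) ≤ q ∧ q ≤ 6) ∧ (1 ≤ r ∧ r < 2) ∧
      α + 2 * β < 3 / p + 6 / q - 2 ∧
      α + ((4 * p - 6) * r) / ((6 - r) * p) * γ ≤ 1 ∧
      β + 2 * r / (6 - r) * γ ≤ (6 - q) / (2 * q)) ∨
      ((2 * (p / (p - 1)) ≤ q ∧ q ≤ 6) ∧ (2 ≤ r ∧ r < 2 * (p / (p - 1))) ∧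
      α + 2 * β < 3 / p + 6 / q - 2 ∧
      α + ((4 * p - 6) * r) / ((6 - r) * p) * γ ≤ 1 ∧
      β + γ < 3 / q + 3 / r - 2)) :
    ∃ b1 μ1 b2 μ2 b3 μ3 m n, XD p (3 / p - 1 / 2 - α) p (3 / p - 1 / 2 - α) b1 μ1 ∧
      XD p (3 / p - 1 / 2 - α) q (3 / q - 1 / 2 - β) b2 μ2 ∧
      XD p (3 / p - 1 / 2 - α) r (3 / r - 1 / 2 - γ) b3 μ3 ∧ MN q r β γ m n := by
  obtain ⟨p1, p3⟩ := hp
  have p0 : 0 < p := by linarith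
  have pm : 0 < p - 1 := by linarith
  have hP2 : 2 < 2 * (p / (p - 1)) := by
    rw [← mul_div_assoc, lt_div_iff₀ pm]; linarith
  have hpp : p < 2 * (p / (p - 1)) := by
    rw [← mul_div_assoc, lt_div_iff₀ pm]; nlinarith
  have hev : 0 ≤ 3 / q - 1 / 2 - β := by linarith
  have het : 0 ≤ 3 / r - 1 / 2 - γ := by linarith
  obtain ⟨b1, μ1, x1⟩ := xd_lt (α := α) (β := α) p1 (by linarith) hpp (by
    have h6 : 0 < 6 - p := by linarith
    have e1 : α + ((4 * p - 6) * p) / ((6 - p) * p) * α = 3 * p / (6 - p) * α := by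
      field_simp; ring
    have e2 : 3 * p / (6 - p) * (2 / p - 1 / 3) = 1 := by field_simp; ring
    rw [e1, ← e2]
    exact mul_le_mul_of_nonneg_left hα.2 (by positivity))
  suffices H : (∃ b2 μ2, XD p (3 / p - 1 / 2 - α) q (3 / q - 1 / 2 - β) b2 μ2) ∧
      (∃ b3 μ3, XD p (3 / p - 1 / 2 - α) r (3 / r - 1 / 2 - γ) b3 μ3) ∧ ∃ m n, MN q r β γ m n by
    obtain ⟨⟨b2, μ2, x2⟩, ⟨b3, μ3, x3⟩, m, n, h⟩ := H
    exact ⟨b1, μ1, b2, μ2, b3, μ3, m, n, x1, x2, x3, h⟩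
  rcases hA with ⟨h1, h2, h3, h4, h5⟩ | ⟨h1, h2, h3, h4, h5⟩ | ⟨h1, h2, h3, h4, h5⟩ |
    ⟨h1, h2, h3, h4, h5⟩ | ⟨h1, h2, h3, h4, h5⟩ | ⟨h1, h2, h3, h4, h5⟩ | ⟨h1, h2, h3, h4, h5⟩ |
    ⟨h1, h2, h3, h4, h5⟩
  · exact ⟨xd_lt p1 hq.1 (by linarith) h3, xd_lt p1 hr.1 (by linarith) h4, mn_ss h1 h2 h5⟩
  · exact ⟨xd_lt p1 hq.1 (by linarith) h3, xd_lt p1 hr.1 h2.2 h4, mn_sl h1 h2.1 h5⟩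
  · exact ⟨xd_lt p1 hq.1 (by linarith) h3, xd_ge p1 p3 h2.1 het h4, mn_sl h1 (by linarith) h5⟩
  · exact ⟨xd_lt p1 hq.1 h1.2 h3, xd_lt p1 hr.1 (by linarith) h4, mn_ls h1.1 h2 h5⟩
  · exact ⟨xd_lt p1 hq.1 h1.2 h3, xd_lt p1 hr.1 h2.2 h4, mn_ll h1.1 h2.1 h5⟩
  · exact ⟨xd_lt p1 hq.1 h1.2 h3, xd_ge p1 p3 h2.1 het h4, mn_ll h1.1 (by linarith) h5⟩
  · exact ⟨xd_ge p1 p3 h1.1 hev h3, xd_lt p1 hr.1 (by linarith) h4, mn_ls (by linarith) h2 h5⟩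
  · exact ⟨xd_ge p1 p3 h1.1 hev h3, xd_lt p1 hr.1 h2.2 h4, mn_ll (by linarith) h2.1 h5⟩

/-! ### Absorption of the outer energy -/

theorem young_pow {s : ℝ} (s0 : 0 < s) (s2 : s < 2) : ∃ k : ℕ, ∀ ε > 0, ∃ C > 0, ∀ M N : ℝ, 1 ≤ M →
    0 ≤ N → M * N ^ s ≤ ε * N ^ 2 + C * M ^ k := by
  obtain ⟨k, hk⟩ := exists_nat_ge (1 + s / (2 - s))
  have h2s : 0 < 2 - s := by linarith
  refine ⟨k, fun ε ε0 => ⟨(1 / ε) ^ (s / (2 - s)), by positivity, fun M N M1 N0 => ?_⟩⟩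
  have M0 : 0 < M := by linarith
  rcases le_or_gt (M / ε) (N ^ (2 - s)) with h | h
  · have h1 : M * N ^ s ≤ ε * N ^ 2 := by
      have : N ^ 2 = N ^ (2 - s) * N ^ s := by
        rw [← Real.rpow_add_of_nonneg N0 h2s.le s0.le]; norm_num
      rw [this, ← mul_assoc]
      refine mul_le_mul_of_nonneg_right ?_ (by positivity)
      rw [div_le_iff₀ ε0] at h; linarith
    have : 0 ≤ (1 / ε) ^ (s / (2 - s)) * M ^ k := by positivity
    linarith
  · have h1 : N ^ s ≤ (M / ε) ^ (s / (2 - s)) := by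
      have := Real.rpow_le_rpow (by positivity) h.le (by positivity : 0 ≤ s / (2 - s))
      rwa [← Real.rpow_mul N0, mul_div_cancel₀ _ h2s.ne'] at this
    have h2 : M * M ^ (s / (2 - s)) ≤ M ^ k := by
      rw [← Real.rpow_natCast M k]
      nth_rewrite 1 [← Real.rpow_one M]
      rw [← Real.rpow_add M0]
      exact Real.rpow_le_rpow_of_exponent_le M1 hk
    calc M * N ^ s ≤ M * (M / ε) ^ (s / (2 - s)) := by gcongr
      _ = (1 / ε) ^ (s / (2 - s)) * (M * M ^ (s / (2 - s))) := by
        rw [div_eq_mul_one_div, Real.mul_rpow M0.le (by positivity)]; ring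
      _ ≤ (1 / ε) ^ (s / (2 - s)) * M ^ k := by gcongr
      _ ≤ _ := by have : 0 ≤ ε * N ^ 2 := by positivity
                  linarith

/-- Young's inequality for finitely many subquadratic powers. -/
theorem young_sum (s : Fin 6 → ℝ) (s0 : ∀ i, 0 < s i) (s2 : ∀ i, s i < 2) :
    ∃ k : ℕ, ∀ ε > 0, ∃ C > 0, ∀ M N : ℝ, 1 ≤ M → 0 ≤ N →
    M * ∑ i, N ^ s i ≤ ε * N ^ 2 + C * M ^ k := by
  choose k hk using fun i => young_pow (s0 i) (s2 i)
  refine ⟨∑ i, k i, fun ε ε0 => ?_⟩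
  choose C C0 hC using fun i => hk i (ε / 6) (by positivity)
  refine ⟨∑ i, C i, Finset.sum_pos (fun i _ => C0 i) ⟨0, Finset.mem_univ _⟩, fun M N M1 N0 => ?_⟩
  rw [Finset.mul_sum]
  calc ∑ i, M * N ^ s i ≤ ∑ i : Fin 6, (ε / 6 * N ^ 2 + C i * M ^ (∑ i, k i)) := by
        refine Finset.sum_le_sum fun i _ => (hC i M N M1 N0).trans ?_
        have : M ^ k i ≤ M ^ (∑ i, k i) :=
          pow_le_pow_right₀ M1 (Finset.single_le_sum (fun _ _ => Nat.zero_le _) (Finset.mem_univ i))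
        have := mul_le_mul_of_nonneg_left this (C0 i).le
        linarith
    _ = _ := by
        simp only [Finset.sum_add_distrib, Finset.sum_mul]
        simp; ring

/-- The hole-filling iteration: an inequality `f ρ ≤ ε f τ + B Λ^k` at the midpoint `τ` of
`ρ` and `2R`, with `ε = 2^{-k-1}`, bounds `f` independently of `R` and of `f (2R)`. -/
theorem hole_fill {f : ℝ → ℝ} {R B F : ℝ} {k : ℕ} (R0 : 0 < R) (hB : 0 ≤ B) (f0 : ∀ ρ, 0 ≤ f ρ)
    (hF : ∀ ρ, 1.9 * R ≤ ρ → ρ < 2 * R → f ρ ≤ F)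
    (h : ∀ ρ, 1.9 * R ≤ ρ → ρ < 2 * R → f ρ ≤ (1 / 2) ^ (k + 1) * f ((ρ + 2 * R) / 2) +
      B * (16 * R / (2 * R - ρ)) ^ k) : f (1.9 * R) ≤ 10 ^ k * (2 * (B * 16 ^ k)) := by
  have key : ∀ n : ℕ, ∀ ρ, 1.9 * R ≤ ρ → ρ < 2 * R →
      ((2 * R - ρ) / R) ^ k * f ρ ≤ F * (1 / 2) ^ n + 2 * (B * 16 ^ k) := by
    intro n
    induction n with
    | zero =>
      intro ρ h1 h2
      have a1 : ((2 * R - ρ) / R) ^ k ≤ 1 :=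
        pow_le_one₀ (div_nonneg (by linarith) R0.le) ((div_le_one R0).2 (by linarith))
      have := mul_le_mul a1 (hF ρ h1 h2) (f0 ρ) zero_le_one
      have : 0 ≤ 2 * (B * 16 ^ k) := by positivity
      rw [pow_zero, mul_one]; linarith
    | succ n ih =>
      intro ρ h1 h2
      have d0 : 0 < 2 * R - ρ := by linarith
      have i1 := ih ((ρ + 2 * R) / 2) (by linarith) (by linarith)
      have e1 : (2 * R - (ρ + 2 * R) / 2) / R = (2 * R - ρ) / R * (1 / 2) := by ring
      rw [e1, mul_pow] at i1
      have i2 := mul_le_mul_of_nonneg_left (h ρ h1 h2) (by positivity : 0 ≤ ((2 * R - ρ) / R) ^ k)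
      have e2 : ((2 * R - ρ) / R) ^ k * (B * (16 * R / (2 * R - ρ)) ^ k) = B * 16 ^ k := by
        rw [mul_left_comm, ← mul_pow]; congr 2; field_simp
      rw [mul_add, e2, pow_succ] at i2
      rw [pow_succ]
      nlinarith
  have k1 : ∀ n : ℕ, (1 / 10) ^ k * f (1.9 * R) ≤ F * (1 / 2) ^ n + 2 * (B * 16 ^ k) := by
    intro n
    have := key n (1.9 * R) le_rfl (by linarith)
    have e : (2 * R - 1.9 * R) / R = 1 / 10 := by field_simp; norm_num
    rwa [e] at this
  have lim : Tendsto (fun n : ℕ => F * (1 / 2 : ℝ) ^ n + 2 * (B * 16 ^ k)) atTop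
      (nhds (F * 0 + 2 * (B * 16 ^ k))) :=
    ((tendsto_pow_atTop_nhds_zero_of_lt_one (by norm_num) (by norm_num)).const_mul F).add_const _
  have k2 := ge_of_tendsto' lim k1
  rw [mul_zero, zero_add] at k2
  calc f (1.9 * R) = 10 ^ k * ((1 / 10) ^ k * f (1.9 * R)) := by
        rw [← mul_assoc, ← mul_pow]; norm_num
    _ ≤ _ := by gcongr

/-- Derivatives dominated by the dissipation density are bounded in `L²` by its integral. -/
theorem nb_grad {g D : E3 → ℝ} (cD : Continuous D) (hg : ∀ x, g x ^ 2 ≤ D x) (τ : ℝ) :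
    NB g 2 (ball 0 τ) (√(∫ x in ball 0 τ, D x)) := by
  have D0 : ∀ x, 0 ≤ D x := fun x => (sq_nonneg _).trans (hg x)
  have iD : IntegrableOn D (ball 0 τ) :=
    (cD.continuousOn.integrableOn_compact (isCompact_closedBall (0:E3) τ)).mono_set ball_subset_closedBall
  refine ⟨Real.sqrt_nonneg _, ?_⟩
  rw [ENNReal.ofReal_rpow_of_nonneg (Real.sqrt_nonneg _) (by norm_num)]
  have : √(∫ x in ball 0 τ, D x) ^ (2:ℝ) = ∫ x in ball 0 τ, D x := by
    norm_cast
    exact Real.sq_sqrt (integral_nonneg D0)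
  rw [this, ofReal_integral_eq_lintegral_ofReal iD (Eventually.of_forall D0)]
  refine lintegral_mono fun x => ?_
  rw [← ofReal_norm, ENNReal.ofReal_rpow_of_nonneg (norm_nonneg _) (by norm_num)]
  refine ENNReal.ofReal_le_ofReal ?_
  norm_cast
  rw [Real.norm_eq_abs, sq_abs]; exact hg x

theorem pd3_one_sub (f : E3 → ℝ) (j : Fin 3) (x : E3) :
    pd3 j (fun y => 1 - f y) x = - pd3 j f x := by
  unfold pd3
  rw [fderiv_const_sub]; rfl

/-- An `L⁶` bound on a shell from gradients in `L²` and an `L¹` bound on a larger shell. -/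
theorem sob_shell : ∃ C > 0, ∀ (g : E3 → ℝ) (R ρ ℓ G a : ℝ), Sm g → 0 < R → 0 < ℓ → 1.9 * R ≤ ρ →
    ℓ ≤ R / 80 → ρ + 8 * ℓ ≤ 2 * R → (∀ j, NB (pd3 j g) 2 (ball 0 (ρ + 8 * ℓ)) G) →
    NB g 1 (Sh R (2 * R)) a →
    NB g 6 (Sh (1.05 * R) (ρ + 6 * ℓ)) (C * (G + ℓ⁻¹ ^ (5 / 2 : ℝ) * a)) := by
  obtain ⟨C, hC, HS⟩ := sobolev_loc
  obtain ⟨Ce, hCe, HE⟩ := exists_eta_bound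
  refine ⟨C * (1 + (2 * Ce) ^ (5 / 2 : ℝ)), by positivity, ?_⟩
  intro g R ρ ℓ G a sg R0 ℓ0 hρ hℓ hτ hG ha
  set φ := eta (ρ + 6 * ℓ) (ρ + 7 * ℓ) with hφ
  set ψ := eta R (1.05 * R) with hψ
  have s1 : (0:ℝ) ≤ ρ + 6 * ℓ := by linarith
  have s2 : ρ + 6 * ℓ < ρ + 7 * ℓ := by linarith
  have s3 : R < 1.05 * R := by linarith
  have sφ : Sm φ := eta_smooth _ _
  have sψ : Sm ψ := eta_smooth _ _
  have sψ' : Sm (fun y => 1 - ψ y) := contDiff_const.sub sψ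
  have eD : ∀ j x, pd3 j (fun y => φ y * (1 - ψ y)) x = (1 - ψ x) * pd3 j φ x - φ x * pd3 j ψ x := by
    intro j x
    rw [pd3_mul sφ sψ', pd3_one_sub ψ]; ring
  have φ0 : ∀ x, 0 ≤ φ x := eta_nonneg _ _
  have φ1 : ∀ x, φ x ≤ 1 := eta_le_one _ _
  have ψ0 : ∀ x, 0 ≤ ψ x := eta_nonneg _ _
  have ψ1 : ∀ x, ψ x ≤ 1 := eta_le_one _ _
  have hA' : ∀ x, φ x * (1 - ψ x) ≠ 0 → R ≤ ‖x‖ ∧ ‖x‖ < ρ + 8 * ℓ := by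
    intro x hx
    refine ⟨?_, ?_⟩
    · by_contra hc
      have : ψ x = 1 := eta_one R0.le s3 (by linarith)
      exact hx (by rw [this]; ring)
    · by_contra hc
      have : φ x = 0 := eta_zero s1 s2 (by linarith)
      exact hx (by rw [this]; ring)
  have hA'' : ∀ j x, pd3 j (fun y => φ y * (1 - ψ y)) x ≠ 0 → x ∈ Sh R (2 * R) := by
    intro j x hx
    rw [eD] at hx
    refine ⟨?_, ?_⟩
    · by_contra hc
      have h1 : pd3 j φ x = 0 := pd3_eta_zero s1 s2 j (Or.inl (by linarith))
      have h2 : pd3 j ψ x = 0 := pd3_eta_zero R0.le s3 j (Or.inl (by linarith))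
      exact hx (by rw [h1, h2]; ring)
    · by_contra hc
      have h1 : pd3 j φ x = 0 := pd3_eta_zero s1 s2 j (Or.inr (by linarith))
      have h2 : pd3 j ψ x = 0 := pd3_eta_zero R0.le s3 j (Or.inr (by linarith))
      exact hx (by rw [h1, h2]; ring)
  have hk : ∀ j x, |pd3 j (fun y => φ y * (1 - ψ y)) x| ≤ 2 * Ce * ℓ⁻¹ := by
    intro j x
    rw [eD]
    have b1 : |pd3 j φ x| ≤ Ce * ℓ⁻¹ := by
      refine (HE _ _ s1 s2 j x).trans (le_of_eq ?_)
      rw [← div_eq_mul_inv]; congr 1; ring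
    have b2 : |pd3 j ψ x| ≤ Ce * ℓ⁻¹ := by
      refine (HE _ _ R0.le s3 j x).trans ?_
      rw [← div_eq_mul_inv]
      exact div_le_div_of_nonneg_left hCe.le ℓ0 (by linarith)
    have c1 : |(1 - ψ x) * pd3 j φ x| ≤ Ce * ℓ⁻¹ := by
      rw [abs_mul, abs_of_nonneg (by linarith [ψ1 x])]
      exact (mul_le_of_le_one_left (abs_nonneg _) (by linarith [ψ0 x])).trans b1
    have c2 : |φ x * pd3 j ψ x| ≤ Ce * ℓ⁻¹ := by
      rw [abs_mul, abs_of_nonneg (φ0 x)]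
      exact (mul_le_of_le_one_left (abs_nonneg _) (φ1 x)).trans b2
    calc _ ≤ |(1 - ψ x) * pd3 j φ x| + |φ x * pd3 j ψ x| := abs_sub _ _
      _ ≤ _ := by linarith
  have S := HS g (fun y => φ y * (1 - ψ y)) (ball 0 (ρ + 8 * ℓ)) (Sh R (2 * R)) (2 * Ce * ℓ⁻¹) G a sg
    (sφ.mul sψ') (eta_supp s1 s2).mul_right (fun x => mul_nonneg (φ0 x) (by linarith [ψ1 x]))
    (fun x => mul_le_one₀ (φ1 x) (by linarith [ψ1 x]) (by linarith [ψ0 x])) (by positivity) hk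
    measurableSet_ball (measurableSet_Sh _ _)
    (fun x hx => by rw [mem_ball_zero_iff]; exact (hA' x hx).2) hA'' hG ha
  refine S.mono (by norm_num) (Set.subset_univ _) ?_ (measurableSet_Sh _ _) ?_
  · intro x hx
    have h1 : φ x = 1 := eta_one s1 s2 hx.2.le
    have h2 : ψ x = 0 := eta_zero R0.le s3 hx.1
    simp [h1, h2]
  · have G0 := (hG 0).1
    have a0 := ha.1
    rw [Real.mul_rpow (by positivity) (by positivity)]
    have z1 : 0 ≤ (2 * Ce) ^ (5 / 2 : ℝ) := by positivity
    have z2 : 0 ≤ ℓ⁻¹ ^ (5 / 2 : ℝ) * a := by positivity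
    rw [mul_assoc C]
    refine mul_le_mul_of_nonneg_left ?_ hC.le
    nlinarith [mul_nonneg z1 G0]

/-- The given bound implies an `L¹` bound which scales like the `L⁶` norm. -/
theorem nb_one {w : E3 → ℝ} {q β K R : ℝ} (hq : 1 ≤ q) (he : 0 ≤ 3 / q - 1 / 2 - β) (hK : 1 ≤ K)
    (hR : 1 ≤ R) (cw : Continuous w) (h1 : NB w q (Sh R (2 * R)) (K * R ^ β)) :
    NB w 1 (Sh R (2 * R)) (40 * K * R ^ (5 / 2 : ℝ)) := by
  have R0 : 0 < R := by linarith
  have hvol : volume (Sh R (2 * R)) ≤ ENNReal.ofReal (40 * R ^ 3) := by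
    have : 40 * R ^ 3 = 5 * (2 * R) ^ 3 := by ring
    rw [this]
    refine (measure_mono ?_).trans (vol_ball_le (by positivity))
    intro x hx
    rw [mem_ball_zero_iff]; linarith [hx.2]
  obtain ⟨N, h6⟩ := NB.exists cw (t := 6) (by norm_num) (A := Sh R (2 * R)) (ρ := 2 * R)
    (fun x hx => by rw [mem_ball_zero_iff]; exact hx.2)
  have hq1 : 1 / q ≤ 1 := by rw [div_le_one (by linarith)]; exact hq
  have := nb_norm (b := 1) (μ := 1) hq le_rfl zero_le_one le_rfl (by linarith) hK R0 cw hvol h1 h6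
  refine this.const_mono one_pos ?_
  rw [sub_self, Real.rpow_zero, mul_one]
  refine mul_le_mul_of_nonneg_left (Real.rpow_le_rpow_of_exponent_le hR (by linarith)) (by linarith)

/-- The bounds supplied by the hypothesis at one scale: on the shell `R ≤ |x| < 2R` the fields
have norms at most `K R^α`, `K R^β`, `K R^γ` in `L^p`, `L^q`, `L^r`. -/
structure ShellBd (p q r α β γ : ℝ) (U V : Fin 3 → E3 → ℝ) (Θ : E3 → ℝ) (R K : ℝ) : Prop where
  hU : ∀ i, NB (U i) p (Sh R (2 * R)) (K * R ^ α)
  hV : ∀ i, NB (V i) q (Sh R (2 * R)) (K * R ^ β)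
  hΘ : NB Θ r (Sh R (2 * R)) (K * R ^ γ)

/-- The local energy estimate: the dissipation in `B_ρ` is controlled by subquadratic powers
`N ^ s i` of a common bound `N` for the `L²` norms of the gradients and the `L⁶` norms of the
fields on a slightly larger shell. -/
def EnergyEst (p q r α β γ : ℝ) (s : Fin 6 → ℝ) (C : ℝ) : Prop :=
  ∀ (U V : Fin 3 → E3 → ℝ) (P Θ : E3 → ℝ) (R ρ ℓ N K : ℝ), CSol U V P Θ → 1 ≤ R → 0 < ℓ →
    1.9 * R ≤ ρ → ℓ ≤ R / 80 → ρ + 8 * ℓ ≤ 2 * R → 1 ≤ K →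
    (∀ i j, NB (pd3 j (U i)) 2 (Sh (1.05 * R) (ρ + 6 * ℓ)) N) →
    (∀ i j, NB (pd3 j (V i)) 2 (Sh (1.05 * R) (ρ + 6 * ℓ)) N) →
    (∀ j, NB (pd3 j Θ) 2 (Sh (1.05 * R) (ρ + 6 * ℓ)) N) →
    (∀ i, NB (U i) 6 (Sh (1.05 * R) (ρ + 6 * ℓ)) N) →
    (∀ i, NB (V i) 6 (Sh (1.05 * R) (ρ + 6 * ℓ)) N) →
    NB Θ 6 (Sh (1.05 * R) (ρ + 6 * ℓ)) N →
    ShellBd p q r α β γ U V Θ R K →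
    ∫ x in ball 0 ρ, Ds U V Θ x ≤ C * ((R / ℓ) ^ 5 * K ^ 3) * ∑ i, N ^ s i

theorem exists_energyEst {p q r α β γ b1 μ1 b2 μ2 b3 μ3 m n : ℝ} (hp : 3 / 2 < p) (hp3 : p < 3)
    (hq : 1 ≤ q) (hr : 1 ≤ r) (heu : 0 ≤ 3 / p - 1 / 2 - α) (hev : 0 ≤ 3 / q - 1 / 2 - β)
    (het : 0 ≤ 3 / r - 1 / 2 - γ)
    (x1 : XD p (3 / p - 1 / 2 - α) p (3 / p - 1 / 2 - α) b1 μ1)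
    (x2 : XD p (3 / p - 1 / 2 - α) q (3 / q - 1 / 2 - β) b2 μ2)
    (x3 : XD p (3 / p - 1 / 2 - α) r (3 / r - 1 / 2 - γ) b3 μ3) (hmn : MN q r β γ m n) :
    ∃ s : Fin 6 → ℝ, (∀ i, 0 < s i) ∧ (∀ i, s i < 2) ∧ ∃ C > 0, EnergyEst p q r α β γ s C := by
  have hx : ∀ {q' e b μ : ℝ}, XD p (3 / p - 1 / 2 - α) q' e b μ →
      0 < 2 - 2 * (aexp p b * μ) ∧ 2 - 2 * (aexp p b * μ) < 2 := by
    intro q' e b μ x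
    obtain ⟨a0, a1⟩ := aexp_bounds hp x.hab
    have := mul_pos a0 x.μ0
    have := mul_le_mul_of_nonneg_left x.μ1 a0.le
    constructor <;> linarith
  refine ⟨![8 / 5, 2 - 2 * (aexp p b1 * μ1), 2 - 2 * (aexp p b2 * μ2), 2 - 2 * (aexp p b3 * μ3),
    2 - m - n, 1], ?_, ?_, ?_⟩
  · intro i
    have := (hx x1).1; have := (hx x2).1; have := (hx x3).1; have := hmn.lt2
    fin_cases i <;> simp <;> linarith
  · intro i
    have := (hx x1).2; have := (hx x2).2; have := (hx x3).2; have := hmn.m0; have := hmn.n0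
    fin_cases i <;> simp <;> linarith
  obtain ⟨C, hC, H⟩ := norm_est p q r α β γ b1 μ1 b2 μ2 b3 μ3 m n hp hp3 hq hr heu hev het x1 x2 x3
    hmn.m0.le hmn.m1 hmn.n0.le hmn.n1 hmn.hm hmn.hn hmn.hmn
  refine ⟨C, hC, ?_⟩
  intro U V P Θ R ρ ℓ N K hS hR hℓ hρ hℓR hτ hK g1 g2 g3 k1 k2 k3 hb
  have hsub : Sh (1.05 * R) (ρ + 6 * ℓ) ⊆ Sh R (2 * R) := fun x hx =>
    ⟨by linarith [hx.1], by linarith [hx.2]⟩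
  have := H U V P Θ R ρ ℓ N K hS hR hℓ hρ hℓR hτ hK g1 g2 g3 k1 k2 k3
    (fun i => (hb.hU i).set_mono hsub) (fun i => (hb.hV i).set_mono hsub) (hb.hΘ.set_mono hsub)
  refine this.trans (le_of_eq ?_)
  congr 1
  simp [Fin.sum_univ_succ]
  ring

theorem sq_le_Ds_U (U V : Fin 3 → E3 → ℝ) (Θ : E3 → ℝ) (i j : Fin 3) (x : E3) :
    pd3 j (U i) x ^ 2 ≤ Ds U V Θ x := by
  have h1 : pd3 j (U i) x ^ 2 ≤ ∑ j, pd3 j (U i) x ^ 2 :=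
    Finset.single_le_sum (f := fun j => pd3 j (U i) x ^ 2) (fun _ _ => sq_nonneg _) (Finset.mem_univ j)
  have h2 : ∑ j, pd3 j (U i) x ^ 2 ≤ ∑ i, ∑ j, pd3 j (U i) x ^ 2 :=
    Finset.single_le_sum (f := fun i => ∑ j, pd3 j (U i) x ^ 2)
      (fun _ _ => Finset.sum_nonneg fun _ _ => sq_nonneg _) (Finset.mem_univ i)
  have h3 : 0 ≤ ∑ i, ∑ j, pd3 j (V i) x ^ 2 := by positivity
  have h4 : 0 ≤ ∑ j, pd3 j Θ x ^ 2 := by positivity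
  unfold Ds; linarith

theorem sq_le_Ds_V (U V : Fin 3 → E3 → ℝ) (Θ : E3 → ℝ) (i j : Fin 3) (x : E3) :
    pd3 j (V i) x ^ 2 ≤ Ds U V Θ x := by
  have : Ds U V Θ x = Ds V U Θ x := by unfold Ds; ring
  rw [this]; exact sq_le_Ds_U V U Θ i j x

theorem sq_le_Ds_Θ (U V : Fin 3 → E3 → ℝ) (Θ : E3 → ℝ) (j : Fin 3) (x : E3) :
    pd3 j Θ x ^ 2 ≤ Ds U V Θ x := by
  have h1 : pd3 j Θ x ^ 2 ≤ ∑ j, pd3 j Θ x ^ 2 :=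
    Finset.single_le_sum (f := fun j => pd3 j Θ x ^ 2) (fun _ _ => sq_nonneg _) (Finset.mem_univ j)
  have h2 : 0 ≤ ∑ i, ∑ j, pd3 j (U i) x ^ 2 := by positivity
  have h3 : 0 ≤ ∑ i, ∑ j, pd3 j (V i) x ^ 2 := by positivity
  unfold Ds; linarith

set_option maxHeartbeats 800000 in
/-- Bounds at one scale control the dissipation in `B_{1.9R}`, uniformly in `R ≥ 1` and in the
solution: the energy estimate is absorbed by Young's inequality and hole filling. -/
theorem energy_bound {p q r α β γ : ℝ} {s : Fin 6 → ℝ} (hp : 1 ≤ p) (hq : 1 ≤ q) (hr : 1 ≤ r)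
    (heu : 0 ≤ 3 / p - 1 / 2 - α) (hev : 0 ≤ 3 / q - 1 / 2 - β) (het : 0 ≤ 3 / r - 1 / 2 - γ)
    (s0 : ∀ i, 0 < s i) (s2 : ∀ i, s i < 2) {C : ℝ} (hC : 0 < C) (H : EnergyEst p q r α β γ s C)
    {K : ℝ} (hK : 1 ≤ K) : ∃ B > 0, ∀ (U V : Fin 3 → E3 → ℝ) (P Θ : E3 → ℝ) (R : ℝ),
      CSol U V P Θ → 1 ≤ R → ShellBd p q r α β γ U V Θ R K →
      ∫ x in ball 0 (1.9 * R), Ds U V Θ x ≤ B := by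
  obtain ⟨C0, hC0, HS⟩ := sob_shell
  obtain ⟨k, hk⟩ := young_sum s s0 s2
  set C1 := C0 + 1 with hC1
  set k' := 5 * k + 5 with hk'
  set ε : ℝ := (1 / 2) ^ (k' + 1) with hε
  have ε0 : 0 < ε := by positivity
  obtain ⟨C2, hC2, HY⟩ := hk (ε / (2 * C1 ^ 2)) (by positivity)
  set B := 1600 * ε * K ^ 2 + C2 * ((C + 1) * K ^ 3) ^ k with hB
  have K0 : 0 < K := by linarith
  have B0 : 0 < B := by positivity
  refine ⟨10 ^ k' * (2 * (B * 16 ^ k')), by positivity, ?_⟩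
  intro U V P Θ R hS hR hb
  have R0 : 0 < R := by linarith
  have cD := Ds_continuous hS
  have D0 := Ds_nonneg U V Θ
  have iD : ∀ ρ, IntegrableOn (Ds U V Θ) (ball 0 ρ) := fun ρ =>
    (cD.continuousOn.integrableOn_compact (isCompact_closedBall (0:E3) ρ)).mono_set
      ball_subset_closedBall
  set f : ℝ → ℝ := fun ρ => ∫ x in ball 0 ρ, Ds U V Θ x with hf
  have f0 : ∀ ρ, 0 ≤ f ρ := fun ρ => integral_nonneg D0
  refine hole_fill (f := f) (F := f (2 * R)) R0 B0.le f0 ?_ ?_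
  · intro ρ _ h2
    exact setIntegral_mono_set (iD _) (Eventually.of_forall D0)
      (ball_subset_ball h2.le).eventuallyLE
  intro ρ h1 h2
  set ℓ := (2 * R - ρ) / 16 with hℓ
  have ℓ0 : 0 < ℓ := by rw [hℓ]; linarith
  have hℓR : ℓ ≤ R / 80 := by rw [hℓ]; linarith
  have hτ : ρ + 8 * ℓ ≤ 2 * R := by rw [hℓ]; linarith
  have eτ : (ρ + 2 * R) / 2 = ρ + 8 * ℓ := by rw [hℓ]; ring
  have eΛ : 16 * R / (2 * R - ρ) = R / ℓ := by
    rw [hℓ]; have : 2 * R - ρ ≠ 0 := by linarith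
    field_simp
  rw [eτ, eΛ]
  set Λ := R / ℓ with hΛ
  have Λ1 : 1 ≤ Λ := by rw [hΛ, le_div_iff₀ ℓ0]; linarith
  set E := f (ρ + 8 * ℓ) with hE
  have E0 : 0 ≤ E := f0 _
  set N := C1 * (√E + Λ ^ (5 / 2 : ℝ) * (40 * K)) with hN
  have L0 : 0 ≤ Λ ^ (5 / 2 : ℝ) := by positivity
  have N0 : 0 ≤ N := by positivity
  have hsubτ : Sh (1.05 * R) (ρ + 6 * ℓ) ⊆ ball 0 (ρ + 8 * ℓ) := fun x hx => by
    rw [mem_ball_zero_iff]; linarith [hx.2]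
  have hGN : √E ≤ N := by
    rw [hN]; nlinarith [Real.sqrt_nonneg E, mul_nonneg L0 K0.le, mul_nonneg hC0.le (Real.sqrt_nonneg E),
      mul_nonneg hC0.le (mul_nonneg L0 K0.le)]
  have eL : ℓ⁻¹ ^ (5 / 2 : ℝ) * (40 * K * R ^ (5 / 2 : ℝ)) = Λ ^ (5 / 2 : ℝ) * (40 * K) := by
    rw [hΛ, div_eq_mul_inv R, Real.mul_rpow R0.le (by positivity)]; ring
  have grad : ∀ {g : E3 → ℝ}, (∀ x, g x ^ 2 ≤ Ds U V Θ x) → NB g 2 (ball 0 (ρ + 8 * ℓ)) (√E) :=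
    fun hg => nb_grad cD hg _
  have gradN : ∀ {g : E3 → ℝ}, (∀ x, g x ^ 2 ≤ Ds U V Θ x) →
      NB g 2 (Sh (1.05 * R) (ρ + 6 * ℓ)) N := fun hg =>
    ((grad hg).set_mono hsubτ).const_mono (by norm_num) hGN
  have six : ∀ {g : E3 → ℝ} {q β : ℝ}, Sm g → 1 ≤ q → 0 ≤ 3 / q - 1 / 2 - β →
      NB g q (Sh R (2 * R)) (K * R ^ β) → (∀ j x, pd3 j g x ^ 2 ≤ Ds U V Θ x) →
      NB g 6 (Sh (1.05 * R) (ρ + 6 * ℓ)) N := by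
    intro g q β sg hq he hg hD
    have := HS g R ρ ℓ _ _ sg R0 ℓ0 h1 hℓR hτ (fun j => grad (hD j))
      (nb_one hq he hK hR sg.continuous hg)
    rw [eL] at this
    refine this.const_mono (by norm_num) ?_
    rw [hN]
    exact mul_le_mul_of_nonneg_right (by linarith) (by positivity)
  have main := H U V P Θ R ρ ℓ N K hS hR ℓ0 h1 hℓR hτ hK
    (fun i j => gradN (sq_le_Ds_U U V Θ i j)) (fun i j => gradN (sq_le_Ds_V U V Θ i j))
    (fun j => gradN (sq_le_Ds_Θ U V Θ j))
    (fun i => six (hS.sU i) hp heu (hb.hU i) (sq_le_Ds_U U V Θ i))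
    (fun i => six (hS.sV i) hq hev (hb.hV i) (sq_le_Ds_V U V Θ i))
    (six hS.sΘ hr het hb.hΘ (sq_le_Ds_Θ U V Θ)) hb
  set M := (C + 1) * (Λ ^ 5 * K ^ 3) with hM
  have ΛK : 1 ≤ Λ ^ 5 * K ^ 3 := one_le_mul_of_one_le_of_one_le (one_le_pow₀ Λ1) (one_le_pow₀ hK)
  have M1 : 1 ≤ M := by rw [hM]; nlinarith
  have sN : 0 ≤ ∑ i, N ^ s i := Finset.sum_nonneg fun i _ => Real.rpow_nonneg N0 _
  have y := HY M N M1 N0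
  have hN2 : N ^ 2 ≤ 2 * C1 ^ 2 * (E + 1600 * K ^ 2 * Λ ^ 5) := by
    have e5 : (Λ ^ (5 / 2 : ℝ)) ^ 2 = Λ ^ 5 := by
      rw [← Real.rpow_natCast, ← Real.rpow_mul (by linarith)]; norm_num
    have := Real.sq_sqrt E0
    rw [hN, mul_pow, mul_comm 2 (C1 ^ 2), mul_assoc]
    refine mul_le_mul_of_nonneg_left ?_ (by positivity)
    have a2 := add_sq_le (a := √E) (b := Λ ^ (5 / 2 : ℝ) * (40 * K))
    rw [this, mul_pow, e5] at a2
    refine a2.trans (le_of_eq (by ring))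
  have b1 : Λ ^ 5 ≤ Λ ^ k' := pow_le_pow_right₀ Λ1 (by omega)
  have b2 : Λ ^ (5 * k) ≤ Λ ^ k' := pow_le_pow_right₀ Λ1 (by omega)
  have eM : M ^ k = ((C + 1) * K ^ 3) ^ k * Λ ^ (5 * k) := by
    rw [pow_mul, ← mul_pow, hM]; ring
  have t1 : C * (Λ ^ 5 * K ^ 3) * ∑ i, N ^ s i ≤ M * ∑ i, N ^ s i :=
    mul_le_mul_of_nonneg_right (by rw [hM]; nlinarith) sN
  have t2 : ε / (2 * C1 ^ 2) * N ^ 2 ≤ ε * E + 1600 * ε * K ^ 2 * Λ ^ 5 := by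
    have := mul_le_mul_of_nonneg_left hN2 (by positivity : 0 ≤ ε / (2 * C1 ^ 2))
    refine this.trans (le_of_eq ?_)
    have : C1 ≠ 0 := by positivity
    field_simp
  have t3 : 1600 * ε * K ^ 2 * Λ ^ 5 ≤ 1600 * ε * K ^ 2 * Λ ^ k' := by gcongr
  have t4 : C2 * M ^ k ≤ C2 * ((C + 1) * K ^ 3) ^ k * Λ ^ k' := by
    rw [eM, ← mul_assoc]; gcongr
  calc f ρ ≤ _ := main
    _ ≤ ε * E + B * Λ ^ k' := by rw [hB, add_mul]; linarith

/-! ### Consequences of finite dissipation -/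

theorem nb_univ_of_balls {g : E3 → ℝ} {t a : ℝ}
    (h : ∀ τ, NB g t (ball 0 τ) a) : ∫⁻ x, ‖g x‖ₑ ^ t ≤ ENNReal.ofReal a ^ t := by
  set ν := (volume : Measure E3).withDensity (fun x => ‖g x‖ₑ ^ t) with hν
  have e : ∫⁻ x, ‖g x‖ₑ ^ t = ν Set.univ := by
    rw [hν, withDensity_apply _ MeasurableSet.univ, Measure.restrict_univ]
  rw [e, ← iUnion_ball_nat (0:E3), Monotone.measure_iUnion
    (fun i j hij => ball_subset_ball (by exact_mod_cast hij))]
  refine iSup_le fun n => ?_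
  rw [hν, withDensity_apply _ measurableSet_ball]
  exact (h n).2

/-- A function with uniformly bounded `L^t` norms on balls has vanishing norm on far shells. -/
theorem nb_tail {g : E3 → ℝ} {t a ε : ℝ} (ht : 0 < t)
    (h : ∀ τ, NB g t (ball 0 τ) a) (hε : 0 < ε) : ∀ᶠ R in atTop, NB g t (Sh R (2 * R)) ε := by
  set ν := (volume : Measure E3).withDensity (fun x => ‖g x‖ₑ ^ t) with hν
  have e : ∫⁻ x, ‖g x‖ₑ ^ t = ν Set.univ := by
    rw [hν, withDensity_apply _ MeasurableSet.univ, Measure.restrict_univ]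
  have fin : ν Set.univ < ⊤ := by
    rw [← e]
    exact (nb_univ_of_balls h).trans_lt (ENNReal.rpow_lt_top_of_nonneg ht.le ENNReal.ofReal_ne_top)
  have T := tendsto_measure_iInter_atTop (μ := ν) (s := fun n : ℕ => (ball (0:E3) n)ᶜ)
    (fun n => measurableSet_ball.compl.nullMeasurableSet)
    (fun i j hij => Set.compl_subset_compl.2 (ball_subset_ball (by exact_mod_cast hij)))
    ⟨0, ((measure_mono (Set.subset_univ _)).trans_lt fin).ne⟩
  rw [← Set.compl_iUnion, iUnion_ball_nat, Set.compl_univ, measure_empty] at T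
  have ε1 : 0 < ENNReal.ofReal ε ^ t := ENNReal.rpow_pos (by simpa using hε) ENNReal.ofReal_ne_top
  obtain ⟨n, hn⟩ := (T.eventually (gt_mem_nhds ε1)).exists
  filter_upwards [eventually_ge_atTop (n:ℝ)] with R hR
  refine ⟨hε.le, ?_⟩
  rw [← withDensity_apply _ (measurableSet_Sh _ _)]
  refine (measure_mono ?_).trans hn.le
  intro x hx
  simp only [Set.mem_compl_iff, mem_ball_zero_iff, not_lt]
  exact hR.trans hx.1

theorem nb_const (d : ℝ) {t V : ℝ} {A : Set E3} (ht : 0 < t) (hV : 0 ≤ V)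
    (hvol : volume A ≤ ENNReal.ofReal V) : NB (fun _ => d) t A (|d| * V ^ (1 / t)) := by
  refine ⟨by positivity, ?_⟩
  rw [setLIntegral_const, ENNReal.ofReal_mul (abs_nonneg _), ENNReal.mul_rpow_of_nonneg _ _ ht.le,
    ← Real.norm_eq_abs, ofReal_norm, ← ENNReal.ofReal_rpow_of_nonneg hV (by positivity),
    ← ENNReal.rpow_mul, one_div_mul_cancel ht.ne', ENNReal.rpow_one]
  gcongr

theorem abs_le_of_nb_const {d t a : ℝ} (ht : 0 < t) (h : NB (fun _ => d) t (ball (0:E3) 1) a) :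
    |d| ≤ a := by
  have h2 := h.2
  rw [setLIntegral_const] at h2
  have hv : (1:ℝ≥0∞) ≤ volume (ball (0:E3) 1) := by
    rw [EuclideanSpace.volume_ball_fin_three, ENNReal.ofReal_one, one_pow, one_mul,
      ← ENNReal.ofReal_one]
    exact ENNReal.ofReal_le_ofReal (by linarith [Real.pi_gt_three])
  have h3 : ‖d‖ₑ ^ t ≤ ENNReal.ofReal a ^ t :=
    (le_mul_of_one_le_right' hv).trans h2
  rw [ENNReal.rpow_le_rpow_iff ht, ← ofReal_norm, Real.norm_eq_abs,
    ENNReal.ofReal_le_ofReal_iff h.1] at h3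
  exact h3

theorem ann_eq (R : ℝ) : Ann R = Sh R (2 * R) := by
  ext x
  simp only [Ann, Sh, Set.mem_sdiff, mem_ball_zero_iff, not_lt, Set.mem_ofPred_eq]
  exact and_comm

/-- Subtracting the mean over the shell at most doubles the `L⁶` norm of `θ - c`. -/
theorem thetaBar_sub {θ : E3 → ℝ} (cθ : Continuous θ) {R c N : ℝ} (hR : 0 < R)
    (h : NB (fun y => θ y - c) 6 (Sh R (2 * R)) N) :
    NB (fun y => θ y - thetaBar θ R) 6 (Sh R (2 * R)) (2 * N) := by
  set A := Sh R (2 * R) with hA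
  have hsub : A ⊆ ball 0 (2 * R) := fun x hx => by rw [mem_ball_zero_iff]; exact hx.2
  have hfin : volume A ≠ ⊤ := ((measure_mono hsub).trans_lt measure_ball_lt_top).ne
  have hpos : volume A ≠ 0 := by
    have ho : IsOpen {x : E3 | R < ‖x‖ ∧ ‖x‖ < 2 * R} :=
      (isOpen_lt continuous_const continuous_norm).inter (isOpen_lt continuous_norm continuous_const)
    have hne : ({x : E3 | R < ‖x‖ ∧ ‖x‖ < 2 * R}).Nonempty :=
      ⟨EuclideanSpace.single 0 (1.5 * R), by
        rw [Set.mem_ofPred_eq, PiLp.norm_single, Real.norm_eq_abs, abs_of_pos (by linarith)]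
        constructor <;> linarith⟩
    have := ho.measure_pos volume hne
    have hs : {x : E3 | R < ‖x‖ ∧ ‖x‖ < 2 * R} ⊆ A := fun x hx => ⟨hx.1.le, hx.2⟩
    exact (this.trans_le (measure_mono hs)).ne'
  set V := (volume A).toReal with hV
  have V0 : 0 < V := ENNReal.toReal_pos hpos hfin
  have hvol : volume A ≤ ENNReal.ofReal V := by rw [hV, ENNReal.ofReal_toReal hfin]
  have cθc : Continuous fun y => θ y - c := cθ.sub continuous_const
  have iθ : IntegrableOn θ A :=
    (cθ.continuousOn.integrableOn_compact (isCompact_closedBall (0:E3) (2 * R))).mono_set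
      (hsub.trans ball_subset_closedBall)
  have l1 := h.lower cθc V0.le hvol one_pos (by norm_num)
  have l2 : |∫ x in A, (θ x - c)| ≤ V ^ (1 / 1 - 1 / 6 : ℝ) * N := by
    have h2 := (enorm_integral_le_lintegral_enorm (μ := volume.restrict A) fun x => θ x - c).trans
      l1.lintegral_le
    rw [← ofReal_norm] at h2
    exact (ENNReal.ofReal_le_ofReal_iff l1.1).1 h2
  have e1 : ∫ x in A, (θ x - c) = V * (thetaBar θ R - c) := by
    rw [integral_sub iθ (integrableOn_const hfin), setIntegral_const, thetaBar, ann_eq, setAverage_eq]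
    simp only [smul_eq_mul, Measure.real]
    rw [← hA, ← hV, mul_sub, ← mul_assoc, mul_inv_cancel₀ V0.ne', one_mul]
  rw [e1, abs_mul, abs_of_pos V0] at l2
  have key : |c - thetaBar θ R| * V ^ (1 / 6 : ℝ) ≤ N := by
    have e2 : V = V ^ (1 / 1 - 1 / 6 : ℝ) * V ^ (1 / 6 : ℝ) := by
      rw [← Real.rpow_add V0]; norm_num
    nth_rewrite 1 [e2] at l2
    rw [mul_assoc] at l2
    have := le_of_mul_le_mul_left l2 (by positivity)
    rw [abs_sub_comm]; linarith
  have hc := (nb_const (c - thetaBar θ R) (t := 6) (by norm_num) V0.le hvol).const_mono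
    (by norm_num) key
  have := h.add hc cθc continuous_const (by norm_num)
  convert this using 1
  · funext y; ring
  · ring

theorem const_of_pd3_zero {f : E3 → ℝ} (hf : Sm f) (h : ∀ j x, pd3 j f x = 0) (x y : E3) :
    f x = f y := by
  refine is_const_of_fderiv_eq_zero (𝕜 := ℝ) hf.differentiable (fun z => ?_) x y
  ext w
  rw [fderiv_eq_sum]; simp [h]

theorem nb_of_LpS_norm {w : E3 → E3} {t a : ℝ} {A : Set E3} (ht : 0 < t) (ha : 0 ≤ a)
    (h : LpS w t A ≤ ENNReal.ofReal a) (i : Fin 3) : NB (fun y => w y i) t A a := by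
  refine NB.of_LpS ht ha (le_trans ?_ h)
  refine eLpNorm_mono fun x => ?_
  rw [Real.norm_eq_abs]; exact abs_coord_le (w x) i

theorem le_of_scaled {R α K : ℝ} {L : ℝ≥0∞} (hR : 0 < R)
    (h : ENNReal.ofReal (R ^ (-α)) * L ≤ ENNReal.ofReal K) : L ≤ ENNReal.ofReal (K * R ^ α) := by
  have h1 : ENNReal.ofReal (R ^ α) * ENNReal.ofReal (R ^ (-α)) = 1 := by
    rw [← ENNReal.ofReal_mul (by positivity), ← Real.rpow_add hR]; simp
  have := mul_le_mul_right h (ENNReal.ofReal (R ^ α))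
  rw [← mul_assoc, h1, one_mul, ← ENNReal.ofReal_mul (by positivity), mul_comm] at this
  exact this

/-- A finite lower limit supplies arbitrarily large scales with uniform bounds. -/
theorem good_scales {u v : E3 → E3} {θ : E3 → ℝ} {p q r α β γ : ℝ} (hp : 0 < p) (hq : 0 < q)
    (hr : 0 < r)
    (h : Filter.liminf (fun R => Xn u α p R + Yn v β q R + Zbarn θ γ r R) atTop < ⊤) :
    ∃ K : ℝ, 1 ≤ K ∧ ∃ᶠ R in atTop, 1 ≤ R ∧ ShellBd p q r α β γ (fun i y => u y i)
      (fun i y => v y i) (fun y => θ y - thetaBar θ R) R K := by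
  obtain ⟨b, hb, hbt⟩ := exists_between h
  refine ⟨b.toReal + 1, by linarith [ENNReal.toReal_nonneg (a := b)], ?_⟩
  have K0 : 0 ≤ b.toReal + 1 := by positivity
  have hbK : b ≤ ENNReal.ofReal (b.toReal + 1) := by
    rw [← ENNReal.ofReal_toReal hbt.ne]
    exact ENNReal.ofReal_le_ofReal (by rw [ENNReal.ofReal_toReal hbt.ne]; linarith)
  refine ((frequently_lt_of_liminf_lt (by isBoundedDefault) hb).and_eventually
    (eventually_ge_atTop 1)).mono ?_
  rintro R ⟨hR, R1⟩
  have R0 : 0 < R := by linarith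
  have hs := hR.le.trans hbK
  have nn : ∀ e : ℝ, 0 ≤ (b.toReal + 1) * R ^ e := fun e => by positivity
  refine ⟨R1, fun i => ?_, fun i => ?_, ?_⟩
  · rw [← ann_eq]
    exact nb_of_LpS_norm hp (nn α)
      (le_of_scaled R0 ((le_self_add.trans le_self_add).trans hs)) i
  · rw [← ann_eq]
    exact nb_of_LpS_norm hq (nn β)
      (le_of_scaled R0 ((le_add_self.trans le_self_add).trans hs)) i
  · rw [← ann_eq]
    exact NB.of_LpS hr (nn γ) (le_of_scaled R0 (le_add_self.trans hs))

/-! ### The Liouville argument -/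

/-- An `L⁶` bound on a ball from gradients in `L²` and an `L¹` bound on an outer shell only. -/
theorem sob_ball : ∃ C > 0, ∀ (g : E3 → ℝ) (R G a : ℝ), Sm g → 0 < R →
    (∀ j, NB (pd3 j g) 2 (ball 0 (1.9 * R)) G) → NB g 1 (Sh R (2 * R)) a →
    NB g 6 (ball 0 (1.5 * R)) (C * (G + R⁻¹ ^ (5 / 2 : ℝ) * a)) := by
  obtain ⟨C, hC, HS⟩ := sobolev_loc
  obtain ⟨Ce, hCe, HE⟩ := exists_eta_bound
  refine ⟨C * (1 + (10 * Ce) ^ (5 / 2 : ℝ)), by positivity, ?_⟩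
  intro g R G a sg R0 hG ha
  have s1 : (0:ℝ) ≤ 1.5 * R := by linarith
  have s2 : 1.5 * R < 1.6 * R := by linarith
  have S := HS g (eta (1.5 * R) (1.6 * R)) (ball 0 (1.9 * R)) (Sh R (2 * R)) (10 * Ce * R⁻¹) G a sg
    (eta_smooth _ _) (eta_supp s1 s2) (eta_nonneg _ _) (eta_le_one _ _) (by positivity)
    (fun j x => (HE _ _ s1 s2 j x).trans (le_of_eq (by field_simp; norm_num)))
    measurableSet_ball (measurableSet_Sh _ _) ?_ ?_ hG ha
  · refine S.mono (by norm_num) (Set.subset_univ _) ?_ measurableSet_ball ?_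
    · intro x hx
      rw [mem_ball_zero_iff] at hx
      rw [eta_one s1 s2 hx.le]; simp
    · have G0 := (hG 0).1
      have a0 := ha.1
      rw [Real.mul_rpow (by positivity) (by positivity), mul_assoc C, mul_assoc]
      refine mul_le_mul_of_nonneg_left ?_ hC.le
      have z1 : 0 ≤ (10 * Ce) ^ (5 / 2 : ℝ) := by positivity
      have z2 : 0 ≤ R⁻¹ ^ (5 / 2 : ℝ) * a := by positivity
      nlinarith [mul_nonneg z1 G0]
  · intro x hx
    rw [mem_ball_zero_iff]
    by_contra hc
    exact hx (eta_zero s1 s2 (by linarith))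
  · intro j x hx
    refine ⟨?_, ?_⟩
    · by_contra hc
      exact hx (pd3_eta_zero s1 s2 j (Or.inl (by linarith)))
    · by_contra hc
      exact hx (pd3_eta_zero s1 s2 j (Or.inr (by linarith)))

theorem Ds_sub_const (U V : Fin 3 → E3 → ℝ) (θ : E3 → ℝ) (c : ℝ) :
    Ds U V (fun y => θ y - c) = Ds U V θ := by
  funext x; unfold Ds; simp only [pd3_sub_const]

/-- If the functions `θ - c R` are bounded in `L⁶(B_{1.5R})` along arbitrarily large `R`, then
`θ - c` is bounded in `L⁶` on all balls for a limit point `c` of the constants. -/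
theorem exists_limit_const {θ : E3 → ℝ} (cθ : Continuous θ) {c : ℝ → ℝ} {M : ℝ}
    (h : ∃ᶠ R in atTop, 1 ≤ R ∧ NB (fun y => θ y - c R) 6 (ball 0 (1.5 * R)) M) :
    ∃ c₀, ∀ τ, NB (fun y => θ y - c₀) 6 (ball 0 τ) (M + 1) := by
  have h' : ∀ n : ℕ, ∃ R, (n:ℝ) ≤ R ∧ 1 ≤ R ∧ NB (fun y => θ y - c R) 6 (ball 0 (1.5 * R)) M :=
    fun n => by
      obtain ⟨R, h1, h2⟩ := (h.and_eventually (eventually_ge_atTop (n:ℝ))).exists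
      exact ⟨R, h2, h1⟩
  choose R hn h1 hR using h'
  have cc : ∀ d : ℝ, Continuous fun y => θ y - d := fun d => cθ.sub continuous_const
  have cont : ∀ n, NB (fun y => θ y - c (R n)) 6 (ball 0 1) M := fun n =>
    (hR n).set_mono (ball_subset_ball (by linarith [h1 n]))
  have bd : ∀ n, c (R n) ∈ closedBall (c (R 0)) (M + M) := by
    intro n
    rw [mem_closedBall, Real.dist_eq, abs_sub_comm]
    have hneg : NB (fun y => -(θ y - c (R 0))) 6 (ball 0 1) M :=
      (cont 0).mono (by norm_num) le_rfl (fun x _ => (abs_neg _).le) measurableSet_ball le_rfl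
    refine abs_le_of_nb_const (t := 6) (by norm_num) ?_
    have := (cont n).add hneg (cc _) (cc _).neg (by norm_num)
    convert this using 2
    ring
  obtain ⟨c₀, -, φ, hφ, hc⟩ := tendsto_subseq_of_bounded isBounded_closedBall bd
  refine ⟨c₀, fun τ => ?_⟩
  set V := 5 * (max τ 0) ^ 3 with hV
  have V0 : 0 ≤ V := by positivity
  have hvol : volume (ball (0:E3) τ) ≤ ENNReal.ofReal V :=
    (measure_mono (ball_subset_ball (le_max_left τ 0))).trans (vol_ball_le (le_max_right _ _))
  have lim : Tendsto (fun n => |c (R (φ n)) - c₀| * V ^ (1 / 6 : ℝ)) atTop (nhds 0) := by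
    have := ((hc.sub_const c₀).abs.mul_const (V ^ (1 / 6 : ℝ)))
    simpa using this
  obtain ⟨n, hn1, hn2⟩ := ((lim.eventually (gt_mem_nhds one_pos)).and
    (eventually_ge_atTop ⌈τ⌉₊)).exists
  have hτ : τ ≤ 1.5 * R (φ n) := by
    have e1 : τ ≤ (φ n : ℝ) := (Nat.le_ceil τ).trans (by exact_mod_cast hn2.trans (hφ.id_le n))
    have := hn (φ n)
    have := h1 (φ n)
    linarith
  have k1 := (hR (φ n)).set_mono (ball_subset_ball (x := (0:E3)) hτ)
  have k2 := (nb_const (c (R (φ n)) - c₀) (t := 6) (by norm_num) V0 hvol).const_mono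
    (by norm_num) hn1.le
  have := k1.add k2 (cc _) continuous_const (by norm_num)
  convert this using 2
  ring

theorem eq_zero_of_const {g : E3 → ℝ} {a : ℝ} (h : ∀ τ, NB g 6 (ball 0 τ) a)
    (hc : ∀ x y, g x = g y) (x : E3) : g x = 0 := by
  have h1 := nb_univ_of_balls h
  have : g = fun _ => g x := funext fun y => hc y x
  rw [this, lintegral_const] at h1
  by_contra hne
  have e : ‖g x‖ₑ ^ (6:ℝ) ≠ 0 := by
    rw [Ne, ENNReal.rpow_eq_zero_iff]
    simp [hne]
  have v : volume (Set.univ : Set E3) = ⊤ := measure_univ_of_isAddLeftInvariant _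
  rw [v, ENNReal.mul_top e, top_le_iff] at h1
  exact ENNReal.rpow_ne_top_of_nonneg (by norm_num) ENNReal.ofReal_ne_top h1

set_option maxHeartbeats 800000 in
/-- The Liouville argument: bounds at arbitrarily large scales and the local energy estimate force
the dissipation to be finite, then the fields to lie in `L⁶` (the temperature up to a constant),
and then the dissipation to vanish. -/
theorem liouville_core {U V : Fin 3 → E3 → ℝ} {P θ : E3 → ℝ} {p q r α β γ : ℝ} {s : Fin 6 → ℝ}
    (hS : ∀ c, CSol U V P (fun y => θ y - c)) (sθ : Sm θ) (hp : 1 ≤ p) (hq : 1 ≤ q) (hr : 1 ≤ r)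
    (heu : 0 ≤ 3 / p - 1 / 2 - α) (hev : 0 ≤ 3 / q - 1 / 2 - β) (het : 0 ≤ 3 / r - 1 / 2 - γ)
    (s0 : ∀ i, 0 < s i) (s2 : ∀ i, s i < 2) {C : ℝ} (hC : 0 < C) (H : EnergyEst p q r α β γ s C)
    {K : ℝ} (hK : 1 ≤ K) (good : ∃ᶠ R in atTop, 1 ≤ R ∧
      ShellBd p q r α β γ U V (fun y => θ y - thetaBar θ R) R K) :
    (∀ i x, U i x = 0) ∧ (∀ i x, V i x = 0) ∧ ∀ x y, θ x = θ y := by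
  obtain ⟨B, hB, HB⟩ := energy_bound hp hq hr heu hev het s0 s2 hC H hK
  obtain ⟨Cs, hCs, HS⟩ := sob_ball
  have cD : Continuous (Ds U V θ) := by
    have := Ds_continuous (hS 0); rwa [Ds_sub_const] at this
  have D0 := Ds_nonneg U V θ
  have iD : ∀ ρ, IntegrableOn (Ds U V θ) (ball 0 ρ) := fun ρ =>
    (cD.continuousOn.integrableOn_compact (isCompact_closedBall (0:E3) ρ)).mono_set
      ball_subset_closedBall
  have mono : ∀ {ρ τ : ℝ}, ρ ≤ τ → ∫ x in ball 0 ρ, Ds U V θ x ≤ ∫ x in ball 0 τ, Ds U V θ x :=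
    fun h => setIntegral_mono_set (iD _) (Eventually.of_forall D0) (ball_subset_ball h).eventuallyLE
  have bnd : ∀ τ, ∫ x in ball 0 τ, Ds U V θ x ≤ B := by
    intro τ
    obtain ⟨R, ⟨R1, hb⟩, hτ⟩ := (good.and_eventually (eventually_ge_atTop τ)).exists
    have := HB U V P _ R (hS _) R1 hb
    rw [Ds_sub_const] at this
    exact (mono (by linarith)).trans this
  have grad : ∀ {g : E3 → ℝ}, (∀ x, g x ^ 2 ≤ Ds U V θ x) → ∀ τ, NB g 2 (ball 0 τ) (√B) :=
    fun hg τ => (nb_grad cD hg τ).const_mono (by norm_num) (Real.sqrt_le_sqrt (bnd τ))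
  set M := Cs * (√B + 40 * K) with hM
  have six : ∀ {g : E3 → ℝ} {q β R : ℝ}, Sm g → 1 ≤ q → 0 ≤ 3 / q - 1 / 2 - β → 1 ≤ R →
      NB g q (Sh R (2 * R)) (K * R ^ β) → (∀ j x, pd3 j g x ^ 2 ≤ Ds U V θ x) →
      NB g 6 (ball 0 (1.5 * R)) M := by
    intro g q β R sg hq he hR hg hD
    have R0 : 0 < R := by linarith
    have := HS g R _ _ sg R0 (fun j => grad (hD j) _) (nb_one hq he hK hR sg.continuous hg)
    have e : R⁻¹ ^ (5 / 2 : ℝ) * (40 * K * R ^ (5 / 2 : ℝ)) = 40 * K := by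
      rw [mul_left_comm, ← Real.mul_rpow (by positivity) R0.le, inv_mul_cancel₀ R0.ne',
        Real.one_rpow, mul_one]
    rwa [e] at this
  have all : ∀ {g : E3 → ℝ}, (∃ᶠ R in atTop, NB g 6 (ball 0 (1.5 * R)) M) →
      ∀ τ, NB g 6 (ball 0 τ) M := by
    intro g h τ
    obtain ⟨R, hR, hτ⟩ := (h.and_eventually (eventually_ge_atTop (max τ 0))).exists
    exact hR.set_mono (ball_subset_ball (by linarith [le_max_left τ 0, le_max_right τ 0]))
  have U6 : ∀ i τ, NB (U i) 6 (ball 0 τ) M := fun i => all <| good.mono fun R h =>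
    six ((hS 0).sU i) hp heu h.1 (h.2.hU i) (sq_le_Ds_U U V θ i)
  have V6 : ∀ i τ, NB (V i) 6 (ball 0 τ) M := fun i => all <| good.mono fun R h =>
    six ((hS 0).sV i) hq hev h.1 (h.2.hV i) (sq_le_Ds_V U V θ i)
  obtain ⟨c, hc⟩ := exists_limit_const (M := M) (c := thetaBar θ) sθ.continuous
    (good.mono fun R h => ⟨h.1, six (hS _).sΘ hr het h.1 h.2.hΘ
      (fun j x => by rw [pd3_sub_const]; exact sq_le_Ds_Θ U V θ j x)⟩)
  -- all norms on the shells tend to zero, hence so does the right side of the energy estimate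
  have small : ∀ ε > 0, ∀ τ, ∫ x in ball 0 τ, Ds U V θ x ≤ C * (80 ^ 5 * K ^ 3) * ∑ i, ε ^ s i := by
    intro ε ε0 τ
    have t1 : ∀ᶠ R in atTop, ∀ i j, NB (pd3 j (U i)) 2 (Sh R (2 * R)) ε :=
      eventually_all.2 fun i => eventually_all.2 fun j =>
        nb_tail (by norm_num) (grad (sq_le_Ds_U U V θ i j)) ε0
    have t2 : ∀ᶠ R in atTop, ∀ i j, NB (pd3 j (V i)) 2 (Sh R (2 * R)) ε :=
      eventually_all.2 fun i => eventually_all.2 fun j =>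
        nb_tail (by norm_num) (grad (sq_le_Ds_V U V θ i j)) ε0
    have t3 : ∀ᶠ R in atTop, ∀ j, NB (pd3 j θ) 2 (Sh R (2 * R)) ε :=
      eventually_all.2 fun j => nb_tail (by norm_num) (grad (sq_le_Ds_Θ U V θ j)) ε0
    have t4 : ∀ᶠ R in atTop, ∀ i, NB (U i) 6 (Sh R (2 * R)) ε :=
      eventually_all.2 fun i => nb_tail (by norm_num) (U6 i) ε0
    have t5 : ∀ᶠ R in atTop, ∀ i, NB (V i) 6 (Sh R (2 * R)) ε :=
      eventually_all.2 fun i => nb_tail (by norm_num) (V6 i) ε0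
    have t6 : ∀ᶠ R in atTop, NB (fun y => θ y - c) 6 (Sh R (2 * R)) (ε / 2) :=
      nb_tail (by norm_num) hc (by positivity)
    obtain ⟨R, ⟨R1, hb⟩, h1, h2, h3, h4, h5, h6, hτ⟩ := (good.and_eventually
      (t1.and (t2.and (t3.and (t4.and (t5.and (t6.and (eventually_ge_atTop τ)))))))).exists
    have R0 : 0 < R := by linarith
    have hsub : Sh (1.05 * R) (1.9 * R + 6 * (R / 80)) ⊆ Sh R (2 * R) := fun x hx =>
      ⟨by linarith [hx.1], by linarith [hx.2]⟩
    have h7 := thetaBar_sub sθ.continuous R0 h6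
    rw [mul_div_cancel₀ ε two_ne_zero] at h7
    have := H U V P _ R (1.9 * R) (R / 80) ε K (hS (thetaBar θ R)) R1 (by positivity) le_rfl le_rfl
      (by linarith) hK (fun i j => (h1 i j).set_mono hsub) (fun i j => (h2 i j).set_mono hsub)
      (fun j => by rw [pd3_sub_const]; exact (h3 j).set_mono hsub)
      (fun i => (h4 i).set_mono hsub) (fun i => (h5 i).set_mono hsub) (h7.set_mono hsub) hb
    rw [Ds_sub_const, div_div_cancel₀ R0.ne'] at this
    exact (mono (by linarith)).trans this
  have lim : Tendsto (fun ε : ℝ => C * (80 ^ 5 * K ^ 3) * ∑ i, ε ^ s i) (nhdsWithin 0 (Set.Ioi 0))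
      (nhds 0) := by
    have h1 : Tendsto (fun ε : ℝ => C * (80 ^ 5 * K ^ 3) * ∑ i, ε ^ s i) (nhds 0)
        (nhds (C * (80 ^ 5 * K ^ 3) * ∑ i, (0:ℝ) ^ s i)) :=
      (tendsto_finsetSum _ fun i _ =>
        (Real.continuousAt_rpow_const 0 (s i) (Or.inr (s0 i).le)).tendsto).const_mul _
    have h2 : ∑ i, (0:ℝ) ^ s i = 0 :=
      Finset.sum_eq_zero fun i _ => Real.zero_rpow (s0 i).ne'
    rw [h2, mul_zero] at h1
    exact h1.mono_left nhdsWithin_le_nhds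
  have zero : ∀ x, Ds U V θ x = 0 := by
    intro x
    set τ := ‖x‖ + 1 with hτ
    have z1 : ∫ x in ball 0 τ, Ds U V θ x = 0 :=
      le_antisymm (ge_of_tendsto lim (eventually_mem_nhdsWithin.mono fun ε hε => small ε hε τ))
        (integral_nonneg D0)
    rw [setIntegral_eq_zero_iff_of_nonneg_ae (Eventually.of_forall D0) (iD τ)] at z1
    exact Measure.eqOn_open_of_ae_eq z1 isOpen_ball cD.continuousOn continuousOn_const
      (by rw [mem_ball_zero_iff, hτ]; linarith)
  have dz : ∀ {d : ℝ} {x : E3}, d ^ 2 ≤ Ds U V θ x → d = 0 := by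
    intro d x h
    rw [zero x] at h
    exact pow_eq_zero_iff two_ne_zero |>.1 (le_antisymm h (sq_nonneg d))
  refine ⟨fun i => eq_zero_of_const (U6 i) (const_of_pd3_zero ((hS 0).sU i) fun j x =>
    dz (sq_le_Ds_U U V θ i j x)), fun i => eq_zero_of_const (V6 i) (const_of_pd3_zero ((hS 0).sV i)
    fun j x => dz (sq_le_Ds_V U V θ i j x)), const_of_pd3_zero sθ fun j x =>
    dz (sq_le_Ds_Θ U V θ j x)⟩

theorem liouville_tcm_thm2
    (u : E3 → E3) (pr : E3 → ℝ) (v : E3 → E3) (θ : E3 → ℝ)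
    (hsol : IsTCMSolution u pr v θ)
    (p q r α β γ : ℝ)
    (hp : 3 / 2 < p ∧ p < 3) (hq : 1 ≤ q ∧ q ≤ 6) (hr : 1 ≤ r ∧ r ≤ 6)
    (hα : 0 ≤ α ∧ α ≤ 2 / p - 1 / 3) (hβ : 0 ≤ β ∧ β ≤ 3 / q - 1 / 2)
    (hγ : 0 ≤ γ ∧ γ ≤ 3 / r - 1 / 2)
    (hliminf : Filter.liminf (fun R => Xn u α p R + Yn v β q R + Zbarn θ γ r R) atTop < ⊤)
    (hA : ((1 ≤ q ∧ q < 2) ∧ (1 ≤ r ∧ r < 2) ∧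
      α + ((4 * p - 6) * q) / ((6 - q) * p) * β ≤ 1 ∧
      α + ((4 * p - 6) * r) / ((6 - r) * p) * γ ≤ 1 ∧
      2 * q / (6 - q) * β + 2 * r / (6 - r) * γ ≤ 1) ∨
      ((1 ≤ q ∧ q < 2) ∧ (2 ≤ r ∧ r < 2 * (p / (p - 1))) ∧
      α + ((4 * p - 6) * q) / ((6 - q) * p) * β ≤ 1 ∧
      α + ((4 * p - 6) * r) / ((6 - r) * p) * γ ≤ 1 ∧
      2 * q / (6 - q) * β + γ ≤ (6 - r) / (2 * r)) ∨
      ((1 ≤ q ∧ q < 2) ∧ (2 * (p / (p - 1)) ≤ r ∧ r ≤ 6) ∧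
      α + ((4 * p - 6) * q) / ((6 - q) * p) * β ≤ 1 ∧
      α + 2 * γ < 3 / p + 6 / r - 2 ∧
      2 * q / (6 - q) * β + γ ≤ (6 - r) / (2 * r)) ∨
      ((2 ≤ q ∧ q < 2 * (p / (p - 1))) ∧ (1 ≤ r ∧ r < 2) ∧
      α + ((4 * p - 6) * q) / ((6 - q) * p) * β ≤ 1 ∧
      α + ((4 * p - 6) * r) / ((6 - r) * p) * γ ≤ 1 ∧
      β + 2 * r / (6 - r) * γ ≤ (6 - q) / (2 * q)) ∨
      ((2 ≤ q ∧ q < 2 * (p / (p - 1))) ∧ (2 ≤ r ∧ r < 2 * (p / (p - 1))) ∧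
      α + ((4 * p - 6) * q) / ((6 - q) * p) * β ≤ 1 ∧
      α + ((4 * p - 6) * r) / ((6 - r) * p) * γ ≤ 1 ∧
      β + γ < 3 / q + 3 / r - 2) ∨
      ((2 ≤ q ∧ q < 2 * (p / (p - 1))) ∧ (2 * (p / (p - 1)) ≤ r ∧ r ≤ 6) ∧
      α + ((4 * p - 6) * q) / ((6 - q) * p) * β ≤ 1 ∧
      α + 2 * γ < 3 / p + 6 / r - 2 ∧
      β + γ < 3 / q + 3 / r - 2) ∨
      ((2 * (p / (p - 1)) ≤ q ∧ q ≤ 6) ∧ (1 ≤ r ∧ r < 2) ∧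
      α + 2 * β < 3 / p + 6 / q - 2 ∧
      α + ((4 * p - 6) * r) / ((6 - r) * p) * γ ≤ 1 ∧
      β + 2 * r / (6 - r) * γ ≤ (6 - q) / (2 * q)) ∨
      ((2 * (p / (p - 1)) ≤ q ∧ q ≤ 6) ∧ (2 ≤ r ∧ r < 2 * (p / (p - 1))) ∧
      α + 2 * β < 3 / p + 6 / q - 2 ∧
      α + ((4 * p - 6) * r) / ((6 - r) * p) * γ ≤ 1 ∧
      β + γ < 3 / q + 3 / r - 2)) :
    (∀ x : E3, u x = 0) ∧ (∀ x : E3, v x = 0) ∧ ∃ c : ℝ, ∀ x : E3, θ x = c := by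
  have hp0 : 0 < p := by linarith [hp.1]
  have heu : 0 ≤ 3 / p - 1 / 2 - α := by
    have : 1 / 3 < 1 / p := one_div_lt_one_div_of_lt hp0 hp.2
    have e1 : 3 / p = 3 * (1 / p) := by ring
    have e2 : 2 / p = 2 * (1 / p) := by ring
    rw [e1]; have := hα.2; rw [e2] at this; linarith
  obtain ⟨b1, μ1, b2, μ2, b3, μ3, m, n, x1, x2, x3, hmn⟩ := exponents hp hq hr hα hβ hγ hA
  have hev : 0 ≤ 3 / q - 1 / 2 - β := by linarith [hβ.2]
  have het : 0 ≤ 3 / r - 1 / 2 - γ := by linarith [hγ.2]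
  obtain ⟨s, s0, s2, C, hC, H⟩ := exists_energyEst hp.1 hp.2 hq.1 hr.1 heu hev het x1 x2 x3 hmn
  obtain ⟨K, hK, good⟩ := good_scales hp0 (by linarith [hq.1]) (by linarith [hr.1]) hliminf
  obtain ⟨hU, hV, hθ⟩ := liouville_core (fun c => CSol.of_sol hsol c) hsol.smooth_θ
    (by linarith [hp.1]) hq.1 hr.1 heu hev het s0 s2 hC H hK good
  refine ⟨fun x => ?_, fun x => ?_, θ 0, fun x => hθ x 0⟩
  · ext i; exact hU i x
  · ext i; exact hV i x
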